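/- For every positive integer n with n ≡ 0, 2, or 4 (mod 5) and n ∉ {10, 15, 30}, one has N̄(1,5,n) > N̄(2,5,n). -/

import Mathlib

/-- An overpartition of `n`: a partition of `n` together with a chosen subset of its
distinct part sizes (the overlined parts). -/
def Overpartition (n : ℕ) : Type :=
  {P : n.Partition × Finset ℕ // P.2 ⊆ P.1.parts.toFinset}

/-- The Dyson rank of an overpartition: largest part minus number of parts. -/
def Overpartition.rank {n : ℕ} (P : Overpartition n) : ℤ :=
  (P.1.1.parts.sup : ℤ) - (P.1.1.parts.card : ℤ)

/-- `nbarRank m n` is the number of overpartitions of `n` with rank `m`. -/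
noncomputable def nbarRank (m : ℤ) (n : ℕ) : ℕ :=
  Nat.card {P : Overpartition n // P.rank = m}

/-- `nbar a c n` is the number of overpartitions of `n` with rank congruent to `a` mod `c`. -/
noncomputable def nbar (a : ℤ) (c : ℕ) (n : ℕ) : ℕ :=
  Nat.card {P : Overpartition n // P.rank ≡ a [ZMOD (c : ℤ)]}

/-- `pbar n` is the number of overpartitions of `n`. -/
noncomputable def pbar (n : ℕ) : ℕ := Nat.card (Overpartition n)

section PartC1
namespace OP

def fwd (c : ℤ) (s : Multiset ℕ) : Multiset ℕ :=
  (((s.card : ℤ) + c).toNat ::ₘ s.map Nat.pred).filter (fun x => x ≠ 0)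

def bwd (c : ℤ) (s : Multiset ℕ) : Multiset ℕ :=
  (s.erase s.sup).map Nat.succ + Multiset.replicate (((s.sup : ℤ) - c).toNat - (s.erase s.sup).card) 1

lemma sup_mem {s : Multiset ℕ} (h : s ≠ 0) : s.sup ∈ s := by
  induction s using Multiset.induction_on with
  | empty => exact absurd rfl h
  | cons a s ih =>
    rw [Multiset.sup_cons]
    by_cases hs : s = 0
    · subst hs; simp
    · rcases le_total a s.sup with h1 | h1
      · rw [sup_eq_right.2 h1]; exact Multiset.mem_cons_of_mem (ih hs)
      · rw [sup_eq_left.2 h1]; exact Multiset.mem_cons_self _ _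

/-- decremented parts -/
def dec (s : Multiset ℕ) : Multiset ℕ := (s.map Nat.pred).filter (fun x => x ≠ 0)

lemma mem_dec {s : Multiset ℕ} {x : ℕ} : x ∈ dec s ↔ x ≠ 0 ∧ x + 1 ∈ s := by
  unfold dec
  rw [Multiset.mem_filter, Multiset.mem_map]
  constructor
  · rintro ⟨⟨a, ha, rfl⟩, h⟩
    refine ⟨h, ?_⟩
    have : a.pred + 1 = a := by simp only [Nat.pred_eq_sub_one] at *; omega
    rwa [this]
  · rintro ⟨h, h2⟩
    exact ⟨⟨x + 1, h2, rfl⟩, h⟩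

lemma dec_succ {s : Multiset ℕ} : (dec s).map Nat.succ = s.filter (fun x => 2 ≤ x) := by
  unfold dec
  rw [Multiset.filter_map, Multiset.map_map]
  have h1 : s.filter ((fun x => x ≠ 0) ∘ Nat.pred) = s.filter (fun x => 2 ≤ x) := by
    apply Multiset.filter_congr
    intro x _
    simp only [Function.comp, Nat.pred_eq_sub_one]; omega
  rw [h1]
  conv_rhs => rw [← Multiset.map_id (s.filter (fun x => 2 ≤ x))]
  apply Multiset.map_congr rfl
  intro x hx
  have := (Multiset.mem_filter.1 hx).2
  simp only [Function.comp, Nat.pred_eq_sub_one, id]; omega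

lemma card_dec {s : Multiset ℕ} : (dec s).card = (s.filter (fun x => 2 ≤ x)).card := by
  rw [← dec_succ, Multiset.card_map]

lemma split_ones {s : Multiset ℕ} (hs : ∀ x ∈ s, 0 < x) :
    s = s.filter (fun x => 2 ≤ x) + Multiset.replicate (s.card - (s.filter (fun x => 2 ≤ x)).card) 1 := by
  have h1 := Multiset.filter_add_not (fun x => 2 ≤ x) s
  have h2 : s.filter (fun x => ¬ 2 ≤ x) = Multiset.replicate (s.filter (fun x => ¬ 2 ≤ x)).card 1 := by
    apply Multiset.eq_replicate_card.2
    intro x hx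
    obtain ⟨ha, hb⟩ := Multiset.mem_filter.1 hx
    have := hs x ha; omega
  have h3 := congrArg Multiset.card h1
  rw [Multiset.card_add] at h3
  have h4 : s.card - (s.filter (fun x => 2 ≤ x)).card = (s.filter (fun x => ¬ 2 ≤ x)).card := by omega
  rw [h4, ← h2, h1]

section
variable {c : ℤ} {s : Multiset ℕ}

lemma fwd_eq : fwd c s = (if ((s.card : ℤ) + c).toNat = 0 then dec s else ((s.card : ℤ) + c).toNat ::ₘ dec s) := by
  unfold fwd dec
  split_ifs with h
  · simp only [h]; exact Multiset.filter_cons_of_neg (p := fun x : ℕ => x ≠ 0) _ (by simp)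
  · rw [Multiset.filter_cons_of_pos (p := fun x : ℕ => x ≠ 0) _ h]

lemma dec_le (h1 : (s.sup : ℤ) ≤ s.card + c + 1) (h0 : 0 ≤ (s.card : ℤ) + c) :
    ∀ x ∈ dec s, x ≤ ((s.card : ℤ) + c).toNat := by
  intro x hx
  have := Multiset.le_sup (mem_dec.1 hx).2
  omega

lemma dec_nil (h1 : (s.sup : ℤ) ≤ s.card + c + 1) (h0 : 0 ≤ (s.card : ℤ) + c) (hg : ((s.card : ℤ) + c).toNat = 0) :
    dec s = 0 := by
  apply Multiset.eq_zero_of_forall_notMem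
  intro x hx
  have h2 := dec_le h1 h0 x hx
  have := (mem_dec.1 hx).1
  omega

lemma fwd_sup (h1 : (s.sup : ℤ) ≤ s.card + c + 1) (h0 : 0 ≤ (s.card : ℤ) + c) :
    (fwd c s).sup = ((s.card : ℤ) + c).toNat := by
  rw [fwd_eq]
  split_ifs with h
  · rw [dec_nil h1 h0 h, h]; rfl
  · rw [Multiset.sup_cons]
    exact sup_eq_left.2 (Multiset.sup_le.2 (dec_le h1 h0))

lemma fwd_erase (h1 : (s.sup : ℤ) ≤ s.card + c + 1) (h0 : 0 ≤ (s.card : ℤ) + c) :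
    (fwd c s).erase (fwd c s).sup = dec s := by
  rw [fwd_sup h1 h0, fwd_eq]
  split_ifs with h
  · rw [dec_nil h1 h0 h]; rfl
  · rw [Multiset.erase_cons_head]

lemma bwd_fwd (hs : ∀ x ∈ s, 0 < x) (h1 : (s.sup : ℤ) ≤ s.card + c + 1) (h0 : 0 ≤ (s.card : ℤ) + c) :
    bwd c (fwd c s) = s := by
  unfold bwd
  rw [fwd_erase h1 h0, fwd_sup h1 h0, dec_succ, card_dec]
  conv_rhs => rw [split_ones hs]
  congr 2
  omega

lemma sum_dec (hs : ∀ x ∈ s, 0 < x) : (dec s).sum + s.card = s.sum := by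
  have h1 : (dec s).sum = (s.map Nat.pred).sum := by
    unfold dec
    have h := Multiset.filter_add_not (fun x => x ≠ 0) (s.map Nat.pred)
    have h2 := congrArg Multiset.sum h
    rw [Multiset.sum_add] at h2
    have h3 : ((s.map Nat.pred).filter (fun x => ¬ x ≠ 0)).sum = 0 := by
      apply Multiset.sum_eq_zero
      intro x hx
      have := (Multiset.mem_filter.1 hx).2
      simpa using this
    omega
  rw [h1]
  clear h1
  induction s using Multiset.induction_on with
  | empty => simp
  | cons a s ih =>
    have := ih (fun x hx => hs x (Multiset.mem_cons_of_mem hx))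
    have ha := hs a (Multiset.mem_cons_self _ _)
    simp only [Multiset.map_cons, Multiset.sum_cons, Multiset.card_cons, Nat.pred_eq_sub_one] at *
    omega

lemma fwd_sum (hs : ∀ x ∈ s, 0 < x) (h0 : 0 ≤ (s.card : ℤ) + c) :
    ((fwd c s).sum : ℤ) = s.sum + c := by
  have := sum_dec hs
  rw [fwd_eq]
  split_ifs with h
  · omega
  · rw [Multiset.sum_cons, Nat.cast_add]; omega

lemma fwd_pos : ∀ x ∈ fwd c s, 0 < x := by
  intro x hx
  have := (Multiset.mem_filter.1 hx).2
  omega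

lemma fwd_card : (fwd c s).card = (s.filter (fun x => 2 ≤ x)).card + if ((s.card : ℤ) + c).toNat = 0 then 0 else 1 := by
  rw [fwd_eq, ← card_dec]
  split_ifs with h
  · rfl
  · rw [Multiset.card_cons]

/-- backward map facts -/
lemma bwd_card (h : ((s.erase s.sup).card : ℤ) ≤ s.sup - c) : ((bwd c s).card : ℤ) = s.sup - c := by
  unfold bwd
  rw [Multiset.card_add, Multiset.card_map, Multiset.card_replicate]
  omega

lemma card_erase_le (hs : s ≠ 0) : (s.erase s.sup).card + 1 = s.card :=
  Multiset.card_erase_add_one (sup_mem hs)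

lemma bwd_pos : ∀ x ∈ bwd c s, 0 < x := by
  intro x hx
  rcases Multiset.mem_add.1 hx with h | h
  · obtain ⟨y, _, rfl⟩ := Multiset.mem_map.1 h; exact Nat.succ_pos _
  · rw [Multiset.eq_of_mem_replicate h]; exact one_pos

lemma dec_bwd (hs : ∀ x ∈ s, 0 < x) : dec (bwd c s) = s.erase s.sup := by
  unfold dec bwd
  rw [Multiset.map_add, Multiset.map_map, Multiset.map_replicate, Multiset.filter_add]
  have h1 : (Multiset.map (Nat.pred ∘ Nat.succ) (s.erase s.sup)) = s.erase s.sup := by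
    conv_rhs => rw [← Multiset.map_id (s.erase s.sup)]
    exact Multiset.map_congr rfl (fun x _ => rfl)
  rw [h1, Multiset.filter_eq_self.2 (fun x hx => (hs x (Multiset.mem_of_mem_erase hx)).ne')]
  rw [Multiset.filter_eq_nil.2, add_zero]
  intro x hx
  rw [Multiset.eq_of_mem_replicate hx]; simp

lemma fwd_bwd (hs : ∀ x ∈ s, 0 < x) (h : ((s.erase s.sup).card : ℤ) ≤ s.sup - c) : fwd c (bwd c s) = s := by
  rw [fwd_eq, bwd_card h, dec_bwd hs]
  have e : ((s.sup : ℤ) - c + c).toNat = s.sup := by omega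
  rw [e]
  split_ifs with h2
  · by_cases hs0 : s = 0
    · subst hs0; rfl
    · have := hs _ (sup_mem hs0); omega
  · apply Multiset.cons_erase
    apply sup_mem
    rintro rfl
    exact h2 rfl

lemma bwd_sum (hs : ∀ x ∈ s, 0 < x) (h : ((s.erase s.sup).card : ℤ) ≤ s.sup - c) :
    ((bwd c s).sum : ℤ) = s.sum - c := by
  have h1 := fwd_sum (c := c) (s := bwd c s) bwd_pos (by rw [bwd_card h]; omega)
  rw [fwd_bwd hs h] at h1
  omega

lemma bwd_sup (h : ((s.erase s.sup).card : ℤ) ≤ s.sup - c) : ((bwd c s).sup : ℤ) ≤ s.sup + 1 := by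
  have : (bwd c s).sup ≤ s.sup + 1 := by
    apply Multiset.sup_le.2
    intro x hx
    rcases Multiset.mem_add.1 hx with h | h
    · obtain ⟨y, hy, rfl⟩ := Multiset.mem_map.1 h
      exact Nat.succ_le_succ (Multiset.le_sup (Multiset.mem_of_mem_erase hy))
    · rw [Multiset.eq_of_mem_replicate h]; omega
  omega
end

/-- weight: number of overpartitions on a given partition -/
def wt (s : Multiset ℕ) : ℕ := 2 ^ s.toFinset.card
def rk (s : Multiset ℕ) : ℤ := (s.sup : ℤ) - (s.card : ℤ)

lemma toFinset_split {s : Multiset ℕ} (hs : ∀ x ∈ s, 0 < x) :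
    s.toFinset.card = (dec s).toFinset.card + if 1 ∈ s then 1 else 0 := by
  have h1 : s.toFinset = (dec s).toFinset.image Nat.succ ∪ if 1 ∈ s then {1} else ∅ := by
    ext x
    simp only [Multiset.mem_toFinset, Finset.mem_union, Finset.mem_image, mem_dec]
    constructor
    · intro hx
      have := hs x hx
      by_cases h : x = 1
      · right; subst h; simp [hx]
      · left; exact ⟨x - 1, ⟨by omega, by rwa [show x - 1 + 1 = x by omega]⟩, by omega⟩
    · rintro (⟨y, ⟨_, hy⟩, rfl⟩ | h)
      · exact hy
      · split_ifs at h with h1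
        · rw [Finset.mem_singleton.1 h]; exact h1
        · simp at h
  rw [h1, Finset.card_union_of_disjoint, Finset.card_image_of_injective _ Nat.succ_injective]
  · split_ifs <;> simp
  · rw [Finset.disjoint_left]
    intro x hx
    obtain ⟨y, hy, rfl⟩ := Finset.mem_image.1 hx
    have := (mem_dec.1 (Multiset.mem_toFinset.1 hy)).1
    split_ifs
    · simp; omega
    · simp

lemma one_mem_iff {s : Multiset ℕ} (hs : ∀ x ∈ s, 0 < x) :
    1 ∈ s ↔ (s.filter (fun x => 2 ≤ x)).card < s.card := by
  constructor
  · intro h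
    have h1 := congrArg Multiset.card (Multiset.filter_add_not (fun x => 2 ≤ x) s)
    rw [Multiset.card_add] at h1
    have : 0 < (s.filter (fun x => ¬ 2 ≤ x)).card := Multiset.card_pos_iff_exists_mem.2
      ⟨1, Multiset.mem_filter.2 ⟨h, by norm_num⟩⟩
    omega
  · intro h
    rw [split_ones hs]
    apply Multiset.mem_add.2; right
    exact Multiset.mem_replicate.2 ⟨by omega, rfl⟩

lemma wt_fwd {c : ℤ} {s : Multiset ℕ} (hs : ∀ x ∈ s, 0 < x) (h1 : rk s ≤ c + 1) (h0 : 0 ≤ (s.card : ℤ) + c) :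
    wt (fwd c s) * (1 + if c ≤ rk (fwd c s) then 1 else 0) = wt s * (1 + if rk s ≤ c then 1 else 0) := by
  have h1' : (s.sup : ℤ) ≤ s.card + c + 1 := by unfold rk at h1; linarith
  have hrk : rk (fwd c s) = ((s.card : ℤ) + c).toNat - (fwd c s).card := by unfold rk; rw [fwd_sup h1' h0]
  have key : ∀ (P : Prop) [Decidable P], (1 + if P then 1 else 0) = 2 ^ (if P then 1 else 0) := by
    intro P _; split_ifs <;> rfl
  rw [key, key]
  unfold wt
  rw [← pow_add, ← pow_add]
  congr 1
  have hle : (s.filter (fun x => 2 ≤ x)).card ≤ s.card := Multiset.card_le_card (Multiset.filter_le _ _)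
  have h1m := one_mem_iff hs
  rw [toFinset_split hs]
  by_cases hg : ((s.card : ℤ) + c).toNat = 0
  · have hd := dec_nil h1' h0 hg
    have hf : fwd c s = 0 := by rw [fwd_eq, if_pos hg, hd]
    have hc2 : (s.filter (fun x => 2 ≤ x)).card = 0 := by rw [← card_dec, hd]; rfl
    rw [hf, hd]
    have e0 : rk (0 : Multiset ℕ) = 0 := rfl
    rw [e0, if_pos (by omega)]
    rw [hc2] at h1m
    by_cases hs0 : s = 0
    · subst hs0
      simp [rk] at *
      exact h0
    · have hpos : 0 < s.card := Multiset.card_pos.2 hs0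
      have h3 : 1 ∈ s := h1m.2 hpos
      have h4 := Multiset.le_sup h3
      rw [if_pos h3, if_neg (by unfold rk; omega)]
  · have hcard := fwd_card (c := c) (s := s)
    rw [if_neg hg] at hcard
    rw [hrk, hcard]
    have hf : fwd c s = ((s.card : ℤ) + c).toNat ::ₘ dec s := by rw [fwd_eq, if_neg hg]
    rw [hf, Multiset.toFinset_cons]
    have hmem : ((s.card : ℤ) + c).toNat ∈ (dec s).toFinset ↔ ¬ rk s ≤ c := by
      rw [Multiset.mem_toFinset, mem_dec]
      constructor
      · rintro ⟨_, h⟩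
        have := Multiset.le_sup h
        unfold rk; omega
      · intro h
        refine ⟨hg, ?_⟩
        unfold rk at h
        have e : ((s.card : ℤ) + c).toNat + 1 = s.sup := by omega
        rw [e]
        apply sup_mem
        rintro rfl
        simp at e
    have hone : (c ≤ (((s.card : ℤ) + c).toNat : ℤ) - ((s.filter (fun x => 2 ≤ x)).card + 1 : ℕ)) ↔ 1 ∈ s := by
      rw [h1m]; omega
    simp only [hone]
    by_cases hr : rk s ≤ c
    · rw [if_pos hr, Finset.card_insert_of_notMem (by rw [hmem]; exact fun h => h hr)]
      omega
    · rw [if_neg hr, Finset.insert_eq_of_mem (hmem.2 hr)]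
      omega

/-- the main bijective identity -/
theorem bij_sum (c : ℤ) (n n' : ℕ) (h : (n' : ℤ) = n + c) :
    (∑ μ : n'.Partition, if c - 1 ≤ rk μ.parts then wt μ.parts * (1 + if c ≤ rk μ.parts then 1 else 0) else 0) =
    ∑ l : n.Partition, if rk l.parts ≤ c + 1 then wt l.parts * (1 + if rk l.parts ≤ c then 1 else 0) else 0 := by
  rw [← Finset.sum_filter, ← Finset.sum_filter]
  symm
  have cond : ∀ l : n.Partition, rk l.parts ≤ c + 1 → 0 ≤ (l.parts.card : ℤ) + c := by
    intro l hl
    by_cases h0 : l.parts = 0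
    · have : n = 0 := by rw [← l.parts_sum, h0]; rfl
      rw [h0]; simp; omega
    · have h2 := sup_mem h0
      have := l.parts_pos h2
      unfold rk at hl; omega
  have cond2 : ∀ m : n'.Partition, c - 1 ≤ rk m.parts → ((m.parts.erase m.parts.sup).card : ℤ) ≤ m.parts.sup - c := by
    intro m hm
    by_cases h0 : m.parts = 0
    · have : n' = 0 := by rw [← m.parts_sum, h0]; rfl
      rw [h0]; simp; omega
    · have h2 := card_erase_le h0
      unfold rk at hm; omega
  refine Finset.sum_bij'
    (fun l hl => ⟨fwd c l.parts, fun hx => fwd_pos _ hx, by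
      have := fwd_sum (c := c) (s := l.parts) (fun x hx => l.parts_pos hx) (cond l (Finset.mem_filter.1 hl).2)
      rw [l.parts_sum] at this; omega⟩)
    (fun m hm => ⟨bwd c m.parts, fun hx => bwd_pos _ hx, by
      have := bwd_sum (c := c) (s := m.parts) (fun x hx => m.parts_pos hx) (cond2 m (Finset.mem_filter.1 hm).2)
      rw [m.parts_sum] at this; omega⟩) ?_ ?_ ?_ ?_ ?_
  · intro l hl
    have hl2 := (Finset.mem_filter.1 hl).2
    have h0 := cond l hl2
    rw [Finset.mem_filter]
    refine ⟨Finset.mem_univ _, ?_⟩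
    simp only
    unfold rk at hl2 ⊢
    rw [fwd_sup (by linarith) h0, fwd_card]
    have hle : (l.parts.filter (fun x => 2 ≤ x)).card ≤ l.parts.card := Multiset.card_le_card (Multiset.filter_le _ _)
    split_ifs <;> push_cast <;> omega
  · intro m hm
    have hm2 := (Finset.mem_filter.1 hm).2
    have h0 := cond2 m hm2
    rw [Finset.mem_filter]
    refine ⟨Finset.mem_univ _, ?_⟩
    simp only
    unfold rk
    rw [bwd_card h0]
    have := bwd_sup h0
    omega
  · intro l hl
    have hl2 := (Finset.mem_filter.1 hl).2
    have h0 := cond l hl2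
    unfold rk at hl2
    apply Nat.Partition.ext
    exact bwd_fwd (fun x hx => l.parts_pos hx) (by linarith) h0
  · intro m hm
    have hm2 := (Finset.mem_filter.1 hm).2
    have h0 := cond2 m hm2
    apply Nat.Partition.ext
    exact fwd_bwd (fun x hx => m.parts_pos hx) h0
  · intro l hl
    have hl2 := (Finset.mem_filter.1 hl).2
    have h0 := cond l hl2
    exact (wt_fwd (fun x hx => l.parts_pos hx) hl2 h0).symm

end OP
end PartC1

section PartC2
namespace OP

def Pc (n : ℕ) : ℤ := ∑ l : n.Partition, (wt l.parts : ℤ)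
def Qc (m : ℤ) (n : ℕ) : ℤ := ∑ l : n.Partition, if m ≤ rk l.parts then (wt l.parts : ℤ) else 0
def Qn (m : ℤ) (n : ℕ) : ℤ := ∑ l : n.Partition, if m ≤ - rk l.parts then (wt l.parts : ℤ) else 0
def Uc (m : ℤ) (n : ℕ) : ℤ := Qc m n + Qc (m+1) n
def Wc (m : ℤ) (n : ℕ) : ℤ := Qn m n + Qn (m+1) n

lemma rk_bound {n : ℕ} (hn : 0 < n) (l : n.Partition) : rk l.parts ≤ n - 1 ∧ 1 - (n:ℤ) ≤ rk l.parts := by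
  have h0 : l.parts ≠ 0 := by
    intro h
    have := l.parts_sum
    rw [h] at this; simp at this; omega
  have h1 := sup_mem h0
  have h2 : l.parts.sup ≤ n := by
    have := Multiset.le_sum_of_mem h1
    rwa [l.parts_sum] at this
  have h2' := l.parts_pos h1
  have h3 : 0 < l.parts.card := Multiset.card_pos.2 h0
  have h4 := sum_dec (s := l.parts) (fun x hx => l.parts_pos hx)
  rw [l.parts_sum] at h4
  unfold rk
  omega

lemma rk_zero (l : Nat.Partition 0) : rk l.parts = 0 := by
  have : l.parts = 0 := by
    apply Multiset.eq_zero_of_forall_notMem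
    intro x hx
    have h1 := l.parts_pos hx
    have h2 := Multiset.le_sum_of_mem hx
    rw [l.parts_sum] at h2; omega
  rw [this]; rfl

lemma rk_bound' {n : ℕ} (l : n.Partition) : rk l.parts ≤ n ∧ - (n:ℤ) ≤ rk l.parts := by
  rcases Nat.eq_zero_or_pos n with rfl | h
  · rw [rk_zero]; simp
  · have := rk_bound h l; omega

lemma Pc_zero : Pc 0 = 1 := by
  unfold Pc
  rw [Fintype.sum_unique]; rfl

lemma bijU (c : ℤ) (n n' : ℕ) (h : (n' : ℤ) = n + c) : Uc (c-1) n' = 2 * Pc n - Uc (c+1) n := by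
  have h1 := bij_sum c n n' h
  have h2 : Uc (c-1) n' = ((∑ μ : n'.Partition, if c - 1 ≤ rk μ.parts then wt μ.parts * (1 + if c ≤ rk μ.parts then 1 else 0) else 0 : ℕ) : ℤ) := by
    unfold Uc Qc
    rw [← Finset.sum_add_distrib, Nat.cast_sum]
    apply Finset.sum_congr rfl
    intro l _
    split_ifs <;> (first | (exfalso; omega) | (push_cast; try ring))
  have h3 : 2 * Pc n - Uc (c+1) n = ((∑ l : n.Partition, if rk l.parts ≤ c + 1 then wt l.parts * (1 + if rk l.parts ≤ c then 1 else 0) else 0 : ℕ) : ℤ) := by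
    unfold Uc Qc Pc
    rw [← Finset.sum_add_distrib, Finset.mul_sum, ← Finset.sum_sub_distrib, Nat.cast_sum]
    apply Finset.sum_congr rfl
    intro l _
    split_ifs <;> (first | (exfalso; omega) | (push_cast; try ring))
  rw [h2, h3, h1]

lemma UW (m : ℤ) (n : ℕ) : Uc (-m) n = 2 * Pc n - Wc m n := by
  unfold Uc Wc Qc Qn Pc
  rw [← Finset.sum_add_distrib, ← Finset.sum_add_distrib, Finset.mul_sum, ← Finset.sum_sub_distrib]
  apply Finset.sum_congr rfl
  intro l _
  split_ifs <;> (first | (exfalso; omega) | ring)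

lemma rec_U (m n : ℕ) : Uc m (n + m + 1) = 2 * Pc n - Uc (m+2:ℕ) n := by
  have := bijU (m+1) n (n+m+1) (by push_cast; ring)
  rw [show (m:ℤ)+1-1 = m by ring, show (m:ℤ)+1+1 = (m+2:ℕ) by push_cast; ring] at this
  exact this

lemma rec_W (m n : ℕ) : Wc m (n + m + 1) = 2 * Pc n - Wc (m+2:ℕ) n := by
  have := bijU (-m-1) (n+m+1) n (by push_cast; ring)
  rw [show -(m:ℤ)-1-1 = -((m+2:ℕ):ℤ) by push_cast; ring, show -(m:ℤ)-1+1 = -m by ring, UW, UW] at this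
  linarith

lemma Qc_large {m : ℤ} {n : ℕ} (hm : (n:ℤ) < m) : Qc m n = 0 := by
  unfold Qc
  apply Finset.sum_eq_zero
  intro l _
  rw [if_neg]; have := rk_bound' l; omega

lemma Qn_large {m : ℤ} {n : ℕ} (hm : (n:ℤ) < m) : Qn m n = 0 := by
  unfold Qn
  apply Finset.sum_eq_zero
  intro l _
  rw [if_neg]; have := rk_bound' l; omega

lemma Qc_large' {m : ℤ} {n : ℕ} (h0 : 0 < m) (hm : (n:ℤ) ≤ m) : Qc m n = 0 := by
  unfold Qc
  apply Finset.sum_eq_zero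
  intro l _
  rw [if_neg]
  rcases Nat.eq_zero_or_pos n with rfl | h
  · rw [rk_zero]; omega
  · have := rk_bound h l; omega

lemma Qn_large' {m : ℤ} {n : ℕ} (h0 : 0 < m) (hm : (n:ℤ) ≤ m) : Qn m n = 0 := by
  unfold Qn
  apply Finset.sum_eq_zero
  intro l _
  rw [if_neg]
  rcases Nat.eq_zero_or_pos n with rfl | h
  · rw [rk_zero]; omega
  · have := rk_bound h l; omega

lemma Q00 : Qc 0 0 = 1 ∧ Qn 0 0 = 1 := by
  rw [← Pc_zero]
  unfold Qc Qn Pc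
  constructor <;> (apply Finset.sum_congr rfl; intro l _; rw [rk_zero, if_pos (by norm_num)])

lemma U_small (m n : ℕ) (h : n ≤ m) : Uc m n = if m = 0 then 1 else 0 := by
  unfold Uc
  rw [Qc_large' (m := (m:ℤ)+1) (by omega) (by omega), add_zero]
  split_ifs with h0
  · obtain rfl : n = 0 := by omega
    subst h0; exact Q00.1
  · exact Qc_large' (by omega) (by omega)

lemma W_small (m n : ℕ) (h : n ≤ m) : Wc m n = if m = 0 then 1 else 0 := by
  unfold Wc
  rw [Qn_large' (m := (m:ℤ)+1) (by omega) (by omega), add_zero]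
  split_ifs with h0
  · obtain rfl : n = 0 := by omega
    subst h0; exact Q00.2
  · exact Qn_large' (by omega) (by omega)

lemma U_eq_W (n : ℕ) : ∀ m : ℕ, Uc m n = Wc m n := by
  induction n using Nat.strong_induction_on with
  | _ n ih =>
    intro m
    by_cases h : n ≤ m
    · rw [U_small m n h, W_small m n h]
    · obtain ⟨k, rfl⟩ : ∃ k, n = k + m + 1 := ⟨n - m - 1, by omega⟩
      rw [rec_U, rec_W, ih k (by omega)]

lemma U0 (n : ℕ) : Uc 0 n = Pc n := by
  have h1 := UW 0 n
  have h2 := U_eq_W n 0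
  simp at h1 h2
  linarith

lemma Q_eq (n : ℕ) : ∀ k m : ℕ, n < m + k → Qc m n = Qn m n := by
  intro k
  induction k with
  | zero => intro m h; rw [Qc_large (by omega), Qn_large (by omega)]
  | succ k ih =>
    intro m h
    have h1 := ih (m+1) (by omega)
    have h2 := U_eq_W n m
    unfold Uc Wc at h2
    push_cast at h1
    linarith

lemma Qsym (m n : ℕ) : Qc m n = Qn m n := Q_eq n (n+1) m (by omega)

/-- the target difference -/
def dc (n : ℕ) : ℤ := ∑ l : n.Partition,
  (wt l.parts : ℤ) * ((if rk l.parts ≡ 1 [ZMOD 5] then 1 else 0) - (if rk l.parts ≡ 2 [ZMOD 5] then 1 else 0))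

lemma ind_sum (n : ℕ) : ∀ r : ℤ, r ≤ n → - (n:ℤ) ≤ r →
    ((if r ≡ 1 [ZMOD 5] then (1:ℤ) else 0) - (if r ≡ 2 [ZMOD 5] then 1 else 0)) =
    ∑ t ∈ Finset.range (n+1), ((if ((5*t+1:ℕ):ℤ) ≤ r then (1:ℤ) else 0) - 2 * (if ((5*t+2:ℕ):ℤ) ≤ r then 1 else 0)
      + (if ((5*t+3:ℕ):ℤ) ≤ r then 1 else 0) - (if ((5*t+3:ℕ):ℤ) ≤ -r then 1 else 0)
      + 2 * (if ((5*t+4:ℕ):ℤ) ≤ -r then 1 else 0) - (if ((5*t+5:ℕ):ℤ) ≤ -r then 1 else 0)) := by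
  intro r h1 h2
  have key : ∀ N : ℕ, ∑ t ∈ Finset.range N, ((if ((5*t+1:ℕ):ℤ) ≤ r then (1:ℤ) else 0) - 2 * (if ((5*t+2:ℕ):ℤ) ≤ r then 1 else 0)
      + (if ((5*t+3:ℕ):ℤ) ≤ r then 1 else 0) - (if ((5*t+3:ℕ):ℤ) ≤ -r then 1 else 0)
      + 2 * (if ((5*t+4:ℕ):ℤ) ≤ -r then 1 else 0) - (if ((5*t+5:ℕ):ℤ) ≤ -r then 1 else 0)) =
      if r ≤ 5 * N ∧ - (5 * N : ℤ) ≤ r then ((if r ≡ 1 [ZMOD 5] then (1:ℤ) else 0) - (if r ≡ 2 [ZMOD 5] then 1 else 0)) else 0 := by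
    intro N
    unfold Int.ModEq
    induction N with
    | zero => 
      simp
      intro h3 h4
      have : r = 0 := by omega
      subst this; simp
    | succ N ih =>
      rw [Finset.sum_range_succ, ih]
      clear ih
      push_cast
      have hM : (0:ℤ) ≤ N := by positivity
      generalize (N:ℤ) = M at *
      split_ifs <;> omega
  rw [key, if_pos (c := r ≤ 5 * ((n+1:ℕ):ℤ) ∧ - (5 * ((n+1:ℕ):ℤ)) ≤ r) (by push_cast; omega)]

lemma dc_eq (n : ℕ) : dc n = ∑ t ∈ Finset.range (n+1),
    (Uc (5*t+1:ℕ) n - 3 * Uc (5*t+2:ℕ) n + 3 * Uc (5*t+3:ℕ) n - Uc (5*t+4:ℕ) n) := by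
  have h1 : dc n = ∑ t ∈ Finset.range (n+1), (Qc (5*t+1:ℕ) n - 2 * Qc (5*t+2:ℕ) n + Qc (5*t+3:ℕ) n
      - Qn (5*t+3:ℕ) n + 2 * Qn (5*t+4:ℕ) n - Qn (5*t+5:ℕ) n) := by
    unfold dc Qc Qn
    simp only [Finset.mul_sum, ← Finset.sum_add_distrib, ← Finset.sum_sub_distrib]
    rw [Finset.sum_comm]
    apply Finset.sum_congr rfl
    intro l _
    have hb := rk_bound' l
    rw [ind_sum n _ hb.1 hb.2, Finset.mul_sum]
    apply Finset.sum_congr rfl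
    intro t _
    simp only [mul_add, mul_sub, mul_ite, mul_zero, mul_one]
    ring_nf
  rw [h1]
  apply Finset.sum_congr rfl
  intro t _
  rw [← Qsym, ← Qsym, ← Qsym]
  unfold Uc
  push_cast
  ring_nf

lemma card_eq (n : ℕ) (p : ℤ → Prop) [DecidablePred p] :
    (Nat.card {P : Overpartition n // p P.rank} : ℤ) = ∑ l : n.Partition, if p (rk l.parts) then (wt l.parts : ℤ) else 0 := by
  classical
  have e : {P : Overpartition n // p P.rank} ≃ Σ l : n.Partition, {s : Finset ℕ // s ⊆ l.parts.toFinset ∧ p (rk l.parts)} :=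
    { toFun := fun P => ⟨P.1.1.1, ⟨P.1.1.2, P.1.2, P.2⟩⟩
      invFun := fun x => ⟨⟨(x.1, x.2.1), x.2.2.1⟩, x.2.2.2⟩
      left_inv := fun P => rfl
      right_inv := fun x => rfl }
  rw [Nat.card_congr e]
  have hc : ∀ l : n.Partition, Nat.card {s : Finset ℕ // s ⊆ l.parts.toFinset ∧ p (rk l.parts)} =
      if p (rk l.parts) then wt l.parts else 0 := by
    intro l
    split_ifs with h
    · have e2 : {s : Finset ℕ // s ⊆ l.parts.toFinset ∧ p (rk l.parts)} ≃ {s // s ∈ l.parts.toFinset.powerset} :=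
        Equiv.subtypeEquivRight (fun s => by simp [h])
      rw [Nat.card_congr e2, Nat.card_eq_fintype_card, Fintype.card_coe, Finset.card_powerset]; rfl
    · have : IsEmpty {s : Finset ℕ // s ⊆ l.parts.toFinset ∧ p (rk l.parts)} := ⟨fun s => h s.2.2⟩
      exact Nat.card_of_isEmpty
  have hfin : ∀ l : n.Partition, Finite {s : Finset ℕ // s ⊆ l.parts.toFinset ∧ p (rk l.parts)} := by
    intro l
    apply Set.Finite.to_subtype
    apply Set.Finite.subset (Finset.finite_toSet l.parts.toFinset.powerset)
    intro s hs; simp; exact hs.1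
  rw [Nat.card_sigma]
  simp only [hc]
  push_cast
  rfl

lemma dc_nbar (n : ℕ) : dc n = (nbar 1 5 n : ℤ) - nbar 2 5 n := by
  unfold nbar
  rw [card_eq n (fun r => r ≡ 1 [ZMOD ((5:ℕ):ℤ)]), card_eq n (fun r => r ≡ 2 [ZMOD ((5:ℕ):ℤ)])]
  unfold dc
  rw [← Finset.sum_sub_distrib]
  apply Finset.sum_congr rfl
  intro l _
  simp only [mul_sub, mul_ite, mul_zero, mul_one]
  rfl

lemma Uc_nonneg (m : ℤ) (n : ℕ) : 0 ≤ Uc m n := by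
  unfold Uc Qc
  apply add_nonneg <;> (apply Finset.sum_nonneg; intro l _; split_ifs <;> positivity)

lemma Uc_le (m : ℤ) (n : ℕ) : Uc m n ≤ 2 * Pc n := by
  have : ∀ m, Qc m n ≤ Pc n := by
    intro m; unfold Qc Pc
    apply Finset.sum_le_sum; intro l _; split_ifs
    · exact le_rfl
    · positivity
  unfold Uc; linarith [this m, this (m+1)]

lemma Pc_nonneg (n : ℕ) : 0 ≤ Pc n := by
  unfold Pc; exact Finset.sum_nonneg (fun l _ => by positivity)

lemma Pc_le (n : ℕ) : Pc n ≤ 4 ^ n := by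
  have h1 : Fintype.card n.Partition ≤ 2 ^ n := by
    calc Fintype.card n.Partition ≤ Fintype.card (Composition n) :=
          Fintype.card_le_of_surjective _ Nat.Partition.ofComposition_surj
      _ = 2 ^ (n-1) := composition_card n
      _ ≤ 2 ^ n := Nat.pow_le_pow_right (by norm_num) (by omega)
  have h2 : ∀ l : n.Partition, (wt l.parts : ℤ) ≤ 2 ^ n := by
    intro l
    unfold wt
    push_cast
    apply pow_le_pow_right₀ (by norm_num)
    have h4 := sum_dec (s := l.parts) (fun x hx => l.parts_pos hx)
    rw [l.parts_sum] at h4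
    have := Multiset.toFinset_card_le l.parts
    omega
  calc Pc n ≤ ∑ l : n.Partition, (2:ℤ)^n := Finset.sum_le_sum (fun l _ => h2 l)
    _ = Fintype.card n.Partition * 2 ^ n := by simp
    _ ≤ 2 ^ n * 2 ^ n := by
        apply mul_le_mul_of_nonneg_right _ (by positivity)
        exact_mod_cast h1
    _ = 4 ^ n := by rw [← mul_pow]; norm_num

end OP
end PartC2

section PartP1
/-- triangular numbers on the integers -/
def tri (k : ℤ) : ℤ := k * (k - 1) / 2

lemma tri_two (k : ℤ) : 2 * tri k = k * (k - 1) := by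
  have h : (2:ℤ) ∣ k * (k - 1) := by
    rcases Int.even_or_odd k with h | h
    · exact Dvd.dvd.mul_right h.two_dvd _
    · exact Dvd.dvd.mul_left (by obtain ⟨m, rfl⟩ := h; exact ⟨m, by ring⟩) _
  exact Int.mul_ediv_cancel' h

lemma tri_add (a b : ℤ) : tri (a + b) = tri a + tri b + a * b := by
  have := tri_two a; have := tri_two b; have := tri_two (a + b); nlinarith

lemma tri_one_sub (k : ℤ) : tri (1 - k) = tri k := by
  have := tri_two k; have := tri_two (1 - k); nlinarith

lemma tri_neg (k : ℤ) : tri (-k) = tri k + k := by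
  have := tri_two k; have := tri_two (-k); nlinarith

lemma tri_eq {k m : ℤ} (h : 2 * m = k * (k - 1)) : tri k = m := by
  have := tri_two k; omega

/-- theta term -/
noncomputable def te (p z : ℝ) (k : ℤ) : ℝ := (-1 : ℝ) ^ k * p ^ tri k * z ^ k

/-- theta function -/
noncomputable def jt (p z : ℝ) : ℝ := ∑' k : ℤ, te p z k

/-- Appell-Lerch type sum -/
noncomputable def Bt (p z y : ℝ) : ℝ := ∑' k : ℤ, te p z k * (1 - y * p ^ k)⁻¹

/-- derivative theta -/
noncomputable def dj (p z : ℝ) : ℝ := ∑' k : ℤ, (k : ℝ) * te p z k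

lemma abs_te {p z : ℝ} (hp : 0 < p) (hz : 0 < z) (k : ℤ) : |te p z k| = p ^ tri k * z ^ k := by
  unfold te
  rw [abs_mul, abs_mul, abs_zpow, abs_neg, abs_one, one_zpow, one_mul,
    abs_of_pos (zpow_pos hp _), abs_of_pos (zpow_pos hz _)]

lemma te_add {p z : ℝ} (hp : 0 < p) (hz : 0 < z) (a b : ℤ) :
    te p z (a + b) = te p z a * te p z b * p ^ (a * b) := by
  unfold te
  rw [tri_add, zpow_add₀ (by norm_num), zpow_add₀ hp.ne', zpow_add₀ hp.ne', zpow_add₀ hz.ne']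
  ring

lemma te_ne {p z : ℝ} (hp : 0 < p) (hz : 0 < z) (a : ℤ) : te p z a ≠ 0 := by
  have := abs_te hp hz a
  have h2 : 0 < p ^ tri a * z ^ a := by positivity
  rw [← this] at h2; exact abs_pos.mp h2

lemma tri_zero : tri 0 = 0 := tri_eq (by ring)
lemma tri_one : tri 1 = 0 := tri_eq (by ring)

lemma te_one (p z : ℝ) : te p z 1 = -z := by
  unfold te; rw [tri_one]; simp

lemma te_zero (p z : ℝ) : te p z 0 = 1 := by
  unfold te; rw [tri_zero]; simp

lemma te_succ {p z : ℝ} (hp : 0 < p) (hz : 0 < z) (k : ℤ) :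
    te p z (k + 1) = te p z k * (-z * p ^ k) := by
  rw [te_add hp hz, te_one, mul_one]; ring

lemma te_mul {p z w : ℝ} (k : ℤ) : te p (z * w) k = te p z k * w ^ k := by
  unfold te; rw [mul_zpow]; ring

lemma te_reflect {p z : ℝ} (hz : 0 < z) (k : ℤ) :
    te p z (1 - k) = -z * te p z⁻¹ k := by
  unfold te
  rw [tri_one_sub, sub_eq_add_neg, zpow_add₀ (by norm_num), zpow_add₀ hz.ne', inv_zpow', zpow_neg (-1:ℝ)]
  have : ((-1:ℝ)^k)⁻¹ = (-1:ℝ)^k := by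
    rw [← inv_zpow]; norm_num
  rw [this]; simp; ring

lemma te_neg {p z : ℝ} (hp : 0 < p) (k : ℤ) :
    te p z (-k) = te p (p * z⁻¹) k := by
  unfold te
  rw [tri_neg, zpow_add₀ hp.ne', mul_zpow, inv_zpow', zpow_neg (-1:ℝ)]
  have : ((-1:ℝ)^k)⁻¹ = (-1:ℝ)^k := by
    rw [← inv_zpow]; norm_num
  rw [this]; ring

lemma summable_nat_tri {p z : ℝ} (hp : 0 < p) (hp1 : p < 1) (hz : 0 < z) :
    Summable (fun n : ℕ => p ^ tri (n:ℤ) * z ^ (n:ℤ)) := by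
  refine summable_of_ratio_test_tendsto_lt_one (l := 0) (by norm_num)
    (Filter.Eventually.of_forall fun n => by positivity) ?_
  have : ∀ n : ℕ, ‖p ^ tri ((n+1:ℕ):ℤ) * z ^ ((n+1:ℕ):ℤ)‖ / ‖p ^ tri (n:ℤ) * z ^ (n:ℤ)‖ = p ^ n * z := by
    intro n
    rw [Real.norm_of_nonneg (by positivity), Real.norm_of_nonneg (by positivity)]
    push_cast
    rw [tri_add, tri_one, zpow_add₀ hp.ne', zpow_add₀ hp.ne', zpow_add₀ hz.ne']
    have := (zpow_pos hp (tri n)).ne'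
    have := (zpow_pos hz n).ne'
    simp
    field_simp
  simp_rw [this]
  simpa using (tendsto_pow_atTop_nhds_zero_of_lt_one hp.le hp1).mul_const z

lemma summable_abs_te {p z : ℝ} (hp : 0 < p) (hp1 : p < 1) (hz : 0 < z) :
    Summable (fun k : ℤ => p ^ tri k * z ^ k) := by
  refine Summable.of_nat_of_neg (summable_nat_tri hp hp1 hz) ?_
  have := summable_nat_tri hp hp1 (z := p * z⁻¹) (by positivity)
  refine this.congr fun n => ?_
  rw [tri_neg, zpow_add₀ hp.ne', mul_zpow, inv_zpow']; ring

lemma summable_te {p z : ℝ} (hp : 0 < p) (hp1 : p < 1) (hz : 0 < z) :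
    Summable (te p z) := by
  refine Summable.of_norm ((summable_abs_te hp hp1 hz).congr fun k => ?_)
  rw [Real.norm_eq_abs, abs_te hp hz]

lemma summable_te_bdd {p z : ℝ} (hp : 0 < p) (hp1 : p < 1) (hz : 0 < z) {g : ℤ → ℝ} {C : ℝ}
    (hg : ∀ k, |g k| ≤ C) : Summable (fun k => te p z k * g k) := by
  refine Summable.of_norm_bounded ((summable_abs_te hp hp1 hz).mul_right C) fun k => ?_
  rw [Real.norm_eq_abs, abs_mul, abs_te hp hz]
  exact mul_le_mul_of_nonneg_left (hg k) (by positivity)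

lemma int_abs_le_two (k : ℤ) : |(k:ℝ)| ≤ (2:ℝ) ^ k + (2⁻¹:ℝ) ^ k := by
  have h1 : ∀ n : ℕ, (n:ℝ) ≤ 2 ^ n := fun n => by exact_mod_cast (Nat.lt_two_pow_self).le
  obtain ⟨n, rfl | rfl⟩ := k.eq_nat_or_neg
  · have := h1 n
    have h2 : (0:ℝ) < (2 ^ n)⁻¹ := by positivity
    simp; linarith
  · have := h1 n
    have h2 : (0:ℝ) < (2 ^ n)⁻¹ := by positivity
    simp; linarith

lemma summable_k_te {p z : ℝ} (hp : 0 < p) (hp1 : p < 1) (hz : 0 < z) :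
    Summable (fun k : ℤ => (k:ℝ) * te p z k) := by
  have h1 := summable_abs_te hp hp1 (z := z * 2) (by positivity)
  have h2 := summable_abs_te hp hp1 (z := z * 2⁻¹) (by positivity)
  refine Summable.of_norm_bounded (h1.add h2) fun k => ?_
  rw [Real.norm_eq_abs, abs_mul, abs_te hp hz, mul_zpow, mul_zpow]
  have := int_abs_le_two k
  have h3 : 0 < p ^ tri k * z ^ k := by positivity
  nlinarith

/-- the denominators are bounded -/
lemma den_bdd {p y : ℝ} (hp : 0 < p) (hp1 : p < 1) (hy : 0 < y) :
    ∃ C : ℝ, ∀ k : ℤ, |(1 - y * p ^ k)⁻¹| ≤ C := by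
  have key : ∀ y : ℝ, 0 < y → ∃ C : ℝ, ∀ n : ℕ, |(1 - y * p ^ n)⁻¹| ≤ C := by
    intro y hy
    have ht : Filter.Tendsto (fun n : ℕ => |(1 - y * p ^ n)⁻¹|) Filter.atTop (nhds |(1 - y * 0)⁻¹|) := by
      refine (Filter.Tendsto.inv₀ ?_ (by norm_num)).abs
      exact ((tendsto_pow_atTop_nhds_zero_of_lt_one hp.le hp1).const_mul y).const_sub 1
    obtain ⟨C, hC⟩ := ht.bddAbove_range
    exact ⟨C, fun n => hC ⟨n, rfl⟩⟩
  obtain ⟨C1, h1⟩ := key y hy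
  obtain ⟨C2, h2⟩ := key y⁻¹ (by positivity)
  have hC2 : 0 ≤ C2 := (abs_nonneg _).trans (h2 0)
  refine ⟨max C1 (y⁻¹ * C2), fun k => ?_⟩
  obtain ⟨n, rfl | rfl⟩ := k.eq_nat_or_neg
  · exact le_max_of_le_left (by simpa using h1 n)
  · refine le_max_of_le_right ?_
    have e : (1 - y * p ^ (-(n:ℤ)))⁻¹ = -(y⁻¹ * p ^ n) * (1 - y⁻¹ * p ^ n)⁻¹ := by
      have hpn : p ^ n ≠ 0 := by positivity
      rw [zpow_neg, zpow_natCast]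
      rw [show 1 - y * (p ^ n)⁻¹ = -(1 - y⁻¹ * p ^ n) * (y * (p ^ n)⁻¹) by field_simp; ring]
      rw [mul_inv, inv_neg, mul_inv, inv_inv]; ring
    rw [e, abs_mul, abs_neg, abs_of_pos (by positivity)]
    have hpn : p ^ n ≤ 1 := pow_le_one₀ hp.le hp1.le
    have := h2 n
    have hy' : 0 < y⁻¹ := by positivity
    calc y⁻¹ * p ^ n * |(1 - y⁻¹ * p ^ n)⁻¹| ≤ y⁻¹ * 1 * C2 := by gcongr
      _ = _ := by ring

lemma summable_Bt {p z y : ℝ} (hp : 0 < p) (hp1 : p < 1) (hz : 0 < z) (hy : 0 < y) :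
    Summable (fun k : ℤ => te p z k * (1 - y * p ^ k)⁻¹) := by
  obtain ⟨C, hC⟩ := den_bdd hp hp1 hy
  exact summable_te_bdd hp hp1 hz hC

lemma jt_shift {p z : ℝ} (hp : 0 < p) (hz : 0 < z) : jt p (p * z) = -z⁻¹ * jt p z := by
  unfold jt
  rw [← (Equiv.addRight (1:ℤ)).tsum_eq (te p z), ← tsum_mul_left]
  congr 1; ext k
  simp only [Equiv.coe_addRight]
  rw [te_succ hp hz, mul_comm p z, te_mul]
  field_simp

lemma jt_inv {p z : ℝ} (hz : 0 < z) : jt p z⁻¹ = -z⁻¹ * jt p z := by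
  unfold jt
  rw [← (Equiv.subLeft (1:ℤ)).tsum_eq (te p z), ← tsum_mul_left]
  congr 1; ext k
  simp only [Equiv.subLeft_apply]
  rw [te_reflect hz]
  field_simp

lemma jt_one (p : ℝ) : jt p 1 = 0 := by
  have := jt_inv (p := p) (z := 1) one_pos
  simp at this; linarith

lemma jt_pdiv {p z : ℝ} (hp : 0 < p) (hz : 0 < z) : jt p (p * z⁻¹) = jt p z := by
  rw [jt_shift hp (by positivity), jt_inv hz]
  field_simp

lemma jt_p {p : ℝ} (hp : 0 < p) : jt p p = 0 := by
  have := jt_pdiv hp (z := 1) one_pos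
  simp [jt_one] at this; exact this

lemma dj_shift {p z : ℝ} (hp : 0 < p) (hp1 : p < 1) (hz : 0 < z) :
    dj p (p * z) = -z⁻¹ * (dj p z - jt p z) := by
  unfold dj jt
  rw [← Summable.tsum_sub (summable_k_te hp hp1 hz) (summable_te hp hp1 hz),
    ← (Equiv.addRight (1:ℤ)).tsum_eq (fun k => (k:ℝ) * te p z k - te p z k), ← tsum_mul_left]
  congr 1; ext k
  simp only [Equiv.coe_addRight]
  rw [te_succ hp hz, mul_comm p z, te_mul]
  push_cast
  field_simp; ring

lemma dj_inv {p z : ℝ} (hp : 0 < p) (hp1 : p < 1) (hz : 0 < z) :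
    dj p z⁻¹ = -z⁻¹ * (jt p z - dj p z) := by
  unfold dj jt
  rw [← Summable.tsum_sub (summable_te hp hp1 hz) (summable_k_te hp hp1 hz),
    ← (Equiv.subLeft (1:ℤ)).tsum_eq (fun k => te p z k - (k:ℝ) * te p z k), ← tsum_mul_left]
  congr 1; ext k
  simp only [Equiv.subLeft_apply]
  rw [te_reflect hz]
  push_cast
  field_simp; ring

lemma Bt_shift {p z y : ℝ} (hp : 0 < p) (hz : 0 < z) :
    Bt p (p * z) (p * y) = -z⁻¹ * Bt p z y := by
  unfold Bt
  rw [← (Equiv.addRight (1:ℤ)).tsum_eq (fun k => te p z k * (1 - y * p ^ k)⁻¹), ← tsum_mul_left]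
  congr 1; ext k
  simp only [Equiv.coe_addRight]
  rw [te_succ hp hz, mul_comm p z, te_mul, zpow_add_one₀ hp.ne',
    show p * y * p ^ k = y * (p ^ k * p) by ring]
  field_simp

lemma Bt_mirror {p z y : ℝ} (hp : 0 < p) (hy : 0 < y) :
    Bt p z y = -y⁻¹ * Bt p (p * (p * z⁻¹)) y⁻¹ := by
  unfold Bt
  rw [← (Equiv.neg ℤ).tsum_eq (fun k => te p z k * (1 - y * p ^ k)⁻¹), ← tsum_mul_left]
  congr 1; ext k
  simp only [Equiv.neg_apply]
  rw [te_neg hp, show te p (p * (p * z⁻¹)) k = te p (p * z⁻¹) k * p ^ k by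
    rw [mul_comm p (p * z⁻¹), te_mul]]
  have hpn : p ^ k ≠ 0 := (zpow_pos hp k).ne'
  rw [zpow_neg]
  rw [show 1 - y * (p ^ k)⁻¹ = -(1 - y⁻¹ * p ^ k) * (y * (p ^ k)⁻¹) by field_simp; ring]
  rw [mul_inv, inv_neg, mul_inv, inv_inv]; ring
end PartP1

section PartP2
lemma HS {ι : Type*} {f g : ι → ℝ} {a b : ℝ} (h : HasSum f a) (e : ∀ i, g i = f i) (hb : b = a) :
    HasSum g b := by
  rw [hb]; exact (funext e : g = f) ▸ h

/-- Kronecker type sum -/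
noncomputable def Kt (p a b : ℝ) : ℝ := ∑' n : ℤ, a ^ n * (1 - b * p ^ n)⁻¹

lemma den_neg {p b : ℝ} (hp : 0 < p) (hb : 0 < b) (n : ℕ) :
    (1 - b * p ^ (-(n:ℤ)))⁻¹ = -(b⁻¹ * p ^ n) * (1 - b⁻¹ * p ^ (n:ℤ))⁻¹ := by
  have hpn : p ^ n ≠ 0 := by positivity
  rw [zpow_neg, zpow_natCast]
  rw [show 1 - b * (p ^ n)⁻¹ = -(1 - b⁻¹ * p ^ n) * (b * (p ^ n)⁻¹) by field_simp; ring]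
  rw [mul_inv, inv_neg, mul_inv, inv_inv]; ring

lemma summable_Kt {p a b : ℝ} (hp : 0 < p) (hp1 : p < 1) (ha : p < a) (ha1 : a < 1) (hb : 0 < b) :
    Summable (fun n : ℤ => a ^ n * (1 - b * p ^ n)⁻¹) := by
  have ha0 : 0 < a := hp.trans ha
  obtain ⟨C1, h1⟩ := den_bdd hp hp1 hb
  obtain ⟨C2, h2⟩ := den_bdd hp hp1 (inv_pos.mpr hb)
  refine Summable.of_nat_of_neg ?_ ?_
  · refine Summable.of_norm_bounded ((summable_geometric_of_lt_one ha0.le ha1).mul_right C1) fun n => ?_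
    rw [Real.norm_eq_abs, abs_mul, zpow_natCast, abs_of_pos (by positivity)]
    exact mul_le_mul_of_nonneg_left (by simpa using h1 n) (by positivity)
  · have hr : p / a < 1 := by rw [div_lt_one ha0]; exact ha
    refine Summable.of_norm_bounded ((summable_geometric_of_lt_one (by positivity) hr).mul_right (b⁻¹ * C2)) fun n => ?_
    rw [den_neg hp hb, zpow_neg, zpow_natCast, Real.norm_eq_abs, abs_mul, abs_mul, abs_neg,
      abs_of_pos (by positivity), abs_of_pos (by positivity), div_pow]
    have := h2 n
    calc (a ^ n)⁻¹ * (b⁻¹ * p ^ n * |(1 - b⁻¹ * p ^ (n:ℤ))⁻¹|) ≤ (a ^ n)⁻¹ * (b⁻¹ * p ^ n * C2) := by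
          gcongr
      _ = _ := by ring

/-- sign function for geometric expansions -/
noncomputable def sg (i t : ℤ) : ℝ := if 0 ≤ i ∧ 1 ≤ t then 1 else if i < 0 ∧ t ≤ 0 then -1 else 0

lemma sg_step (i t : ℤ) : sg i (t + 1) = sg i t + if t = 0 then 1 else 0 := by
  unfold sg
  split_ifs <;> first | omega | norm_num

lemma sg_hasSum {v : ℝ} (hv : 0 < v) {t : ℤ} (h : (1 ≤ t ∧ v < 1) ∨ (t ≤ 0 ∧ 1 < v)) :
    HasSum (fun i : ℤ => sg i t * v ^ i) (1 - v)⁻¹ ∧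
    HasSum (fun i : ℤ => |sg i t * v ^ i|) |(1 - v)⁻¹| := by
  rcases h with ⟨ht, hv1⟩ | ⟨ht, hv1⟩
  · have g := hasSum_geometric_of_lt_one hv.le hv1
    have e1 : HasSum (fun i : ℤ => sg i t * v ^ i) ((1 - v)⁻¹ + 0) := by
      refine HasSum.of_nat_of_neg_add_one ?_ ?_
      · refine HS g (fun n => ?_) rfl
        simp [sg, ht]
      · convert hasSum_zero with n
        have : ¬ (t ≤ 0) := by omega
        have h2 : ¬ ((0:ℤ) ≤ -((n:ℤ)+1)) := by omega
        unfold sg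
        rw [if_neg (by tauto), if_neg (by tauto)]; simp
    rw [add_zero] at e1
    refine ⟨e1, ?_⟩
    rw [abs_of_pos (by apply inv_pos.mpr; linarith)]
    refine HS e1 (fun i => ?_) rfl
    apply abs_of_nonneg
    have : ¬ (t ≤ 0) := by omega
    unfold sg
    split_ifs
    · positivity
    · omega
    · simp
  · have hvi : v⁻¹ < 1 := inv_lt_one_of_one_lt₀ hv1
    have g := (hasSum_geometric_of_lt_one (inv_pos.mpr hv).le hvi).mul_left (-v⁻¹)
    have hval : -v⁻¹ * (1 - v⁻¹)⁻¹ = (1 - v)⁻¹ := by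
      have : 1 - v ≠ 0 := by linarith
      have h3 : v - 1 ≠ 0 := by linarith
      rw [show 1 - v⁻¹ = (v - 1) * v⁻¹ by field_simp, mul_inv, inv_inv,
        show 1 - v = -(v - 1) by ring, inv_neg]
      field_simp
    rw [hval] at g
    have e1 : HasSum (fun i : ℤ => sg i t * v ^ i) (0 + (1 - v)⁻¹) := by
      refine HasSum.of_nat_of_neg_add_one ?_ ?_
      · convert hasSum_zero with n
        have : ¬ (1 ≤ t) := by omega
        have h2 : ¬ ((n:ℤ) < 0) := by omega
        unfold sg
        rw [if_neg (by tauto), if_neg (by tauto)]; simp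
      · refine HS g (fun n => ?_) rfl
        have h1 : ¬ (1 ≤ t) := by omega
        have h2 : (-((n:ℤ)+1)) < 0 := by omega
        unfold sg
        rw [if_neg (by tauto), if_pos ⟨h2, ht⟩, zpow_neg]
        rw [zpow_add_one₀ hv.ne', zpow_natCast, mul_inv, inv_pow]; ring
    rw [zero_add] at e1
    refine ⟨e1, ?_⟩
    rw [abs_of_neg (by apply inv_lt_zero.mpr; linarith)]
    refine HS e1.neg (fun i => ?_) rfl
    apply abs_of_nonpos
    have : ¬ (1 ≤ t) := by omega
    have : 0 < v ^ i := by positivity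
    unfold sg
    split_ifs
    · omega
    · linarith
    · simp

/-- shear on pairs of integers -/
def shear : ℤ × ℤ ≃ ℤ × ℤ where
  toFun x := (x.1 + x.2, x.2)
  invFun x := (x.1 - x.2, x.2)
  left_inv x := by simp
  right_inv x := by simp

/-- expansion of Bt as a sum -/
lemma Bt_expand {p x z : ℝ} (hp : 0 < p) (hp1 : p < 1) (hx : 0 < x) (hz : 0 < z)
    (h1 : 1 < x * z) (h2 : x * z * p < 1) :
    ∃ h : ℤ → ℝ, h 0 = 0 ∧ (∀ s, h (s + 1) = h s + (te p x⁻¹ s)⁻¹) ∧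
      HasSum (fun s => te p z s * h s) (Bt p z (x * z)) := by
  have hxz : 0 < x * z := by positivity
  have hv : ∀ t : ℤ, (1 ≤ t ∧ x * z * p ^ t < 1) ∨ (t ≤ 0 ∧ 1 < x * z * p ^ t) := by
    intro t
    rcases le_or_gt 1 t with ht | ht
    · left; refine ⟨ht, lt_of_le_of_lt ?_ h2⟩
      have : p ^ t ≤ p ^ (1:ℤ) := zpow_le_zpow_right_of_le_one₀ hp hp1.le ht
      rw [zpow_one] at this
      gcongr
    · right; refine ⟨by omega, lt_of_lt_of_le h1 ?_⟩
      have : p ^ (0:ℤ) ≤ p ^ t := zpow_le_zpow_right_of_le_one₀ hp hp1.le (by omega)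
      rw [zpow_zero] at this
      nlinarith
  have hvp : ∀ t : ℤ, 0 < x * z * p ^ t := fun t => by positivity
  set Fm : ℤ × ℤ → ℝ := fun y => te p z y.1 * (sg y.2 y.1 * (x * z * p ^ y.1) ^ y.2) with hFm
  have hsF : Summable Fm := by
    rw [← summable_abs_iff]
    rw [summable_prod_of_nonneg (fun _ => abs_nonneg _)]
    constructor
    · intro t
      simp only [hFm, abs_mul]
      have := (sg_hasSum (hvp t) (hv t)).2.summable
      simp only [abs_mul] at this
      exact this.mul_left _
    · have : ∀ t : ℤ, ∑' i : ℤ, |Fm (t, i)| = |te p z t * (1 - x * z * p ^ t)⁻¹| := by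
        intro t
        have h := (sg_hasSum (hvp t) (hv t)).2.mul_left |te p z t|
        rw [abs_mul, ← h.tsum_eq]
        simp only [hFm, abs_mul]
      simp only [this]
      exact (summable_Bt hp hp1 hz hxz).abs
  have hF2 : ∀ t i : ℤ, te p z t * (x * z * p ^ t) ^ i = te p z (t + i) * (te p x⁻¹ i)⁻¹ := by
    intro t i
    rw [te_add hp hz]
    unfold te
    rw [mul_zpow, mul_zpow, ← zpow_mul, inv_zpow]
    have := (zpow_pos hp (tri i)).ne'
    have := (zpow_pos hx i).ne'
    have h3 : (-1:ℝ)^i ≠ 0 := zpow_ne_zero _ (by norm_num)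
    field_simp
  have hB : HasSum Fm (Bt p z (x * z)) := by
    have h3 := hsF.hasSum
    rw [hsF.tsum_prod] at h3
    refine HS h3 (fun _ => rfl) ?_
    unfold Bt
    congr 1; ext t
    rw [← (sg_hasSum (hvp t) (hv t)).1.tsum_eq, ← tsum_mul_left]
  have hB2 : HasSum (fun y : ℤ × ℤ => Fm (shear.symm y)) (Bt p z (x * z)) :=
    (Equiv.hasSum_iff shear.symm).mpr hB
  have hval : ∀ s i : ℤ, Fm (shear.symm (s, i)) = te p z s * (sg i (s - i) * (te p x⁻¹ i)⁻¹) := by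
    intro s i
    simp only [hFm, shear, Equiv.coe_fn_symm_mk]
    have := hF2 (s - i) i
    rw [sub_add_cancel] at this
    linear_combination sg i (s - i) * this
  have hrow : ∀ s, Summable (fun i => sg i (s - i) * (te p x⁻¹ i)⁻¹) := by
    intro s
    have := hB2.summable.prod_factor s
    simp only [hval] at this
    exact (summable_mul_left_iff (te_ne hp hz s)).mp this
  refine ⟨fun s => ∑' i, sg i (s - i) * (te p x⁻¹ i)⁻¹, ?_, ?_, ?_⟩
  · convert tsum_zero with i
    unfold sg; rw [if_neg (by omega), if_neg (by omega)]; simp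
  · intro s
    have h4 : ∀ i, sg i (s + 1 - i) * (te p x⁻¹ i)⁻¹ = sg i (s - i) * (te p x⁻¹ i)⁻¹ +
        if i = s then (te p x⁻¹ s)⁻¹ else 0 := by
      intro i
      rw [show s + 1 - i = (s - i) + 1 by ring, sg_step, add_mul]
      congr 1
      by_cases hi : i = s
      · subst hi; simp
      · rw [if_neg (by omega), if_neg hi, zero_mul]
    simp only [h4]
    rw [Summable.tsum_add (hrow s) (hasSum_ite_eq s _).summable, tsum_ite_eq]
  · have h5 := hB2.prod_fiberwise (fun s => (hB2.summable.prod_factor s).hasSum)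
    refine HS h5 (fun s => ?_) rfl
    simp only [hval]
    rw [tsum_mul_left]

set_option maxHeartbeats 800000 in
lemma core {p x z0 z1 δ : ℝ} (hp : 0 < p) (hp1 : p < 1) (hx : 0 < x) (hz0 : 0 < z0) (hz1 : 0 < z1)
    (h1 : 1 < x * z0) (h2 : x * z0 * p < 1)
    (hδ : ((∀ k : ℤ, x * z1 * p ^ k ≠ 1) ∧ δ = 0) ∨ (x * z1 = 1 ∧ δ = 1)) :
    jt p (x * z0 * z1) * Kt p (x * z0)⁻¹ (x * z1) =
      jt p z0 * Bt p z1 (x * z1) - jt p z1 * Bt p z0 (x * z0) + δ * dj p z0 := by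
  obtain ⟨h, h00, hs, hB⟩ := Bt_expand hp hp1 hx hz0 h1 h2
  have hxz1 : 0 < x * z1 := by positivity
  have hxz0 : 0 < x * z0 := by positivity
  set g : ℤ → ℝ := fun n => (1 - x * z1 * p ^ n)⁻¹ with hg
  obtain ⟨C, hC⟩ := den_bdd hp hp1 hxz1
  have hSK : Summable (fun n : ℤ => ((x * z0)⁻¹) ^ n * g n) := by
    refine summable_Kt hp hp1 ?_ (inv_lt_one_of_one_lt₀ h1) hxz1
    rw [lt_inv_comm₀ hp hxz0, lt_inv_comm₀ hxz0 hp, ← one_div, lt_div_iff₀ hxz0]; linarith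
  have hST : Summable (te p (x * z0 * z1)) := summable_te hp hp1 (by positivity)
  have hprod := summable_mul_of_summable_norm hST.norm hSK.norm
  have hF1 : ∀ s n : ℤ, te p z0 s * (te p z1 n * (x * z1 * p ^ n) ^ s * g n) =
      te p (x * z0 * z1) (s + n) * (((x * z0)⁻¹) ^ n * g n) := by
    intro s n
    have : te p z0 s * (te p z1 n * (x * z1 * p ^ n) ^ s) =
      te p (x * z0 * z1) (s + n) * ((x * z0)⁻¹) ^ n := by
      rw [te_add hp (by positivity)]
      unfold te
      simp only [mul_zpow, inv_zpow]
      rw [← zpow_mul, mul_comm n s]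
      have := (zpow_pos hz0 n).ne'
      have := (zpow_pos hx n).ne'
      field_simp
    linear_combination g n * this
  have hsum1 : HasSum (fun y : ℤ × ℤ => te p z0 y.1 * (te p z1 y.2 * (x * z1 * p ^ y.2) ^ y.1 * g y.2))
      (jt p (x * z0 * z1) * Kt p (x * z0)⁻¹ (x * z1)) := by
    have h3 := hprod.hasSum
    rw [← tsum_mul_tsum_of_summable_norm hST.norm hSK.norm] at h3
    have h4 := (Equiv.hasSum_iff shear).mpr h3
    refine HS h4 (fun y => ?_) rfl
    obtain ⟨s, n⟩ := y
    exact hF1 s n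
  have hHs : ∀ s : ℤ, Summable (fun n => te p z1 n * (x * z1 * p ^ n) ^ s * g n) := by
    intro s
    have h3 := hsum1.summable.prod_factor s
    exact (summable_mul_left_iff (te_ne hp hz0 s)).mp h3
  set H : ℤ → ℝ := fun s => ∑' n, te p z1 n * (x * z1 * p ^ n) ^ s * g n with hH
  have hstep : ∀ s, H s - H (s + 1) = jt p z1 * (te p x⁻¹ s)⁻¹ - δ := by
    intro s
    have e1 : ∀ n : ℤ, te p z1 n * (x * z1 * p ^ n) ^ s = te p z1 (n + s) * (te p x⁻¹ s)⁻¹ := by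
      intro n
      rw [te_add hp hz1]
      unfold te
      simp only [mul_zpow, inv_zpow]
      rw [← zpow_mul]
      have := (zpow_pos hp (tri s)).ne'
      have := (zpow_pos hx s).ne'
      have h3 : (-1:ℝ)^s ≠ 0 := zpow_ne_zero _ (by norm_num)
      field_simp
    have e2 : HasSum (fun n : ℤ => te p z1 n * (x * z1 * p ^ n) ^ s) (jt p z1 * (te p x⁻¹ s)⁻¹) := by
      simp only [e1]
      refine HasSum.mul_right _ ?_
      exact (Equiv.hasSum_iff (Equiv.addRight s)).mpr (summable_te hp hp1 hz1).hasSum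
    have e3 := (hHs s).hasSum.sub (hHs (s + 1)).hasSum
    rcases hδ with ⟨hn, rfl⟩ | ⟨h1', rfl⟩
    · rw [sub_zero]
      refine e3.unique ?_
      refine HS e2 (fun n => ?_) rfl
      have hw : x * z1 * p ^ n ≠ 0 := by positivity
      rw [zpow_add_one₀ hw]
      have : 1 - x * z1 * p ^ n ≠ 0 := fun h => hn n (by linarith)
      have hgw : (1 - x * z1 * p ^ n) * g n = 1 := mul_inv_cancel₀ this
      linear_combination (te p z1 n * (x * z1 * p ^ n) ^ s) * hgw
    · have e4 := e2.sub (hasSum_ite_eq (0:ℤ) (1:ℝ))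
      refine e3.unique ?_
      refine HS e4 (fun n => ?_) rfl
      have hw : x * z1 * p ^ n ≠ 0 := by positivity
      rw [zpow_add_one₀ hw]
      by_cases hn : n = 0
      · subst hn; simp [hg, h1', te_zero]
      · rw [if_neg hn, sub_zero]
        have : 1 - x * z1 * p ^ n ≠ 0 := by
          rw [h1', one_mul]
          intro h
          have h5 : p ^ n = 1 := by linarith
          exact hn ((zpow_eq_one_iff_right₀ hp.le hp1.ne).mp h5)
        have hgw : (1 - x * z1 * p ^ n) * g n = 1 := mul_inv_cancel₀ this
        linear_combination (te p z1 n * (x * z1 * p ^ n) ^ s) * hgw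
  have hHval : ∀ s : ℤ, H s = H 0 - jt p z1 * h s + δ * s := by
    intro s
    induction s using Int.induction_on with
    | zero => simp [h00]
    | succ n ih => 
      have := hstep n; rw [hs n]; push_cast at *; linear_combination ih - this
    | pred n ih => 
      have := hstep (-n - 1)
      have h7 := hs (-n - 1)
      rw [sub_add_cancel] at this h7
      push_cast at *; linear_combination ih + this - jt p z1 * h7
  have hfin := hsum1.prod_fiberwise (fun s => (hsum1.summable.prod_factor s).hasSum)
  have e5 : HasSum (fun s => te p z0 s * H s) (jt p z0 * H 0 - jt p z1 * Bt p z0 (x * z0) + δ * dj p z0) := by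
    have a1 := (summable_te hp hp1 hz0).hasSum.mul_right (H 0)
    have a2 := hB.mul_left (jt p z1)
    have a3 := (summable_k_te hp hp1 hz0).hasSum.mul_left δ
    refine HS ((a1.sub a2).add a3) (fun s => ?_) rfl
    rw [hHval s]; ring
  have h8 : H 0 = Bt p z1 (x * z1) := by simp [hH, Bt, hg]
  rw [← h8]
  refine hfin.unique ?_
  refine HS e5 (fun s => ?_) rfl
  simp only [hH]
  rw [tsum_mul_left]
end PartP2

section PartP3
open Filter Topology

/-- finite q-factorial -/
noncomputable def qf (p : ℝ) (n : ℕ) : ℝ := ∏ i ∈ Finset.range n, (1 - p ^ (i + 1))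

/-- infinite product `(zp;p)_∞` -/
noncomputable def XX (p z : ℝ) : ℝ := ∏' i : ℕ, (1 - z * p ^ (i + 1))

lemma XX_tendsto {p : ℝ} (hp : 0 < p) (hp1 : p < 1) (z : ℝ) :
    Tendsto (fun n : ℕ => ∏ i ∈ Finset.range n, (1 - z * p ^ (i + 1))) atTop (𝓝 (XX p z)) := by
  have h : Multipliable (fun i : ℕ => 1 + (-(z * p ^ (i + 1)))) := by
    apply Real.multipliable_one_add_of_summable
    have : Summable (fun i : ℕ => p ^ i) := summable_geometric_of_lt_one hp.le hp1
    have h2 := (this.mul_left (-(z * p)))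
    refine h2.congr fun i => ?_
    ring
  have := h.hasProd.tendsto_prod_nat
  simpa [XX, sub_eq_add_neg] using this

lemma qf_pos {p : ℝ} (hp : 0 < p) (hp1 : p < 1) (n : ℕ) : 0 < qf p n :=
  Finset.prod_pos fun i _ => sub_pos.2 (pow_lt_one₀ hp.le hp1 (by omega))

lemma qf_succ (p : ℝ) (n : ℕ) : qf p (n + 1) = qf p n * (1 - p ^ (n + 1)) := by
  simp [qf, Finset.prod_range_succ]

lemma qf_anti {p : ℝ} (hp : 0 < p) (hp1 : p < 1) : Antitone (qf p) := by
  apply antitone_nat_of_succ_le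
  intro n
  rw [qf_succ]
  have := qf_pos hp hp1 n
  have : 0 < p ^ (n + 1) := by positivity
  nlinarith

lemma qf_tendsto {p : ℝ} (hp : 0 < p) (hp1 : p < 1) : Tendsto (qf p) atTop (𝓝 (XX p 1)) := by
  simpa [qf] using! XX_tendsto hp hp1 1

lemma XX_le_qf {p : ℝ} (hp : 0 < p) (hp1 : p < 1) (n : ℕ) : XX p 1 ≤ qf p n :=
  (qf_anti hp hp1).le_of_tendsto (qf_tendsto hp hp1) n

lemma qf_le_one {p : ℝ} (hp : 0 < p) (hp1 : p < 1) (n : ℕ) : qf p n ≤ 1 := by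
  have := qf_anti hp hp1 (Nat.zero_le n)
  simpa [qf] using this

lemma XX_pos {p : ℝ} (hp : 0 < p) (hp1 : p < 1) {z : ℝ} (hz : z * p < 1) (hz0 : 0 < z) : 0 < XX p z := by
  have hs : Summable (fun i : ℕ => p ^ i) := summable_geometric_of_lt_one hp.le hp1
  have h2 := (hs.mul_left (-(z * p)))
  have hf : ∀ i : ℕ, 0 < 1 - z * p ^ (i+1) := fun i => by
    have : p ^ i ≤ 1 := pow_le_one₀ hp.le hp1.le
    have : 0 < z * p := by positivity
    have : z * p ^ (i+1) = z * p * p ^ i := by ring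
    nlinarith
  have hne : XX p z ≠ 0 := by
    have := tprod_one_add_ne_zero_of_summable (f := fun i : ℕ => -(z * p ^ (i + 1)))
      (fun i => by have := hf i; intro h; linarith)
      (by have := h2.norm
          refine this.congr fun i => ?_
          congr 1; ring)
    simpa [XX, sub_eq_add_neg] using this
  have hge : 0 ≤ XX p z := ge_of_tendsto' (XX_tendsto hp hp1 z) fun n =>
    (Finset.prod_pos fun i _ => hf i).le
  exact lt_of_le_of_ne hge hne.symm

/-- reciprocal q-factorial on the integers -/
noncomputable def Rq (p : ℝ) (m : ℤ) : ℝ := if m < 0 then 0 else (qf p m.toNat)⁻¹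

lemma Rq_pred {p : ℝ} (hp : 0 < p) (hp1 : p < 1) (m : ℤ) : Rq p (m - 1) = (1 - p ^ m) * Rq p m := by
  unfold Rq
  rcases lt_trichotomy m 0 with h | h | h
  · simp [h, show m - 1 < 0 by omega]
  · subst h; simp
  · obtain ⟨n, rfl⟩ : ∃ n : ℕ, m = n + 1 := ⟨(m - 1).toNat, by omega⟩
    have h1 : ¬ ((n : ℤ) + 1 - 1 < 0) := by omega
    have h2 : ¬ ((n : ℤ) + 1 < 0) := by omega
    simp only [h1, h2, if_false]
    have e1 : ((n : ℤ) + 1 - 1).toNat = n := by omega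
    have e2 : ((n : ℤ) + 1).toNat = n + 1 := by omega
    rw [e1, e2, qf_succ]
    have := (qf_pos hp hp1 n).ne'
    have h3 : (1 - p ^ (n + 1)) ≠ 0 := (sub_pos.2 (pow_lt_one₀ hp.le hp1 (by omega))).ne'
    have e3 : p ^ ((n : ℤ) + 1) = p ^ (n + 1) := by exact_mod_cast zpow_natCast p (n+1)
    rw [e3]
    field_simp

noncomputable def FF (p z : ℝ) (N : ℕ) : ℝ :=
  (∏ i ∈ Finset.range N, (1 - z * p ^ i)) * ∏ i ∈ Finset.range N, (1 - z⁻¹ * p ^ (i + 1))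

lemma finJTP {p z : ℝ} (hp : 0 < p) (hp1 : p < 1) (hz : 0 < z) (N : ℕ) :
    HasSum (fun k : ℤ => te p z k * (qf p (2 * N) * Rq p (N - k) * Rq p (N + k))) (FF p z N) := by
  induction N with
  | zero =>
    have h := hasSum_single (f := fun k : ℤ => te p z k * (qf p (2 * 0) * Rq p ((0:ℕ) - k) * Rq p ((0:ℕ) + k))) 0 (by
      intro k hk
      simp only [Rq]
      rcases lt_or_gt_of_ne hk with h | h
      · simp [h]
      · simp [h])
    have e : FF p z 0 = te p z 0 * (qf p (2 * 0) * Rq p ((0:ℕ) - 0) * Rq p ((0:ℕ) + 0)) := by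
      simp [FF, te_zero, qf, Rq]
    rw [e]; exact h
  | succ N ih =>
    have h1 := ih.mul_left (1 + p ^ (2 * N + 1))
    have h2 := ((Equiv.addRight (-1 : ℤ)).hasSum_iff.2 ih).mul_left (-(z * p ^ N))
    have h3 := ((Equiv.addRight (1 : ℤ)).hasSum_iff.2 ih).mul_left (-(z⁻¹ * p ^ (N+1)))
    refine HS ((h1.add h2).add h3) ?_ ?_
    · intro k
      simp only [Function.comp, Equiv.coe_addRight]
      have ek : te p z k = -(z * p ^ (k-1)) * te p z (k + -1) := by
        have := te_succ hp hz (k-1)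
        rw [show k - 1 + 1 = k by ring] at this
        rw [this, show k + -1 = k - 1 by ring]; ring
      have ek1 : te p z (k+1) = -(z * p ^ k) * te p z k := by
        have := te_succ hp hz k
        rw [this]; ring
      have q2 : qf p (2 * (N+1)) = qf p (2*N) * (1 - p ^ (2*N+1)) * (1 - p^(2*N+2)) := by
        rw [show 2 * (N+1) = 2 * N + 1 + 1 by ring, qf_succ, qf_succ]
      have a1 := Rq_pred hp hp1 ((N:ℤ) - k + 1)
      have a0 := Rq_pred hp hp1 ((N:ℤ) - k)
      have b1 := Rq_pred hp hp1 ((N:ℤ) + k + 1)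
      have b0 := Rq_pred hp hp1 ((N:ℤ) + k)
      rw [show (N:ℤ) - k + 1 - 1 = N - k by ring] at a1
      rw [show (N:ℤ) + k + 1 - 1 = N + k by ring] at b1
      rw [show (N:ℤ) - (k + -1) = N - k + 1 by ring, show (N:ℤ) + (k + -1) = N + k - 1 by ring,
        show (N:ℤ) - (k + 1) = N - k - 1 by ring, show (N:ℤ) + (k + 1) = N + k + 1 by ring,
        show ((N + 1 : ℕ):ℤ) - k = N - k + 1 by push_cast; ring,
        show ((N + 1 : ℕ):ℤ) + k = N + k + 1 by push_cast; ring]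
      rw [a0, b0, a1, b1, q2]
      have hpn := hp.ne'
      have ea : p ^ ((N:ℤ) - k) = p ^ N * (p ^ k)⁻¹ := by rw [zpow_sub₀ hpn]; rw [zpow_natCast]; rfl
      have eb : p ^ ((N:ℤ) + k) = p ^ N * p ^ k := by rw [zpow_add₀ hpn]; rw [zpow_natCast]
      have ea1 : p ^ ((N:ℤ) - k + 1) = p ^ N * (p ^ k)⁻¹ * p := by rw [zpow_add_one₀ hpn, ea]
      have eb1 : p ^ ((N:ℤ) + k + 1) = p ^ N * p ^ k * p := by rw [zpow_add_one₀ hpn, eb]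
      have et : te p z (k + -1) = -(z⁻¹ * p * (p ^ k)⁻¹) * te p z k := by
        rw [ek, zpow_sub_one₀ hpn]
        have : p ^ k ≠ 0 := (zpow_pos hp k).ne'
        field_simp
      rw [ek1, et, ea, eb, ea1, eb1]
      have hk : p ^ k ≠ 0 := (zpow_pos hp k).ne'
      generalize Rq p ((N:ℤ) - k + 1) = r
      generalize Rq p ((N:ℤ) + k + 1) = s
      generalize te p z k = t
      generalize qf p (2 * N) = w
      rw [show p ^ (2*N+1) = p^N * p^N * p by ring, show p ^ (2*N+2) = p^N * p^N * p * p by ring,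
       show p ^ (N+1) = p^N * p by ring]
      generalize p ^ N = P at *
      generalize p ^ k = K at *
      field_simp
      ring
    · simp only [FF, Finset.prod_range_succ]
      have : z ≠ 0 := hz.ne'
      generalize (∏ i ∈ Finset.range N, (1 - z * p ^ i)) = a
      generalize (∏ i ∈ Finset.range N, (1 - z⁻¹ * p ^ (i + 1))) = b
      field_simp
      ring

lemma Rq_nonneg {p : ℝ} (hp : 0 < p) (hp1 : p < 1) (m : ℤ) : 0 ≤ Rq p m := by
  unfold Rq; split_ifs
  · exact le_rfl
  · exact (inv_pos.2 (qf_pos hp hp1 _)).le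

lemma X1_pos {p : ℝ} (hp : 0 < p) (hp1 : p < 1) : 0 < XX p 1 := XX_pos hp hp1 (by linarith) one_pos

lemma Rq_le {p : ℝ} (hp : 0 < p) (hp1 : p < 1) (m : ℤ) : Rq p m ≤ (XX p 1)⁻¹ := by
  have := X1_pos hp hp1
  unfold Rq; split_ifs
  · positivity
  · exact inv_anti₀ this (XX_le_qf hp hp1 _)

lemma Rq_tendsto {p : ℝ} (hp : 0 < p) (hp1 : p < 1) (k : ℤ) :
    Tendsto (fun N : ℕ => Rq p (N + k)) atTop (𝓝 (XX p 1)⁻¹) := by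
  have h : Tendsto (fun N : ℕ => (qf p ((N:ℤ) + k).toNat)⁻¹) atTop (𝓝 (XX p 1)⁻¹) := by
    apply Tendsto.inv₀ _ (X1_pos hp hp1).ne'
    apply (qf_tendsto hp hp1).comp
    apply tendsto_atTop_mono (f := fun N : ℕ => N - (-k).toNat)
    · intro N; show N - (-k).toNat ≤ _; omega
    · exact tendsto_sub_atTop_nat _
  refine h.congr' ?_
  filter_upwards [eventually_ge_atTop ((-k).toNat)] with N hN
  have : ¬ ((N:ℤ) + k < 0) := by omega
  simp [Rq, this]

/-- Jacobi triple product -/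
theorem jtp {p z : ℝ} (hp : 0 < p) (hp1 : p < 1) (hz : 0 < z) :
    jt p z = XX p 1 * (1 - z) * XX p z * XX p z⁻¹ := by
  have hX := X1_pos hp hp1
  have hF : Tendsto (fun N => FF p z (N+1)) atTop (𝓝 ((1 - z) * XX p z * XX p z⁻¹)) := by
    have h1 := ((XX_tendsto hp hp1 z).const_mul (1 - z)).mul ((XX_tendsto hp hp1 z⁻¹).comp (tendsto_add_atTop_nat 1))
    refine h1.congr fun N => ?_
    simp only [FF, Function.comp]
    rw [Finset.prod_range_succ' (fun i => 1 - z * p ^ i)]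
    ring
  have hF' : Tendsto (fun N => FF p z N) atTop (𝓝 ((1 - z) * XX p z * XX p z⁻¹)) :=
    (tendsto_add_atTop_iff_nat 1).1 hF
  have hD : Tendsto (fun N : ℕ => ∑' k : ℤ, te p z k * (qf p (2 * N) * Rq p (N - k) * Rq p (N + k))) atTop
      (𝓝 (∑' k : ℤ, te p z k * (XX p 1 * (XX p 1)⁻¹ * (XX p 1)⁻¹))) := by
    apply tendsto_tsum_of_dominated_convergence (bound := fun k => |te p z k| * (1 * (XX p 1)⁻¹ * (XX p 1)⁻¹))
    · exact (Summable.congr (summable_abs_te hp hp1 hz) fun k => (abs_te hp hz k).symm).mul_right _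
    · intro k
      apply Tendsto.const_mul
      refine Tendsto.mul (Tendsto.mul ?_ ?_) (Rq_tendsto hp hp1 k)
      · exact (qf_tendsto hp hp1).comp (tendsto_id.const_mul_atTop' (by norm_num))
      · exact (Rq_tendsto hp hp1 (-k))
    · refine Eventually.of_forall fun N k => ?_
      rw [Real.norm_eq_abs, abs_mul]
      gcongr
      rw [abs_of_nonneg (mul_nonneg (mul_nonneg (qf_pos hp hp1 _).le (Rq_nonneg hp hp1 _)) (Rq_nonneg hp hp1 _))]
      have h1 := qf_le_one hp hp1 (2*N)
      have h2 := Rq_le hp hp1 (N - k)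
      have h3 := Rq_le hp hp1 (N + k)
      have := Rq_nonneg hp hp1 (N - k)
      have := Rq_nonneg hp hp1 (N + k)
      have := qf_pos hp hp1 (2*N)
      gcongr
  have hD2 : Tendsto (fun N : ℕ => ∑' k : ℤ, te p z k * (qf p (2 * N) * Rq p (N - k) * Rq p (N + k))) atTop
      (𝓝 ((1 - z) * XX p z * XX p z⁻¹)) := hF'.congr fun N => (finJTP hp hp1 hz N).tsum_eq.symm
  have := tendsto_nhds_unique hD hD2
  rw [tsum_mul_right] at this
  change jt p z * _ = _ at this
  rw [mul_inv_cancel₀ hX.ne', one_mul] at this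
  have h4 : jt p z = jt p z * (XX p 1)⁻¹ * XX p 1 := by field_simp
  rw [h4, this]; ring
end PartP3

section PartP4
open Filter Topology

lemma XX_cont {p : ℝ} (hp : 0 < p) (hp1 : p < 1) (z : ℝ) : ContinuousAt (XX p) z := by
  have h := tendsto_tprod_one_add_of_dominated_convergence (𝓕 := 𝓝 z)
    (f := fun (w : ℝ) (i : ℕ) => -(w * p ^ (i+1))) (g := fun i : ℕ => -(z * p ^ (i+1)))
    (bound := fun i : ℕ => (|z| + 1) * p * p ^ i)
    ((summable_geometric_of_lt_one hp.le hp1).mul_left _)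
    (fun k => ((continuous_id.mul continuous_const).neg).tendsto z)
    (by
      have : ∀ᶠ w in 𝓝 z, |w| < |z| + 1 :=
        (continuous_abs.tendsto z).eventually (gt_mem_nhds (by linarith))
      filter_upwards [this] with w hw k
      rw [norm_neg, norm_mul, Real.norm_eq_abs, Real.norm_eq_abs, abs_of_pos (pow_pos hp _), pow_succ']
      have : 0 < p * p ^ k := by positivity
      nlinarith)
  have e : XX p = fun w => ∏' k : ℕ, (1 + -(w * p ^ (k+1))) := by
    ext w; simp [XX, sub_eq_add_neg]
  rw [ContinuousAt, e]; exact h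

lemma jt_cont {p z : ℝ} (hp : 0 < p) (hp1 : p < 1) (hz : 0 < z) : ContinuousAt (jt p) z := by
  have h : ContinuousAt (fun z => XX p 1 * (1 - z) * XX p z * XX p z⁻¹) z := by
    refine ContinuousAt.mul (ContinuousAt.mul (by fun_prop) (XX_cont hp hp1 z)) ?_
    exact ContinuousAt.comp (g := XX p) (f := fun z => z⁻¹) (XX_cont hp hp1 _) (continuousAt_inv₀ hz.ne')
  refine h.congr ?_
  filter_upwards [lt_mem_nhds hz] with w hw
  exact (jtp hp hp1 hw).symm

noncomputable def J3 (p : ℝ) : ℝ := XX p 1 ^ 3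

lemma J3_pos {p : ℝ} (hp : 0 < p) (hp1 : p < 1) : 0 < J3 p := pow_pos (X1_pos hp hp1) 3

def NotPow (p y : ℝ) : Prop := ∀ k : ℤ, y * p ^ k ≠ 1

lemma hasSum_geo_int {a : ℝ} (ha0 : 0 < a) (ha1 : a < 1) :
    HasSum (fun n : ℤ => a ^ n * (if 0 ≤ n then 1 else 0)) (1 - a)⁻¹ := by
  have h1 : HasSum (fun n : ℕ => a ^ (n:ℤ) * (if 0 ≤ (n:ℤ) then (1:ℝ) else 0)) (1 - a)⁻¹ := by
    simpa using hasSum_geometric_of_lt_one ha0.le ha1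
  have h2 : HasSum (fun n : ℕ => a ^ (-((n:ℤ)+1)) * (if 0 ≤ (-((n:ℤ)+1)) then (1:ℝ) else 0)) 0 := by
    refine HS hasSum_zero (fun n => ?_) rfl
    rw [if_neg (by omega), mul_zero]
  have h3 := HasSum.of_nat_of_neg_add_one (f := fun n : ℤ => a ^ n * (if 0 ≤ n then (1:ℝ) else 0)) h1 h2
  rw [add_zero] at h3
  exact h3

lemma Kt_lim {p b : ℝ} (hp : 0 < p) (hp1 : p < 1) (hb : 0 < b) (hnb : NotPow p b) :
    Tendsto (fun a => (1 - a) * Kt p a b) (𝓝[<] 1) (𝓝 1) := by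
  obtain ⟨C1, h1⟩ := den_bdd hp hp1 hb
  obtain ⟨C2, h2⟩ := den_bdd hp hp1 (inv_pos.mpr hb)
  have hC1 : 0 ≤ C1 := (abs_nonneg _).trans (h1 0)
  have hC2 : 0 ≤ C2 := (abs_nonneg _).trans (h2 0)
  set s := (1 + p) / 2 with hs
  have hs0 : 0 < s := by positivity
  have hs1 : s < 1 := by rw [hs]; linarith
  have hps : p < s := by rw [hs]; linarith
  let bd : ℤ → ℝ := fun n => s ^ n.natAbs * (b * C1 + b⁻¹ * C2)
  have hbd : Summable bd := by
    refine Summable.mul_right _ ?_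
    refine Summable.of_nat_of_neg ?_ ?_ <;>
    simpa using summable_geometric_of_lt_one hs0.le hs1
  have hreg : ∀ᶠ a in 𝓝[<] (1:ℝ), p / s < a ∧ a < 1 := by
    have : p / s < 1 := by rw [div_lt_one hs0]; exact hps
    exact Ioo_mem_nhdsLT this
  have key : ∀ a, p / s < a → a < 1 → |(1 - a) * Kt p a b - 1| ≤ (1 - a) * ∑' n, bd n := by
    intro a ha ha1
    have ha0 : 0 < a := lt_trans (by positivity) ha
    have hpa : p < a := by
      have : p < p / s := by rw [lt_div_iff₀ hs0]; nlinarith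
      linarith
    have hpas : p / a ≤ s := by
      rw [div_le_iff₀ ha0]; rw [div_lt_iff₀ hs0] at ha; linarith
    have hK := (summable_Kt hp hp1 hpa ha1 hb).hasSum
    have hd := hK.sub (hasSum_geo_int ha0 ha1)
    have hle : ∀ n : ℤ, ‖a ^ n * (1 - b * p ^ n)⁻¹ - a ^ n * (if 0 ≤ n then 1 else 0)‖ ≤ bd n := by
      intro n
      obtain ⟨m, rfl | rfl⟩ := n.eq_nat_or_neg
      · rw [if_pos (by omega), ← mul_sub, Real.norm_eq_abs, abs_mul]
        have e : (1 - b * p ^ (m:ℤ))⁻¹ - 1 = b * p ^ m * (1 - b * p ^ (m:ℤ))⁻¹ := by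
          have : 1 - b * p ^ (m:ℤ) ≠ 0 := fun h => hnb m (by linarith)
          rw [← zpow_natCast]
          field_simp; ring
        rw [e, abs_mul, abs_of_pos (by positivity), abs_of_pos (by positivity)]
        simp only [bd, Int.natAbs_natCast]
        have l1 : a ^ (m:ℤ) ≤ 1 := by rw [zpow_natCast]; exact pow_le_one₀ ha0.le ha1.le
        have l2 : p ^ m ≤ s ^ m := by gcongr
        have l3 := h1 m
        calc a ^ (m:ℤ) * (b * p ^ m * |(1 - b * p ^ (m:ℤ))⁻¹|) ≤ 1 * (b * s ^ m * C1) := by gcongr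
          _ ≤ _ := by
            have : 0 ≤ s ^ m * (b⁻¹ * C2) := by positivity
            nlinarith
      · have e0 : a ^ (-(m:ℤ)) * (if 0 ≤ -(m:ℤ) then 1 else 0) = if m = 0 then (1:ℝ) else 0 := by
          rcases Nat.eq_zero_or_pos m with h | h
          · subst h; simp
          · rw [if_neg (by omega), if_neg (by omega), mul_zero]
        rw [e0]
        rcases Nat.eq_zero_or_pos m with h | h
        · subst h
          have e : (1 - b)⁻¹ - 1 = b * (1 - b)⁻¹ := by
            have : 1 - b ≠ 0 := fun h => hnb 0 (by simp; linarith)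
            field_simp; ring
          have := h1 0
          simp only [zpow_zero, mul_one] at this
          have h5 : 0 ≤ b⁻¹ * C2 := by positivity
          simp [bd, e, abs_mul, abs_of_pos hb]
          rw [abs_inv] at this
          nlinarith
        · rw [if_neg (by omega), sub_zero, den_neg hp hb, Real.norm_eq_abs, abs_mul, abs_mul, abs_neg,
            abs_of_pos (by positivity), abs_of_pos (by positivity), zpow_neg, zpow_natCast]
          simp only [bd, Int.natAbs_neg, Int.natAbs_natCast]
          have l3 := h2 m
          have l4 : (p / a) ^ m ≤ s ^ m := by gcongr
          calc (a ^ m)⁻¹ * (b⁻¹ * p ^ m * |(1 - b⁻¹ * p ^ (m:ℤ))⁻¹|) ≤ (a ^ m)⁻¹ * (b⁻¹ * p ^ m * C2) := by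
                gcongr
            _ = (p / a) ^ m * (b⁻¹ * C2) := by rw [div_pow]; ring
            _ ≤ s ^ m * (b⁻¹ * C2) := by gcongr
            _ ≤ _ := by
              have : 0 ≤ s ^ m * (b * C1) := by positivity
              nlinarith
    have hb2 := tsum_of_norm_bounded hbd.hasSum hle
    rw [hd.tsum_eq, Real.norm_eq_abs] at hb2
    have e1 : (1 - a) * Kt p a b - 1 = (1 - a) * (Kt p a b - (1 - a)⁻¹) := by
      have : 1 - a ≠ 0 := by linarith
      field_simp
    rw [e1, abs_mul, abs_of_pos (by linarith)]
    exact mul_le_mul_of_nonneg_left hb2 (by linarith)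
  rw [tendsto_iff_norm_sub_tendsto_zero]
  refine squeeze_zero' (Eventually.of_forall fun _ => norm_nonneg _) (g := fun a => (1 - a) * ∑' n, bd n) ?_ ?_
  · filter_upwards [hreg] with a ha using key a ha.1 ha.2
  · have : Tendsto (fun a : ℝ => (1 - a) * ∑' n, bd n) (𝓝 1) (𝓝 ((1 - 1) * ∑' n, bd n)) :=
      ((continuous_const.sub continuous_id).mul continuous_const).tendsto 1
    rw [sub_self, zero_mul] at this
    exact this.mono_left nhdsWithin_le_nhds

lemma core_p {p a b : ℝ} (hp : 0 < p) (hp1 : p < 1) (ha : p < a) (ha1 : a < 1) (hb : 0 < b) (hnb : NotPow p b) :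
    jt p a * Kt p a b = jt p (a * b) * Bt p p b := by
  have ha0 : 0 < a := hp.trans ha
  have h := core (p := p) (x := b * p⁻¹) (z0 := p * (a * b)⁻¹) (z1 := p) (δ := 0) hp hp1 (by positivity) (by positivity) hp
    (by rw [show b * p⁻¹ * (p * (a * b)⁻¹) = a⁻¹ by field_simp]; exact (one_lt_inv₀ ha0).2 ha1)
    (by rw [show b * p⁻¹ * (p * (a * b)⁻¹) * p = p / a by field_simp]; rw [div_lt_one ha0]; exact ha)
    (Or.inl ⟨by rw [show b * p⁻¹ * p = b by field_simp]; exact hnb, rfl⟩)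
  rw [show b * p⁻¹ * p = b by field_simp, show b * p⁻¹ * (p * (a * b)⁻¹) = a⁻¹ by field_simp, inv_inv,
    jt_p hp, mul_comm a⁻¹ p, jt_pdiv hp ha0, jt_pdiv hp (by positivity)] at h
  rw [h]; ring

lemma BpJ {p b : ℝ} (hp : 0 < p) (hp1 : p < 1) (hb : 0 < b) (hnb : NotPow p b) :
    Bt p p b * jt p b = J3 p := by
  have hr : ∀ᶠ a in 𝓝[<] (1:ℝ), p < a ∧ a < 1 := Ioo_mem_nhdsLT hp1
  have t1 : Tendsto (fun a => jt p a * Kt p a b) (𝓝[<] 1) (𝓝 (J3 p)) := by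
    have hx : Tendsto (XX p) (𝓝[<] 1) (𝓝 (XX p 1)) := (XX_cont hp hp1 1).tendsto.mono_left nhdsWithin_le_nhds
    have hxi : Tendsto (fun a => XX p a⁻¹) (𝓝[<] 1) (𝓝 (XX p 1)) := by
      have : ContinuousAt (fun z => XX p z⁻¹) 1 :=
        ContinuousAt.comp (g := XX p) (f := fun z => z⁻¹) (XX_cont hp hp1 _) (continuousAt_inv₀ one_ne_zero)
      have := this.tendsto
      rw [inv_one] at this
      exact this.mono_left nhdsWithin_le_nhds
    have := ((hx.mul hxi).const_mul (XX p 1)).mul (Kt_lim hp hp1 hb hnb)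
    rw [show XX p 1 * (XX p 1 * XX p 1) * 1 = J3 p by unfold J3; ring] at this
    refine this.congr' ?_
    filter_upwards [hr] with a ha
    rw [jtp hp hp1 (hp.trans ha.1)]; ring
  have t2 : Tendsto (fun a => jt p (a * b) * Bt p p b) (𝓝[<] 1) (𝓝 (jt p b * Bt p p b)) := by
    apply Tendsto.mul_const
    have : ContinuousAt (fun a => jt p (a * b)) 1 :=
      ContinuousAt.comp (g := jt p) (f := fun a => a * b) (by rw [one_mul]; exact jt_cont hp hp1 hb) (by fun_prop)
    have := this.tendsto
    rw [one_mul] at this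
    exact this.mono_left nhdsWithin_le_nhds
  have t3 := t2.congr' (f₂ := fun a => jt p a * Kt p a b) (by
    filter_upwards [hr] with a ha
    exact (core_p hp hp1 ha.1 ha.2 hb hnb).symm)
  rw [tendsto_nhds_unique t1 t3]; ring

lemma jt_ne {p b : ℝ} (hp : 0 < p) (hp1 : p < 1) (hb : 0 < b) (hnb : NotPow p b) : jt p b ≠ 0 := by
  intro h
  have := BpJ hp hp1 hb hnb
  rw [h, mul_zero] at this
  exact (J3_pos hp hp1).ne this

lemma NotPow.mul {p b : ℝ} (hp : 0 < p) (h : NotPow p b) : NotPow p (p * b) := fun k => by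
  have := h (k+1)
  rw [zpow_add_one₀ hp.ne'] at this
  rwa [show p * b * p ^ k = b * (p ^ k * p) by ring]

lemma NotPow.of_mul {p b : ℝ} (hp : 0 < p) (h : NotPow p (p * b)) : NotPow p b := fun k => by
  have := h (k-1)
  rw [zpow_sub_one₀ hp.ne', show p * b * (p ^ k * p⁻¹) = b * p ^ k * (p * p⁻¹) by ring,
    mul_inv_cancel₀ hp.ne', mul_one] at this
  exact this

lemma NotPow.inv {p b : ℝ} (hp : 0 < p) (h : NotPow p b) : NotPow p b⁻¹ := fun k => by
  have := h (-k)
  rw [zpow_neg] at this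
  intro h2
  apply this
  rw [← inv_inj, mul_inv, inv_inv, inv_one, h2]

lemma region {p y : ℝ} (hp : 0 < p) (hp1 : p < 1) (hy : 0 < y) (hn : NotPow p y) :
    ∃ k : ℤ, 1 < p ^ k * y ∧ p ^ k * y * p < 1 := by
  obtain ⟨k, h1, h2⟩ := exists_mem_Ico_zpow hy ((one_lt_inv₀ hp).2 hp1)
  rw [inv_zpow'] at h1 h2
  refine ⟨k, ?_, ?_⟩
  · refine lt_of_le_of_ne ?_ (fun h => hn k (by rw [h]; ring))
    have := mul_le_mul_of_nonneg_left h1 (zpow_pos hp k).le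
    rwa [← zpow_add₀ hp.ne', add_neg_cancel, zpow_zero] at this
  · have := mul_lt_mul_of_pos_left h2 (zpow_pos hp (k+1))
    rw [← zpow_add₀ hp.ne', add_neg_cancel, zpow_zero, zpow_add_one₀ hp.ne'] at this
    linarith

lemma zind {p : ℝ} (hp : 0 < p) (P : ℝ → Prop) (h : ∀ z, 0 < z → (P (p * z) ↔ P z)) (k : ℤ) :
    ∀ z, 0 < z → P (p ^ k * z) → P z := by
  induction k using Int.induction_on with
  | zero => intro z _ h; simpa using h
  | succ n ih =>
    intro z hz h2
    apply ih z hz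
    rw [← h _ (mul_pos (zpow_pos hp _) hz)]
    rw [zpow_add_one₀ hp.ne'] at h2
    rwa [← mul_assoc, mul_comm p]
  | pred n ih =>
    intro z hz h2
    apply ih z hz
    rw [← h _ (mul_pos (zpow_pos hp _) hz)] at h2
    rw [← mul_assoc, mul_comm p, ← zpow_add_one₀ hp.ne'] at h2
    rwa [sub_add_cancel] at h2

theorem Mrel {p x z0 z1 : ℝ} (hp : 0 < p) (hp1 : p < 1) (hx : 0 < x) (hz0 : 0 < z0) (hz1 : 0 < z1)
    (n0 : NotPow p (x * z0)) (n1 : NotPow p (x * z1)) :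
    jt p z0 * Bt p z1 (x * z1) - jt p z1 * Bt p z0 (x * z0) =
      - (x * z0) * J3 p * jt p (x * z0 * z1) * jt p (z1 * z0⁻¹) * (jt p (x * z0))⁻¹ * (jt p (x * z1))⁻¹ := by
  obtain ⟨k, k1, k2⟩ := region hp hp1 (mul_pos hx hz0) n0
  have main := zind hp (fun z0 => NotPow p (x * z0) → jt p z0 * Bt p z1 (x * z1) - jt p z1 * Bt p z0 (x * z0) =
      - (x * z0) * J3 p * jt p (x * z0 * z1) * jt p (z1 * z0⁻¹) * (jt p (x * z0))⁻¹ * (jt p (x * z1))⁻¹) ?_ k z0 hz0 ?_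
  · exact main n0
  · intro z hz
    have e : x * (p * z) = p * (x * z) := by ring
    rw [e]
    have hxz : 0 < x * z := by positivity
    have e2 : jt p (z1 * (p * z)⁻¹) = - (z1 * (p * z)⁻¹) * jt p (z1 * z⁻¹) := by
      have := jt_shift (p := p) (z := z1 * (p * z)⁻¹) hp (by positivity)
      rw [show p * (z1 * (p * z)⁻¹) = z1 * z⁻¹ by field_simp] at this
      rw [this]; field_simp
    rw [jt_shift hp hz, Bt_shift hp hz, jt_shift hp hxz, e2,
      show p * (x * z) * z1 = p * (x * z * z1) by ring, jt_shift (z := x * z * z1) hp (by positivity)]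
    have imp : NotPow p (p * (x * z)) ↔ NotPow p (x * z) := ⟨fun h => h.of_mul hp, fun h => h.mul hp⟩
    rw [imp]
    refine imp_congr_right fun hn => ?_
    have hj := jt_ne hp hp1 hxz hn
    have e3 : -(p * (x * z)) * J3 p * (-(x * z * z1)⁻¹ * jt p (x * z * z1)) *
          (-(z1 * (p * z)⁻¹) * jt p (z1 * z⁻¹)) * (-(x * z)⁻¹ * jt p (x * z))⁻¹ * (jt p (x * z1))⁻¹ =
        -z⁻¹ * (-(x * z) * J3 p * jt p (x * z * z1) * jt p (z1 * z⁻¹) * (jt p (x * z))⁻¹ * (jt p (x * z1))⁻¹) := by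
      field_simp
    rw [e3]
    have hz' : -z⁻¹ ≠ 0 := neg_ne_zero.2 (inv_ne_zero hz.ne')
    constructor
    · intro h; apply mul_left_cancel₀ hz'; rw [← h]; ring
    · intro h; rw [← h]; ring
  · intro hn
    have hk : 0 < p ^ k * z0 := mul_pos (zpow_pos hp k) hz0
    generalize hw : p ^ k * z0 = w at *
    have ew : p ^ k * (x * z0) = x * w := by rw [← hw]; ring
    rw [ew] at k1 k2
    have hc := core (δ := 0) hp hp1 hx hk hz1 k1 k2 (Or.inl ⟨n1, rfl⟩)
    have ha1 : (x * w)⁻¹ < 1 := inv_lt_one_of_one_lt₀ k1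
    have hxw : 0 < x * w := by positivity
    have hpa : p < (x * w)⁻¹ := by rw [lt_inv_comm₀ hp hxw, lt_inv_comm₀ hxw hp]; rw [← one_div, lt_div_iff₀ hxw]; linarith
    have hxz1 : 0 < x * z1 := by positivity
    have hK := core_p hp hp1 hpa ha1 hxz1 n1
    have hB := BpJ hp hp1 hxz1 n1
    rw [jt_inv hxw, show (x * w)⁻¹ * (x * z1) = z1 * w⁻¹ by field_simp] at hK
    have hj := jt_ne hp hp1 hxw hn
    have hj1 := jt_ne hp hp1 hxz1 n1
    have e1 : Bt p p (x * z1) = J3 p * (jt p (x * z1))⁻¹ := by rw [← hB]; field_simp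
    have e2 : Kt p (x * w)⁻¹ (x * z1) = -(x * w) * (jt p (z1 * w⁻¹) * Bt p p (x * z1)) * (jt p (x * w))⁻¹ := by
      rw [← hK]; field_simp
    rw [e2, e1] at hc
    linear_combination -hc

noncomputable def rho (p u : ℝ) : ℝ := dj p u * (jt p u)⁻¹

lemma Bt_one_one {p : ℝ} (hp : 0 < p) (hp1 : p < 1) : Bt p 1 1 = -1 := by
  have h := Bt_mirror (p := p) (z := 1) (y := 1) hp one_pos
  rw [inv_one, mul_one, show -1 * Bt p (p * p) 1 = - Bt p (p*p) 1 by ring] at h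
  have h1 := (summable_Bt (p := p) (z := 1) (y := 1) hp hp1 one_pos one_pos).hasSum
  have h2 := (summable_Bt (p := p) (z := p * p) (y := 1) hp hp1 (by positivity) one_pos).hasSum
  have h3 := (summable_te (p := p) (z := 1) hp hp1 one_pos).hasSum
  have h4 := (summable_te (p := p) (z := p) hp hp1 hp).hasSum
  have h5 : HasSum (fun k : ℤ => if k = 0 then (2:ℝ) else 0) 2 := hasSum_ite_eq 0 2
  have h6 := (h3.add h4).sub h5
  have h7 := HS (h1.sub h2) (g := fun k : ℤ => te p 1 k + te p p k - if k = 0 then (2:ℝ) else 0) (fun k => by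
    by_cases hk : k = 0
    · subst hk; simp [te_zero]; norm_num
    · have e1 : te p (p * p) k = te p 1 k * (p ^ k * p ^ k) := by
        rw [← mul_zpow, ← te_mul, one_mul]
      have e2 : te p p k = te p 1 k * p ^ k := by rw [← te_mul, one_mul]
      have : 1 - p ^ k ≠ 0 := by
        rcases lt_or_gt_of_ne hk with h | h
        · have := one_lt_zpow_of_neg₀ hp hp1 h; linarith
        · have := zpow_lt_one₀ hp hp1 h; linarith
      rw [e1, e2, if_neg hk, one_mul]
      field_simp
      ring) rfl
  have h8 := h6.unique h7
  have h9 : (∑' k, te p 1 k) = 0 := jt_one p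
  have h10 : (∑' k, te p p k) = 0 := jt_p hp
  rw [h9, h10] at h8
  change _ = Bt p 1 1 - Bt p (p * p) 1 at h8
  linarith

lemma Kt_rho {p a : ℝ} (hp : 0 < p) (hp1 : p < 1) (ha : p < a) (ha1 : a < 1) : Kt p a 1 = - rho p a := by
  have ha0 : 0 < a := hp.trans ha
  have h := core (p := p) (x := 1) (z0 := a⁻¹) (z1 := 1) (δ := 1) hp hp1 one_pos (by positivity) one_pos
    (by rw [one_mul]; exact (one_lt_inv₀ ha0).2 ha1)
    (by rw [one_mul, inv_mul_eq_div, div_lt_one ha0]; exact ha)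
    (Or.inr ⟨by norm_num, rfl⟩)
  have hna : NotPow p a := by
    intro k hk
    rcases lt_trichotomy k 0 with hk' | hk' | hk'
    · have : 1 ≤ p * p ^ k := by
        rw [mul_comm, ← zpow_add_one₀ hp.ne']; exact one_le_zpow_of_nonpos₀ hp hp1.le (by omega)
      have := mul_lt_mul_of_pos_right ha (zpow_pos hp k)
      linarith
    · subst hk'; simp at hk; linarith
    · have := zpow_lt_one₀ hp hp1 hk'
      have h2 := zpow_pos hp k
      nlinarith
  have hj := jt_ne hp hp1 ha0 hna
  simp only [one_mul, mul_one, inv_inv] at h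
  rw [jt_one, Bt_one_one hp hp1, jt_inv ha0, dj_inv hp hp1 ha0] at h
  unfold rho
  have h2 : a⁻¹ ≠ 0 := inv_ne_zero ha0.ne'
  have : jt p a * Kt p a 1 = - dj p a := by
    apply mul_left_cancel₀ h2; linear_combination -h
  rw [eq_comm, neg_eq_iff_eq_neg, ← div_eq_mul_inv, div_eq_iff hj]
  linear_combination this

lemma rho_shift {p u : ℝ} (hp : 0 < p) (hp1 : p < 1) (hu : 0 < u) (hn : NotPow p u) :
    rho p (p * u) = rho p u - 1 := by
  have := jt_ne hp hp1 hu hn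
  unfold rho; rw [dj_shift hp hp1 hu, jt_shift hp hu]; field_simp

lemma rho_inv {p u : ℝ} (hp : 0 < p) (hp1 : p < 1) (hu : 0 < u) (hn : NotPow p u) :
    rho p u⁻¹ = 1 - rho p u := by
  have := jt_ne hp hp1 hu hn
  unfold rho; rw [dj_inv hp hp1 hu, jt_inv hu]; field_simp

theorem Mrel' {p z0 z1 : ℝ} (hp : 0 < p) (hp1 : p < 1) (hz0 : 0 < z0) (hz1 : 0 < z1)
    (n0 : NotPow p (z1⁻¹ * z0)) :
    jt p z0 * Bt p z1 1 - jt p z1 * Bt p z0 (z1⁻¹ * z0) = - dj p z0 - rho p (z1 * z0⁻¹) * jt p z0 := by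
  obtain ⟨k, k1, k2⟩ := region hp hp1 (mul_pos (inv_pos.2 hz1) hz0) n0
  have main := zind hp (fun z0 => NotPow p (z1⁻¹ * z0) →
    jt p z0 * Bt p z1 1 - jt p z1 * Bt p z0 (z1⁻¹ * z0) = - dj p z0 - rho p (z1 * z0⁻¹) * jt p z0) ?_ k z0 hz0 ?_
  · exact main n0
  · intro z hz
    have e : z1⁻¹ * (p * z) = p * (z1⁻¹ * z) := by ring
    rw [e]
    have hxz : 0 < z1⁻¹ * z := by positivity
    have imp : NotPow p (p * (z1⁻¹ * z)) ↔ NotPow p (z1⁻¹ * z) := ⟨fun h => h.of_mul hp, fun h => h.mul hp⟩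
    rw [imp]
    refine imp_congr_right fun hn => ?_
    have e2 : rho p (z1 * (p * z)⁻¹) = rho p (z1 * z⁻¹) + 1 := by
      have hn2 : NotPow p (z1 * (p * z)⁻¹) := by
        have := (hn.mul hp).inv hp
        rwa [show (p * (z1⁻¹ * z))⁻¹ = z1 * (p * z)⁻¹ by field_simp] at this
      have := rho_shift (u := z1 * (p * z)⁻¹) hp hp1 (by positivity) hn2
      rw [show p * (z1 * (p * z)⁻¹) = z1 * z⁻¹ by field_simp] at this
      linarith
    rw [jt_shift hp hz, Bt_shift hp hz, dj_shift hp hp1 hz, e2]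
    have hz' : -z⁻¹ ≠ 0 := neg_ne_zero.2 (inv_ne_zero hz.ne')
    constructor
    · intro h; apply mul_left_cancel₀ hz'; linear_combination h
    · intro h; linear_combination (-z⁻¹) * h
  · intro hn
    have hk : 0 < p ^ k * z0 := mul_pos (zpow_pos hp k) hz0
    generalize hw : p ^ k * z0 = w at *
    have ew : p ^ k * (z1⁻¹ * z0) = z1⁻¹ * w := by rw [← hw]; ring
    rw [ew] at k1 k2
    have hc := core (δ := 1) hp hp1 (inv_pos.2 hz1) hk hz1 k1 k2 (Or.inr ⟨by field_simp, rfl⟩)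
    have ha1 : (z1⁻¹ * w)⁻¹ < 1 := inv_lt_one_of_one_lt₀ k1
    have hxw : 0 < z1⁻¹ * w := by positivity
    have hpa : p < (z1⁻¹ * w)⁻¹ := by rw [lt_inv_comm₀ hp hxw, lt_inv_comm₀ hxw hp]; rw [← one_div, lt_div_iff₀ hxw]; linarith
    rw [show z1⁻¹ * z1 = 1 by field_simp, Kt_rho hp hp1 hpa ha1, show z1⁻¹ * w * z1 = w by field_simp,
      show (z1⁻¹ * w)⁻¹ = z1 * w⁻¹ by field_simp] at hc
    linear_combination -hc
end PartP4

section PartP5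
noncomputable def jj (q : ℝ) (a : ℤ) : ℝ := jt (q ^ 10) (q ^ a)
noncomputable def BB (q : ℝ) (a b : ℤ) : ℝ := Bt (q ^ 10) (q ^ a) (q ^ b)
noncomputable def rr (q : ℝ) (a : ℤ) : ℝ := rho (q ^ 10) (q ^ a)
noncomputable def JJ (q : ℝ) : ℝ := J3 (q ^ 10)

section
variable {q : ℝ} (hq : 0 < q) (hq1 : q < 1)
include hq

lemma q10z (k : ℤ) : (q ^ 10) ^ k = q ^ (10 * k) := by
  rw [show (q ^ 10) = q ^ (10:ℤ) by norm_cast, ← zpow_mul]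

lemma q10mul (k : ℤ) : (q ^ 10) * q ^ k = q ^ (k + 10) := by
  rw [show (q ^ 10) = q ^ (10:ℤ) by norm_cast, ← zpow_add₀ hq.ne', add_comm]

lemma jj_ten (a : ℤ) : jj q (a + 10) = -(q ^ a)⁻¹ * jj q a := by
  unfold jj
  rw [← q10mul hq, jt_shift (by positivity) (by positivity)]

lemma jj_neg (a : ℤ) : jj q (-a) = -(q ^ a)⁻¹ * jj q a := by
  unfold jj
  rw [zpow_neg, jt_inv (by positivity)]

lemma jj_refl (a : ℤ) : jj q (10 - a) = jj q a := by
  rw [show 10 - a = -a + 10 by ring, jj_ten hq, jj_neg hq, zpow_neg]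
  have : q ^ a ≠ 0 := (zpow_pos hq a).ne'
  field_simp

lemma BB_ten (a b : ℤ) : BB q (a + 10) (b + 10) = -(q ^ a)⁻¹ * BB q a b := by
  unfold BB
  rw [← q10mul hq, ← q10mul hq, Bt_shift (by positivity) (by positivity)]

include hq1

lemma np10 {b : ℤ} (hb : ¬ (10 : ℤ) ∣ b) : NotPow (q ^ 10) (q ^ b) := by
  intro k hk
  rw [q10z hq, ← zpow_add₀ hq.ne'] at hk
  have : b + 10 * k = 0 := by
    by_contra h
    exact h ((zpow_eq_one_iff_right₀ hq.le hq1.ne).1 hk)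
  exact hb ⟨-k, by omega⟩

lemma p0 : 0 < q ^ 10 := by positivity
lemma p1 : q ^ 10 < 1 := pow_lt_one₀ hq.le hq1 (by norm_num)

lemma jj_ne {b : ℤ} (hb : ¬ (10 : ℤ) ∣ b) : jj q b ≠ 0 :=
  jt_ne (p0 hq hq1) (p1 hq hq1) (by positivity) (np10 hq hq1 hb)

lemma JJ_pos : 0 < JJ q := J3_pos (p0 hq hq1) (p1 hq hq1)

lemma BB10 {b : ℤ} (hb : ¬ (10 : ℤ) ∣ b) : BB q 10 b * jj q b = JJ q := by
  have := BpJ (p0 hq hq1) (p1 hq hq1) (zpow_pos hq b) (np10 hq hq1 hb)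
  unfold BB jj JJ
  rw [show q ^ (10:ℤ) = q ^ 10 by norm_cast]
  exact this

lemma Mz (z1 b1 z0 b0 : ℤ) (h : b1 - z1 = b0 - z0) (h1 : ¬ (10 : ℤ) ∣ b1) (h0 : ¬ (10 : ℤ) ∣ b0) :
    jj q z0 * BB q z1 b1 - jj q z1 * BB q z0 b0 =
      - q ^ b0 * JJ q * jj q (b0 + z1) * jj q (z1 - z0) * (jj q b0)⁻¹ * (jj q b1)⁻¹ := by
  have hn := hq.ne'
  have e0 : q ^ (b0 - z0) * q ^ z0 = q ^ b0 := by rw [← zpow_add₀ hn]; congr 1; ring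
  have e1 : q ^ (b0 - z0) * q ^ z1 = q ^ b1 := by rw [← zpow_add₀ hn]; congr 1; omega
  have := Mrel (p0 hq hq1) (p1 hq hq1) (zpow_pos hq (b0 - z0)) (zpow_pos hq z0) (zpow_pos hq z1)
    (by rw [e0]; exact np10 hq hq1 h0) (by rw [e1]; exact np10 hq hq1 h1)
  rw [e0, e1, ← zpow_add₀ hn, ← zpow_neg, ← zpow_add₀ hn, ← sub_eq_add_neg] at this
  exact this

lemma Mz' (z1 z0 : ℤ) (h0 : ¬ (10 : ℤ) ∣ z0 - z1) (h2 : ¬ (10 : ℤ) ∣ z0) :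
    jj q z0 * BB q z1 0 - jj q z1 * BB q z0 (z0 - z1) = - (rr q z0 + rr q (z1 - z0)) * jj q z0 := by
  have hn := hq.ne'
  have e : (q ^ z1)⁻¹ * q ^ z0 = q ^ (z0 - z1) := by rw [zpow_sub₀ hn]; field_simp
  have e2 : q ^ z1 * (q ^ z0)⁻¹ = q ^ (z1 - z0) := by rw [zpow_sub₀ hn]; field_simp
  have := Mrel' (p0 hq hq1) (p1 hq hq1) (zpow_pos hq z0) (zpow_pos hq z1) (by rw [e]; exact np10 hq hq1 h0)
  rw [e, e2] at this
  unfold jj BB rr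
  rw [zpow_zero, this]
  have hj := jj_ne hq hq1 h2
  unfold jj at hj
  unfold rho
  field_simp
  ring

lemma rr_ten {a : ℤ} (h : ¬ (10 : ℤ) ∣ a) : rr q (a + 10) = rr q a - 1 := by
  unfold rr
  rw [← q10mul hq, rho_shift (p0 hq hq1) (p1 hq hq1) (by positivity) (np10 hq hq1 h)]

lemma rr_neg {a : ℤ} (h : ¬ (10 : ℤ) ∣ a) : rr q (-a) = 1 - rr q a := by
  unfold rr
  rw [zpow_neg, rho_inv (p0 hq hq1) (p1 hq hq1) (by positivity) (np10 hq hq1 h)]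

lemma rr_refl {a : ℤ} (h : ¬ (10 : ℤ) ∣ a) : rr q (10 - a) = - rr q a := by
  rw [show 10 - a = -a + 10 by ring, rr_ten hq hq1 (by rwa [Int.dvd_neg]), rr_neg hq hq1 h]; ring

/-- Weierstrass relation -/
lemma Wrel (e a0 a1 a2 : ℤ) (h0 : ¬ (10 : ℤ) ∣ e + a0) (h1 : ¬ (10 : ℤ) ∣ e + a1) (h2 : ¬ (10 : ℤ) ∣ e + a2) :
    q ^ (e + a0) * jj q a2 * jj q (e + a2) * jj q (e + a0 + a1) * jj q (a1 - a0) +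
    q ^ (e + a1) * jj q a0 * jj q (e + a0) * jj q (e + a1 + a2) * jj q (a2 - a1) +
    q ^ (e + a2) * jj q a1 * jj q (e + a1) * jj q (e + a2 + a0) * jj q (a0 - a2) = 0 := by
  have m01 := Mz hq hq1 a1 (e + a1) a0 (e + a0) (by ring) h1 h0
  have m12 := Mz hq hq1 a2 (e + a2) a1 (e + a1) (by ring) h2 h1
  have m20 := Mz hq hq1 a0 (e + a0) a2 (e + a2) (by ring) h0 h2
  have j0 := jj_ne hq hq1 h0
  have j1 := jj_ne hq hq1 h1
  have j2 := jj_ne hq hq1 h2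
  have hJ := (JJ_pos hq hq1).ne'
  have s : jj q a2 * (-q ^ (e + a0) * JJ q * jj q (e + a0 + a1) * jj q (a1 - a0) * (jj q (e + a0))⁻¹ * (jj q (e + a1))⁻¹) +
    jj q a0 * (-q ^ (e + a1) * JJ q * jj q (e + a1 + a2) * jj q (a2 - a1) * (jj q (e + a1))⁻¹ * (jj q (e + a2))⁻¹) +
    jj q a1 * (-q ^ (e + a2) * JJ q * jj q (e + a2 + a0) * jj q (a0 - a2) * (jj q (e + a2))⁻¹ * (jj q (e + a0))⁻¹) = 0 := by
    rw [← m01, ← m12, ← m20]; ring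
  generalize jj q (e + a0) = x0 at *
  generalize jj q (e + a1) = x1 at *
  generalize jj q (e + a2) = x2 at *
  apply mul_left_cancel₀ hJ
  rw [mul_zero]
  have : - (x0 * x1 * x2) * 0 = (0:ℝ) := by ring
  rw [← this, ← s]
  field_simp
  ring
end
end PartP5

section PartP6
section
variable {q : ℝ} (hq : 0 < q)
include hq

lemma jr6 : jj q 6 = jj q 4 := by
  have h := jj_refl hq 4; norm_num at h; exact h

lemma jr7 : jj q 7 = jj q 3 := by
  have h := jj_refl hq 3; norm_num at h; exact h

lemma jr8 : jj q 8 = jj q 2 := by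
  have h := jj_refl hq 2; norm_num at h; exact h

lemma jr9 : jj q 9 = jj q 1 := by
  have h := jj_refl hq 1; norm_num at h; exact h

lemma jr11 : jj q 11 = -(q ^ 1)⁻¹ * jj q 1 := by
  have h := jj_ten hq 1; norm_num at h; rw [h]; try ring

lemma jr12 : jj q 12 = -(q ^ 2)⁻¹ * jj q 2 := by
  have h := jj_ten hq 2; norm_num at h; rw [h]; try ring

lemma jr13 : jj q 13 = -(q ^ 3)⁻¹ * jj q 3 := by
  have h := jj_ten hq 3; norm_num at h; rw [h]; try ring

lemma jr14 : jj q 14 = -(q ^ 4)⁻¹ * jj q 4 := by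
  have h := jj_ten hq 4; norm_num at h; rw [h]; try ring

lemma jr15 : jj q 15 = -(q ^ 5)⁻¹ * jj q 5 := by
  have h := jj_ten hq 5; norm_num at h; rw [h]; try ring

lemma jr16 : jj q 16 = -(q ^ 6)⁻¹ * jj q 4 := by
  have h := jj_ten hq 6; norm_num at h; rw [h, jr6 hq]; try ring

lemma jr17 : jj q 17 = -(q ^ 7)⁻¹ * jj q 3 := by
  have h := jj_ten hq 7; norm_num at h; rw [h, jr7 hq]; try ring

lemma jr18 : jj q 18 = -(q ^ 8)⁻¹ * jj q 2 := by
  have h := jj_ten hq 8; norm_num at h; rw [h, jr8 hq]; try ring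

lemma jr19 : jj q 19 = -(q ^ 9)⁻¹ * jj q 1 := by
  have h := jj_ten hq 9; norm_num at h; rw [h, jr9 hq]; try ring

lemma jr21 : jj q 21 = (q ^ 12)⁻¹ * jj q 1 := by
  have h := jj_ten hq 11; norm_num at h; rw [h, jr11 hq]; field_simp

lemma jr23 : jj q 23 = (q ^ 16)⁻¹ * jj q 3 := by
  have h := jj_ten hq 13; norm_num at h; rw [h, jr13 hq]; field_simp

lemma jrm1 : jj q (-1) = -(q ^ 1)⁻¹ * jj q 1 := by
  have h := jj_neg hq 1; norm_num at h; rw [h]; try field_simp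

lemma jrm2 : jj q (-2) = -(q ^ 2)⁻¹ * jj q 2 := by
  have h := jj_neg hq 2; norm_num at h; rw [h]; try field_simp

lemma jrm3 : jj q (-3) = -(q ^ 3)⁻¹ * jj q 3 := by
  have h := jj_neg hq 3; norm_num at h; rw [h]; try field_simp

lemma jrm4 : jj q (-4) = -(q ^ 4)⁻¹ * jj q 4 := by
  have h := jj_neg hq 4; norm_num at h; rw [h]; try field_simp

lemma jrm8 : jj q (-8) = -(q ^ 8)⁻¹ * jj q 2 := by
  have h := jj_neg hq 8; norm_num at h; rw [h, jr8 hq]; try field_simp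

lemma jrm12 : jj q (-12) = (q ^ 14)⁻¹ * jj q 2 := by
  have h := jj_neg hq 12; norm_num at h; rw [h, jr12 hq]; field_simp

end

section
variable {q : ℝ} (hq : 0 < q) (hq1 : q < 1)
include hq hq1

lemma r4 : q ^ 2 * jj q 1 ^ 2 * jj q 2 ^ 2 + jj q 2 * jj q 4 * jj q 5 ^ 2 = jj q 3 ^ 2 * jj q 4 ^ 2 := by
  have h := Wrel hq hq1 1 1 3 4 (by norm_num) (by norm_num) (by norm_num)
  norm_num at h
  simp only [jr6 hq, jr7 hq, jr8 hq, jr9 hq, jrm3 hq, jrm2 hq, jrm1 hq] at h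
  have : q ^ 2 ≠ 0 := by positivity
  apply mul_left_cancel₀ this
  field_simp at h
  linear_combination h

lemma r5 : q * jj q 1 ^ 2 * jj q 2 * jj q 4 + jj q 1 * jj q 3 * jj q 4 ^ 2 = jj q 2 ^ 2 * jj q 3 * jj q 5 := by
  have h := Wrel hq hq1 1 1 2 3 (by norm_num) (by norm_num) (by norm_num)
  norm_num at h
  simp only [jr6 hq, jr7 hq, jr8 hq, jr9 hq, jrm3 hq, jrm2 hq, jrm1 hq] at h
  have : q ^ 2 ≠ 0 := by positivity
  apply mul_left_cancel₀ this
  field_simp at h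
  linear_combination h

lemma r7 : q * jj q 1 * jj q 2 ^ 2 * jj q 3 + jj q 1 * jj q 4 ^ 2 * jj q 5 = jj q 2 * jj q 3 ^ 2 * jj q 4 := by
  have h := Wrel hq hq1 1 1 2 4 (by norm_num) (by norm_num) (by norm_num)
  norm_num at h
  simp only [jr6 hq, jr7 hq, jr8 hq, jr9 hq, jrm3 hq, jrm2 hq, jrm1 hq] at h
  have : q ^ 2 ≠ 0 := by positivity
  apply mul_left_cancel₀ this
  field_simp at h
  linear_combination h
end
end PartP6

section PartP7
noncomputable def Sf (q : ℝ) : ℝ := BB q 10 2 + q * BB q 15 2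
noncomputable def Tf (q : ℝ) : ℝ := q ^ 4 * BB q 17 4
noncomputable def A0f (q : ℝ) : ℝ :=
  6 * (BB q 7 0 + BB q 12 0 - q ^ 3 * BB q 13 6 - q ^ 6 * BB q 18 6)
    - 2 * (BB q 6 0 + BB q 11 0 + q ^ 4 * BB q 14 8 + q ^ 8 * BB q 19 8)
noncomputable def A1f (q : ℝ) : ℝ := -2 * (q * BB q 10 4 + q ^ 3 * BB q 15 4)
noncomputable def A2f (q : ℝ) : ℝ :=
  2 * (BB q 8 2 + q * BB q 13 2 + q ^ 2 * BB q 12 6 + q ^ 5 * BB q 17 6)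
noncomputable def A3f (q : ℝ) : ℝ :=
  6 * (q * BB q 11 4 + q ^ 3 * BB q 16 4 - (BB q 9 2 + q * BB q 14 2))
noncomputable def A4f (q : ℝ) : ℝ := 6 * Sf q
noncomputable def D0f (q : ℝ) : ℝ := 2 * q * JJ q * (jj q 3)⁻¹ * (jj q 4)⁻¹
noncomputable def D1f (q : ℝ) : ℝ := A1f q * (jj q 5)⁻¹
noncomputable def D2f (q : ℝ) : ℝ := 2 * JJ q * (jj q 1)⁻¹ * (jj q 4)⁻¹
noncomputable def D3f (q : ℝ) : ℝ := -2 * JJ q * (jj q 2)⁻¹ * (jj q 3)⁻¹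
noncomputable def D4f (q : ℝ) : ℝ := 2 * Sf q * (jj q 5)⁻¹ + 4 * Tf q * q⁻¹ * (jj q 3)⁻¹

section
variable {q : ℝ} (hq : 0 < q) (hq1 : q < 1)
include hq hq1

lemma jn1 : jj q 1 ≠ 0 := jj_ne hq hq1 (by norm_num)
lemma jn2 : jj q 2 ≠ 0 := jj_ne hq hq1 (by norm_num)
lemma jn3 : jj q 3 ≠ 0 := jj_ne hq hq1 (by norm_num)
lemma jn4 : jj q 4 ≠ 0 := jj_ne hq hq1 (by norm_num)
lemma jn5 : jj q 5 ≠ 0 := jj_ne hq hq1 (by norm_num)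

lemma B10_2 : BB q 10 2 = JJ q * (jj q 2)⁻¹ := by
  rw [← BB10 hq hq1 (b := 2) (by norm_num)]; have := jn2 hq hq1; field_simp
lemma B10_4 : BB q 10 4 = JJ q * (jj q 4)⁻¹ := by
  rw [← BB10 hq hq1 (b := 4) (by norm_num)]; have := jn4 hq hq1; field_simp

lemma Trel : q * jj q 3 * BB q 15 2 - q ^ 3 * jj q 5 * BB q 17 4 = q * JJ q * jj q 1 * (jj q 4)⁻¹ := by
  have h := Mz hq hq1 15 2 17 4 (by norm_num) (by norm_num) (by norm_num)
  norm_num at h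
  simp only [jr17 hq, jr15 hq, jr19 hq, jrm2 hq] at h
  have := jn2 hq hq1
  have := jn4 hq hq1
  linear_combination (norm := (field_simp; ring)) (-q^8) * h

lemma D4_eq : D4f q = (6 * Sf q - 4 * JJ q * (jj q 2)⁻¹ - 4 * q * JJ q * jj q 1 * (jj q 3)⁻¹ * (jj q 4)⁻¹) * (jj q 5)⁻¹ := by
  have h := Trel hq hq1
  have := jn2 hq hq1
  have := jn3 hq hq1
  have := jn4 hq hq1
  have := jn5 hq hq1
  unfold D4f Tf
  have hS : Sf q = JJ q * (jj q 2)⁻¹ + q * BB q 15 2 := by unfold Sf; rw [B10_2 hq hq1]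
  rw [hS]
  linear_combination (norm := (field_simp; ring)) (-4 * (jj q 3)⁻¹ * (jj q 5)⁻¹) * h

theorem E2 : A2f q = jj q 5 * D2f q - 2 * jj q 3 * D1f q + 2 * q * jj q 1 * D3f q := by
  have h1 := Mz hq hq1 8 2 12 6 (by norm_num) (by norm_num) (by norm_num)
  have hb := Mz hq hq1 13 2 15 4 (by norm_num) (by norm_num) (by norm_num)
  have hc := Mz hq hq1 17 6 15 4 (by norm_num) (by norm_num) (by norm_num)
  norm_num at h1 hb hc
  simp only [jr6 hq, jr8 hq, jr12 hq, jr13 hq, jr14 hq, jr15 hq, jr17 hq, jr21 hq, jrm2 hq, jrm4 hq] at h1 hb hc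
  have R4 := r4 hq hq1
  have R5 := r5 hq hq1
  have R7 := r7 hq hq1
  have n1 := jn1 hq hq1
  have n2 := jn2 hq hq1
  have n3 := jn3 hq hq1
  have n4 := jn4 hq hq1
  have n5 := jn5 hq hq1
  unfold A2f D1f D2f D3f A1f
  rw [B10_4 hq hq1]
  generalize jj q 1 = j1 at *
  generalize jj q 2 = j2 at *
  generalize jj q 3 = j3 at *
  generalize jj q 4 = j4 at *
  generalize jj q 5 = j5 at *
  generalize JJ q = J at *
  linear_combination (norm := (field_simp; ring)) (-2 * q^2 * j2⁻¹) * h1 + (-2 * q^6 * j5⁻¹) * hb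
    + (-2 * q^10 * j5⁻¹) * hc
    + (2 * J * j1⁻¹ * (j2⁻¹)^2 * j3⁻¹ * (j4⁻¹)^2 * j5⁻¹) * (j2 * j3 * R4 + 2 * j4 * j5 * R5 - j3 * j4 * R7)

omit hq1 in
lemma BB_mirror (a b : ℤ) : BB q a b = -(q ^ b)⁻¹ * BB q (20 - a) (-b) := by
  unfold BB
  rw [Bt_mirror (p := q ^ 10) (z := q ^ a) (by positivity) (zpow_pos hq b), ← zpow_neg, ← zpow_neg, q10mul hq, q10mul hq,
    show -a + 10 + 10 = 20 - a by ring]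

theorem E3 : A3f q = jj q 5 * D3f q - 2 * jj q 3 * D2f q + 2 * q * jj q 1 * D4f q := by
  rw [D4_eq hq hq1]
  have hd := Mz hq hq1 9 2 5 (-2) (by norm_num) (by norm_num) (by norm_num)
  have he := Mz hq hq1 11 4 5 (-2) (by norm_num) (by norm_num) (by norm_num)
  have hf := Mz hq hq1 14 2 16 4 (by norm_num) (by norm_num) (by norm_num)
  have hm := BB_mirror hq 15 2
  norm_num at hd he hf hm
  simp only [jr6 hq, jr7 hq, jr9 hq, jr11 hq, jr14 hq, jr16 hq, jr18 hq, jrm2 hq] at hd he hf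
  have R4 := r4 hq hq1
  have R5 := r5 hq hq1
  have n1 := jn1 hq hq1
  have n2 := jn2 hq hq1
  have n3 := jn3 hq hq1
  have n4 := jn4 hq hq1
  have n5 := jn5 hq hq1
  unfold A3f D2f D3f Sf
  rw [B10_2 hq hq1]
  generalize jj q 1 = j1 at *
  generalize jj q 2 = j2 at *
  generalize jj q 3 = j3 at *
  generalize jj q 4 = j4 at *
  generalize jj q 5 = j5 at *
  generalize JJ q = J at *
  linear_combination (norm := (field_simp; ring)) (-6 * j5⁻¹) * hd + (6 * q * j5⁻¹) * he
    + (6 * q ^ 7 * j4⁻¹) * hf + (-12 * q ^ 2 * j1 * j5⁻¹) * hm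
    + (J * j1⁻¹ * (j2⁻¹)^2 * j3⁻¹ * (j4⁻¹)^2 * j5⁻¹) * (2 * j1 * j4 * R4 - 4 * j3 * j4 * R5 + 6 * q * j1 * j2 * R5)

theorem E0 : A0f q = jj q 5 * D0f q - 2 * q * jj q 3 * D4f q + 2 * q * jj q 1 * D1f q := by
  rw [D4_eq hq hq1]
  have h7 := Mz' hq hq1 7 5 (by norm_num) (by norm_num)
  have h12 := Mz' hq hq1 12 18 (by norm_num) (by norm_num)
  have h6 := Mz' hq hq1 6 14 (by norm_num) (by norm_num)
  have h11 := Mz' hq hq1 11 15 (by norm_num) (by norm_num)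
  have h84 := Mz' hq hq1 8 4 (by norm_num) (by norm_num)
  have h8m := Mz' hq hq1 8 (-4) (by norm_num) (by norm_num)
  have hg := Mz hq hq1 13 6 5 (-2) (by norm_num) (by norm_num) (by norm_num)
  have hh := Mz hq hq1 19 8 15 4 (by norm_num) (by norm_num) (by norm_num)
  have hi := Mz hq hq1 4 (-4) (-4) (-12) (by norm_num) (by norm_num) (by norm_num)
  have hm := BB_mirror hq 15 2
  have s2 := rr_refl hq hq1 (a := 2) (by norm_num)
  have s4 := rr_refl hq hq1 (a := 4) (by norm_num)
  have s5 := rr_refl hq hq1 (a := 5) (by norm_num)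
  have s18 := rr_ten hq hq1 (a := 8) (by norm_num)
  have sm6 := rr_neg hq hq1 (a := 6) (by norm_num)
  have s14 := rr_ten hq hq1 (a := 4) (by norm_num)
  have sm8 := rr_neg hq hq1 (a := 8) (by norm_num)
  have s15 := rr_ten hq hq1 (a := 5) (by norm_num)
  have sm4 := rr_neg hq hq1 (a := 4) (by norm_num)
  have s12 := rr_ten hq hq1 (a := 2) (by norm_num)
  norm_num at h7 h12 h6 h11 h84 h8m hg hh hi hm s2 s4 s5 s18 sm6 s14 sm8 s15 sm4 s12
  have s5' : rr q 5 = 0 := by linarith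
  simp only [s18, sm6, s14, sm8, s15, sm4, s12, s2, s4, s5'] at h7 h12 h6 h11 h84 h8m
  simp only [jr6 hq, jr7 hq, jr8 hq, jr9 hq, jr11 hq, jr12 hq, jr13 hq, jr14 hq, jr15 hq, jr16 hq, jr18 hq, jr19 hq, jr23 hq, jrm2 hq, jrm4 hq, jrm8 hq, jrm12 hq] at h7 h12 h6 h11 h84 h8m hg hh hi
  have R4 := r4 hq hq1
  have R5 := r5 hq hq1
  have n1 := jn1 hq hq1
  have n2 := jn2 hq hq1
  have n3 := jn3 hq hq1
  have n4 := jn4 hq hq1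
  have n5 := jn5 hq hq1
  unfold A0f D0f D1f A1f Sf
  rw [B10_2 hq hq1, B10_4 hq hq1]
  clear s2 s4 s5 s18 sm6 s14 sm8 s15 sm4 s12 s5'
  generalize jj q 1 = j1 at *
  generalize jj q 2 = j2 at *
  generalize jj q 3 = j3 at *
  generalize jj q 4 = j4 at *
  generalize jj q 5 = j5 at *
  generalize JJ q = J at *
  generalize rr q 2 = ρ2 at *
  generalize rr q 4 = ρ4 at *
  linear_combination (norm := (field_simp; ring)) (6 * j5⁻¹) * h7 + (-6 * q^3 * j5⁻¹) * hg
    + (-6 * q^8 * j2⁻¹) * h12 + (2 * q^4 * j4⁻¹) * h6 + (2 * q^5 * j5⁻¹) * h11 + (2 * q^13 * j5⁻¹) * hh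
    + (12 * q^2 * j3 * j5⁻¹) * hm
    + 2 * ((-j4⁻¹) * h84 + (-q^4 * j4⁻¹) * h8m + (q^4 * j2 * j4⁻¹^2) * hi)
    + (q * J * j2⁻¹ * j3⁻¹ * j4⁻¹^3 * j5⁻¹) * (- 2 * j4 * R4 + 2 * q * j2 * R5)

theorem E1 : A1f q = jj q 5 * D1f q - 2 * jj q 3 * D0f q + 2 * q * jj q 1 * D2f q := by
  have n1 := jn1 hq hq1
  have n3 := jn3 hq hq1
  have n4 := jn4 hq hq1
  have n5 := jn5 hq hq1
  unfold D0f D1f D2f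
  field_simp
  ring

theorem E4 : A4f q = jj q 5 * D4f q - 2 * jj q 3 * D3f q + 2 * jj q 1 * D0f q := by
  rw [D4_eq hq hq1]
  have n1 := jn1 hq hq1
  have n2 := jn2 hq hq1
  have n3 := jn3 hq hq1
  have n4 := jn4 hq hq1
  have n5 := jn5 hq hq1
  unfold A4f D0f D3f
  field_simp
  ring
end
end PartP7

section PartP8
lemma five_split {f : ℤ → ℝ} {s0 s1 s2 s3 s4 : ℝ}
    (h0 : HasSum (fun k : ℤ => f (5 * k + 0)) s0) (h1 : HasSum (fun k : ℤ => f (5 * k + 1)) s1)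
    (h2 : HasSum (fun k : ℤ => f (5 * k + 2)) s2) (h3 : HasSum (fun k : ℤ => f (5 * k + 3)) s3)
    (h4 : HasSum (fun k : ℤ => f (5 * k + 4)) s4) : HasSum f (s0 + s1 + s2 + s3 + s4) := by
  have key : ∀ (a : ℤ) (s : ℝ), 0 ≤ a → a < 5 → HasSum (fun k : ℤ => f (5 * k + a)) s →
      HasSum (fun n : ℤ => if n % 5 = a then f n else 0) s := by
    intro a s ha ha5 h
    have inj : Function.Injective (fun k : ℤ => 5 * k + a) := fun x y hxy => by
      simp only at hxy; omega
    refine (inj.hasSum_iff ?_).1 ?_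
    · intro x hx
      rw [if_neg]
      intro hm
      exact hx ⟨x / 5, by simp only; omega⟩
    · refine HS h (fun k => ?_) rfl
      simp only [Function.comp]
      rw [if_pos (by omega)]
  have := ((((key 0 s0 (by norm_num) (by norm_num) h0).add (key 1 s1 (by norm_num) (by norm_num) h1)).add
    (key 2 s2 (by norm_num) (by norm_num) h2)).add (key 3 s3 (by norm_num) (by norm_num) h3)).add
    (key 4 s4 (by norm_num) (by norm_num) h4)
  refine HS this (fun n => ?_) rfl
  have h5 : n % 5 = 0 ∨ n % 5 = 1 ∨ n % 5 = 2 ∨ n % 5 = 3 ∨ n % 5 = 4 := by omega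
  rcases h5 with h | h | h | h | h <;> simp [h]

noncomputable def phit (q : ℝ) (n : ℤ) : ℝ := (-1) ^ n * q ^ (n * n)
noncomputable def At (q : ℝ) (n : ℤ) : ℝ :=
  phit q n * (6 * q ^ (2 * n) - 2 * q ^ n) * (1 - q ^ (5 * n))⁻¹

section
variable {q : ℝ} (hq : 0 < q) (hq1 : q < 1)
include hq

lemma te_Q (z k : ℤ) : te ((q ^ 5) ^ 10) ((q ^ 5) ^ z) k = (-1) ^ k * q ^ (25 * k * k - 25 * k + 5 * z * k) := by
  unfold te
  rw [show ((q ^ 5) ^ 10) = q ^ (50 : ℤ) by norm_cast; ring, show q ^ 5 = q ^ (5:ℤ) by norm_cast,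
    ← zpow_mul, ← zpow_mul, ← zpow_mul, mul_assoc, ← zpow_add₀ hq.ne']
  congr 2
  have := tri_two k
  linear_combination 25 * this

lemma phit_split (a k : ℤ) :
    phit q (5 * k + a) = (-1) ^ a * q ^ (a * a) * te ((q ^ 5) ^ 10) ((q ^ 5) ^ (5 + 2 * a)) k := by
  rw [te_Q hq]; unfold phit
  rw [show (5 * k + a) * (5 * k + a) = a * a + (25 * k * k - 25 * k + 5 * (5 + 2 * a) * k) by ring,
    zpow_add₀ hq.ne', zpow_add₀ (by norm_num : (-1:ℝ) ≠ 0), zpow_mul]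
  norm_num
  ring

lemma te_Qz (z w k : ℤ) : te ((q ^ 5) ^ 10) ((q ^ 5) ^ z) k * q ^ (5 * w * k) =
    te ((q ^ 5) ^ 10) ((q ^ 5) ^ (z + w)) k := by
  rw [te_Q hq, te_Q hq, mul_assoc, ← zpow_add₀ hq.ne']
  congr 2; ring

lemma inv_sq {x : ℝ} (hx : 0 < x) : (1 - x)⁻¹ = (1 + x) * (1 - x * x)⁻¹ := by
  by_cases h : x = 1
  · subst h; simp
  · have h1 : 1 - x ≠ 0 := fun h' => h (by linarith)
    have h2 : 1 + x ≠ 0 := by positivity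
    rw [show 1 - x * x = (1 - x) * (1 + x) by ring]
    field_simp

lemma At_split (a k : ℤ) : At q (5 * k + a) =
    (-1) ^ a * q ^ (a * a) * (
     6 * q ^ (2 * a) * (te ((q ^ 5) ^ 10) ((q ^ 5) ^ (7 + 2 * a)) k * (1 - (q ^ 5) ^ (2 * a) * ((q ^ 5) ^ 10) ^ k)⁻¹
       + q ^ (5 * a) * (te ((q ^ 5) ^ 10) ((q ^ 5) ^ (12 + 2 * a)) k * (1 - (q ^ 5) ^ (2 * a) * ((q ^ 5) ^ 10) ^ k)⁻¹))
     - 2 * q ^ a * (te ((q ^ 5) ^ 10) ((q ^ 5) ^ (6 + 2 * a)) k * (1 - (q ^ 5) ^ (2 * a) * ((q ^ 5) ^ 10) ^ k)⁻¹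
       + q ^ (5 * a) * (te ((q ^ 5) ^ 10) ((q ^ 5) ^ (11 + 2 * a)) k * (1 - (q ^ 5) ^ (2 * a) * ((q ^ 5) ^ 10) ^ k)⁻¹))) := by
  unfold At
  rw [phit_split hq, inv_sq hq (x := q ^ (5 * (5 * k + a))) (zpow_pos hq _)]
  have e : q ^ (5 * (5 * k + a)) * q ^ (5 * (5 * k + a)) = (q ^ 5) ^ (2 * a) * ((q ^ 5) ^ 10) ^ k := by
    rw [show ((q ^ 5) ^ 10) = q ^ (50 : ℤ) by norm_cast; ring, show q ^ 5 = q ^ (5:ℤ) by norm_cast,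
      ← zpow_mul, ← zpow_mul, ← zpow_add₀ hq.ne', ← zpow_add₀ hq.ne']
    congr 1; ring
  rw [e, show 7 + 2 * a = 5 + 2 * a + 2 by ring, show 12 + 2 * a = 5 + 2 * a + 7 by ring,
    show 6 + 2 * a = 5 + 2 * a + 1 by ring, show 11 + 2 * a = 5 + 2 * a + 6 by ring,
    ← te_Qz hq _ 2, ← te_Qz hq _ 7, ← te_Qz hq _ 1, ← te_Qz hq _ 6]
  rw [show 5 * (5 * k + a) = 5 * 5 * k + 5 * a by ring, show 2 * (5 * k + a) = 5 * 2 * k + 2 * a by ring,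
    show q ^ (5 * 7 * k) = q ^ (5 * 5 * k) * q ^ (5 * 2 * k) by rw [← zpow_add₀ hq.ne']; congr 1; ring,
    show q ^ (5 * 6 * k) = q ^ (5 * 5 * k) * q ^ (5 * 1 * k) by rw [← zpow_add₀ hq.ne']; congr 1; ring,
    zpow_add₀ hq.ne', zpow_add₀ hq.ne', zpow_add₀ hq.ne', show 5 * k = 5 * 1 * k by ring]
  ring

include hq1
lemma At_part (a : ℤ) : HasSum (fun k : ℤ => At q (5 * k + a))
    ((-1) ^ a * q ^ (a * a) * (
     6 * q ^ (2 * a) * (BB (q ^ 5) (7 + 2 * a) (2 * a) + q ^ (5 * a) * BB (q ^ 5) (12 + 2 * a) (2 * a))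
     - 2 * q ^ a * (BB (q ^ 5) (6 + 2 * a) (2 * a) + q ^ (5 * a) * BB (q ^ 5) (11 + 2 * a) (2 * a)))) := by
  have hQ : 0 < q ^ 5 := by positivity
  have hQ1 : q ^ 5 < 1 := pow_lt_one₀ hq.le hq1 (by norm_num)
  have hs : ∀ z : ℤ, HasSum (fun k : ℤ => te ((q ^ 5) ^ 10) ((q ^ 5) ^ z) k * (1 - (q ^ 5) ^ (2 * a) * ((q ^ 5) ^ 10) ^ k)⁻¹)
      (BB (q ^ 5) z (2 * a)) := fun z =>
    (summable_Bt (p0 hQ hQ1) (p1 hQ hQ1) (zpow_pos hQ _) (zpow_pos hQ _)).hasSum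
  refine HS (((((hs (7 + 2 * a)).add ((hs (12 + 2 * a)).mul_left (q ^ (5 * a)))).mul_left (6 * q ^ (2 * a))).sub
    (((hs (6 + 2 * a)).add ((hs (11 + 2 * a)).mul_left (q ^ (5 * a)))).mul_left (2 * q ^ a))).mul_left
      ((-1) ^ a * q ^ (a * a))) (fun k => At_split hq a k) rfl

lemma phi_part (a : ℤ) : HasSum (fun k : ℤ => phit q (5 * k + a)) ((-1) ^ a * q ^ (a * a) * jj (q ^ 5) (5 + 2 * a)) := by
  have hQ : 0 < q ^ 5 := by positivity
  have hQ1 : q ^ 5 < 1 := pow_lt_one₀ hq.le hq1 (by norm_num)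
  refine HS ((summable_te (p0 hQ hQ1) (p1 hQ hQ1) (zpow_pos hQ (5 + 2 * a))).hasSum.mul_left ((-1) ^ a * q ^ (a * a)))
    (fun k => phit_split hq a k) rfl

lemma phi_dissect : HasSum (phit q) (jj (q ^ 5) 5 - 2 * q * jj (q ^ 5) 3 + 2 * q ^ 4 * jj (q ^ 5) 1) := by
  have hQ : 0 < q ^ 5 := by positivity
  refine HS (five_split (phi_part hq hq1 0) (phi_part hq hq1 1) (phi_part hq hq1 2) (phi_part hq hq1 3) (phi_part hq hq1 4))
    (fun n => rfl) ?_
  norm_num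
  rw [jr7 hQ, jr9 hQ, jr11 hQ, jr13 hQ]
  norm_cast
  norm_num
  field_simp
  ring

lemma A_dissect : HasSum (At q) (A0f (q ^ 5) + q * A1f (q ^ 5) + q ^ 2 * A2f (q ^ 5) + q ^ 3 * A3f (q ^ 5)
    + q ^ 4 * A4f (q ^ 5)) := by
  have hQ : 0 < q ^ 5 := by positivity
  refine HS (five_split (At_part hq hq1 0) (At_part hq hq1 1) (At_part hq hq1 2) (At_part hq hq1 3) (At_part hq hq1 4))
    (fun n => rfl) ?_
  have e1 : BB (q ^ 5) 15 8 = (q ^ 15)⁻¹ * BB (q ^ 5) 15 2 := by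
    have h1 := BB_ten hQ 5 (-2)
    have h2 := BB_mirror hQ 15 2
    norm_num at h1 h2
    rw [h1, h2]; field_simp
  have e2 : BB (q ^ 5) 20 8 = (q ^ 40)⁻¹ * BB (q ^ 5) 10 2 := by
    have h1 := BB_ten hQ 10 (-2)
    have h2 := BB_mirror hQ 10 2
    norm_num at h1 h2
    rw [h1, h2]; field_simp
  unfold A0f A1f A2f A3f A4f Sf
  norm_num
  rw [e1, e2]
  norm_cast
  norm_num
  field_simp
  ring

noncomputable def Df (q : ℝ) : ℝ := D0f (q ^ 5) + q * D1f (q ^ 5) + q ^ 2 * D2f (q ^ 5) + q ^ 3 * D3f (q ^ 5)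
    + q ^ 4 * D4f (q ^ 5)

/-- the dissection identity -/
theorem dissection : HasSum (At q) (Df q * ∑' n, phit q n) := by
  have hQ : 0 < q ^ 5 := by positivity
  have hQ1 : q ^ 5 < 1 := pow_lt_one₀ hq.le hq1 (by norm_num)
  refine HS (A_dissect hq hq1) (fun n => rfl) ?_
  rw [(phi_dissect hq hq1).tsum_eq, E0 hQ hQ1, E1 hQ hQ1, E2 hQ hQ1, E3 hQ hQ1, E4 hQ hQ1]
  unfold Df
  ring
end
end PartP8

section PartG
namespace OP
section
variable {q : ℝ} (hq : 0 < q) (hq8 : q < 1/8)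

noncomputable def Pg (q : ℝ) : ℝ := ∑' n, (Pc n : ℝ) * q ^ n
noncomputable def Ug (m : ℕ) (q : ℝ) : ℝ := ∑' n, (Uc m n : ℝ) * q ^ n
noncomputable def fg (m : ℕ) (q : ℝ) : ℝ := ∑' k : ℕ, (-1) ^ k * q ^ ((k+1)^2 + m * (k+1))

include hq hq8

lemma sumP : Summable (fun n => (Pc n : ℝ) * q ^ n) := by
  refine Summable.of_nonneg_of_le (fun n => ?_) (fun n => ?_) (summable_geometric_of_lt_one (r := 1/2) (by norm_num) (by norm_num))
  · have : (0:ℝ) ≤ Pc n := by exact_mod_cast Pc_nonneg n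
    positivity
  · have : (Pc n : ℝ) ≤ 4 ^ n := by exact_mod_cast Pc_le n
    calc (Pc n : ℝ) * q ^ n ≤ 4 ^ n * q ^ n := mul_le_mul_of_nonneg_right this (by positivity)
      _ = (4 * q) ^ n := (mul_pow _ _ _).symm
      _ ≤ (1/2) ^ n := pow_le_pow_left₀ (by positivity) (by linarith) n

lemma Ut_nonneg (m : ℤ) (n : ℕ) : 0 ≤ (Uc m n : ℝ) * q ^ n := by
  have : (0:ℝ) ≤ Uc m n := by exact_mod_cast Uc_nonneg m n
  positivity

lemma Ut_le (m : ℤ) (n : ℕ) : (Uc m n : ℝ) * q ^ n ≤ 2 * ((Pc n : ℝ) * q ^ n) := by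
  have : (Uc m n : ℝ) ≤ 2 * Pc n := by exact_mod_cast Uc_le m n
  rw [← mul_assoc]
  exact mul_le_mul_of_nonneg_right this (by positivity)

lemma sumU (m : ℕ) : Summable (fun n => (Uc m n : ℝ) * q ^ n) :=
  Summable.of_nonneg_of_le (Ut_nonneg hq hq8 m) (Ut_le hq hq8 m) ((sumP hq hq8).mul_left 2)

lemma Ug_nonneg (m : ℕ) : 0 ≤ Ug m q := tsum_nonneg (Ut_nonneg hq hq8 m)

lemma Ug_le (m : ℕ) : Ug m q ≤ 2 * Pg q := by
  unfold Ug Pg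
  rw [← tsum_mul_left]
  exact (sumU hq hq8 m).tsum_le_tsum (Ut_le hq hq8 m) ((sumP hq hq8).mul_left 2)

lemma Ug_rec (m : ℕ) : Ug m q = q ^ (m+1) * (2 * Pg q - Ug (m+2) q) + if m = 0 then 1 else 0 := by
  have h := (sumU hq hq8 m).sum_add_tsum_nat_add (m+1)
  unfold Ug Pg at *
  rw [← h, add_comm]
  congr 1
  · rw [← tsum_mul_left, ← ((sumP hq hq8).mul_left 2).tsum_sub (sumU hq hq8 (m+2)), ← tsum_mul_left]
    apply tsum_congr
    intro n
    rw [← add_assoc, rec_U]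
    push_cast
    ring
  · have : ∀ i ∈ Finset.range (m+1), (Uc m i : ℝ) * q ^ i = (if m = 0 then 1 else 0) * q ^ i := by
      intro i hi
      rw [U_small m i (by have := Finset.mem_range.1 hi; omega)]
      split_ifs <;> simp
    rw [Finset.sum_congr rfl this]
    split_ifs with h0
    · subst h0; simp
    · simp

lemma f_norm (m k : ℕ) : ‖(-1 : ℝ) ^ k * q ^ ((k+1)^2 + m * (k+1))‖ ≤ q ^ k := by
  rw [norm_mul, norm_pow, norm_neg, norm_one, one_pow, one_mul, Real.norm_of_nonneg (by positivity)]
  exact pow_le_pow_of_le_one hq.le (by linarith) (by nlinarith [Nat.zero_le (m * (k+1))])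

lemma sumf (m : ℕ) : Summable (fun k : ℕ => (-1 : ℝ) ^ k * q ^ ((k+1)^2 + m * (k+1))) :=
  Summable.of_norm_bounded (summable_geometric_of_lt_one hq.le (by linarith)) (f_norm hq hq8 m)

lemma f_bd (m : ℕ) : |fg m q| ≤ 2 := by
  have h := tsum_of_norm_bounded (hasSum_geometric_of_lt_one hq.le (by linarith)) (f_norm hq hq8 m)
  refine le_trans h ?_
  rw [inv_le_comm₀ (by linarith) (by norm_num)]
  linarith

lemma f_rec (m : ℕ) : fg m q = q ^ (m+1) * (1 - fg (m+2) q) := by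
  have h := (sumf hq hq8 m).sum_add_tsum_nat_add 1
  have h2 : q ^ (m+1) * fg (m+2) q = - ∑' (i : ℕ), (-1:ℝ) ^ (i + 1) * q ^ ((i + 1 + 1) ^ 2 + m * (i + 1 + 1)) := by
    unfold fg
    rw [← tsum_mul_left, ← tsum_neg]
    apply tsum_congr
    intro k
    ring
  rw [mul_sub, h2]
  unfold fg
  rw [← h]
  simp
  ring

lemma Ug_eq (m : ℕ) : Ug (m+1) q = 2 * Pg q * fg (m+1) q := by
  have hP : 0 ≤ Pg q := by linarith [Ug_nonneg hq hq8 0, Ug_le hq hq8 0]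
  have key : ∀ k m : ℕ, |Ug (m+1) q - 2 * Pg q * fg (m+1) q| ≤ q ^ k * (6 * Pg q) := by
    intro k
    induction k with
    | zero =>
      intro m
      have h1 := Ug_nonneg hq hq8 (m+1)
      have h2 := Ug_le hq hq8 (m+1)
      have h3 := abs_le.1 (f_bd hq hq8 (m+1))
      rw [abs_le]
      constructor <;> nlinarith
    | succ k ih =>
      intro m
      have e : Ug (m+1) q - 2 * Pg q * fg (m+1) q = - q^(m+2) * (Ug (m+2+1) q - 2 * Pg q * fg (m+2+1) q) := by
        rw [Ug_rec hq hq8, f_rec hq hq8 (m+1), if_neg (by omega)]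
        ring_nf
      rw [e, abs_mul, abs_neg, abs_of_pos (by positivity)]
      calc q^(m+2) * |Ug (m+2+1) q - 2 * Pg q * fg (m+2+1) q| ≤ q^1 * (q^k * (6 * Pg q)) := by
            apply mul_le_mul _ (ih _) (abs_nonneg _) (by positivity)
            exact pow_le_pow_of_le_one hq.le (by linarith) (by omega)
        _ = _ := by ring
  have lim : Filter.Tendsto (fun k : ℕ => q ^ k * (6 * Pg q)) Filter.atTop (nhds 0) := by
    simpa using (tendsto_pow_atTop_nhds_zero_of_lt_one hq.le (by linarith)).mul_const (6 * Pg q)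
  have := ge_of_tendsto' lim (fun k => key k m)
  have := abs_nonpos_iff.1 this
  linarith

lemma P_phi : Pg q * ∑' n, phit q n = 1 := by
  have h0 : Ug 0 q = Pg q := by
    unfold Ug Pg
    apply tsum_congr; intro n
    have := U0 n
    rw [← this]; rfl
  have h1 := Ug_rec hq hq8 0
  rw [Ug_eq hq hq8 1, h0, if_pos rfl] at h1
  have h2 := f_rec hq hq8 0
  norm_num at h1 h2
  have hs : Summable (phit q) := (phi_dissect hq (by linarith)).summable
  have h3 := hs.hasSum.nat_add_neg
  have h4 : HasSum (fun n : ℕ => phit q (n+1:ℕ) + phit q (-(n+1:ℕ))) (∑' n, phit q n - phit q 0) := by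
    have := (hasSum_nat_add_iff' 1).2 h3
    simp only [Finset.sum_range_one] at this
    refine HS this (fun i => rfl) ?_
    simp
  have h5 : HasSum (fun n : ℕ => phit q (n+1:ℕ) + phit q (-(n+1:ℕ))) (-2 * fg 0 q) := by
    refine HS ((sumf hq hq8 0).hasSum.mul_left (-2)) (fun n => ?_) rfl
    unfold phit
    have e1 : ((n+1:ℕ):ℤ) * ((n+1:ℕ):ℤ) = (((n+1)^2 : ℕ) : ℤ) := by push_cast; ring
    rw [neg_mul_neg, e1, zpow_natCast, zpow_natCast, zpow_neg, zpow_natCast, zero_mul, add_zero]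
    have e2 : ((-1:ℝ)^(n+1))⁻¹ = (-1)^(n+1) := by
      rw [← inv_pow]; norm_num
    rw [e2]; ring
  have h6 := h5.unique h4
  have h7 : phit q 0 = 1 := by simp [phit]
  rw [h7] at h6
  have h8 : ∑' n, phit q n = 1 - 2 * fg 0 q := by linarith
  rw [h8, h2]; linarith


lemma dbl (a : ℕ) (ha : 1 ≤ a) : Summable (fun t : ℕ => Ug (5*t+a) q) ∧
    HasSum (fun n => ((∑ t ∈ Finset.range (n+1), Uc (5*t+a:ℕ) n : ℤ) : ℝ) * q ^ n) (∑' t : ℕ, Ug (5*t+a) q) := by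
  set F : ℕ × ℕ → ℝ := fun x => (Uc (5*x.1+a:ℕ) x.2 : ℝ) * q ^ x.2 with hF
  have s1 : Summable (fun t : ℕ => Ug (5*t+a) q) := by
    refine Summable.of_nonneg_of_le (fun t => Ug_nonneg hq hq8 _) (fun t => ?_)
      ((summable_geometric_of_lt_one hq.le (by linarith : q < 1)).mul_right (2 * Pg q))
    have hP : 0 ≤ Pg q := by linarith [Ug_nonneg hq hq8 0, Ug_le hq hq8 0]
    have h1 := Ug_nonneg hq hq8 (5*t+a+2)
    rw [Ug_rec hq hq8, if_neg (by omega), add_zero]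
    apply mul_le_mul _ (by linarith) (by linarith [Ug_le hq hq8 (5*t+a+2)]) (by positivity)
    exact pow_le_pow_of_le_one hq.le (by linarith) (by omega)
  have s2 : Summable F := by
    have hF0 : 0 ≤ F := fun x => Ut_nonneg hq hq8 ((5*x.1+a:ℕ):ℤ) x.2
    exact (summable_prod_of_nonneg hF0).2 ⟨fun t => sumU hq hq8 (5*t+a), s1⟩
  refine ⟨s1, ?_⟩
  have h1 := s2.hasSum.prod_fiberwise (fun t => (sumU hq hq8 (5*t+a)).hasSum)
  rw [show (∑' t : ℕ, Ug (5*t+a) q) = ∑' x, F x from h1.tsum_eq]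
  have h2 := (Equiv.prodComm ℕ ℕ).hasSum_iff.2 s2.hasSum
  refine h2.prod_fiberwise (fun n => ?_)
  have := hasSum_sum_of_ne_finset_zero (L := SummationFilter.unconditional ℕ) (f := fun t : ℕ => (Uc (5*t+a:ℕ) n : ℝ) * q ^ n) (s := Finset.range (n+1)) (by
    intro t ht
    have := Finset.mem_range.not.1 ht
    rw [U_small _ _ (by omega), if_neg (by omega)]; simp)
  refine HS this (fun i => rfl) ?_
  push_cast
  rw [Finset.sum_mul]

lemma dbl2 (a : ℕ) (ha : 1 ≤ a) :
    HasSum (fun k : ℕ => (-1 : ℝ) ^ k * q ^ ((k+1)^2 + a * (k+1)) * (1 - q ^ (5 * (k+1)))⁻¹) (∑' t : ℕ, fg (5*t+a) q) := by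
  set F : ℕ × ℕ → ℝ := fun x => (-1 : ℝ) ^ x.2 * q ^ ((x.2+1)^2 + (5*x.1+a) * (x.2+1)) with hF
  have hg := summable_geometric_of_lt_one hq.le (by linarith : q < 1)
  have s2 : Summable F := by
    refine Summable.of_norm_bounded (hg.mul_of_nonneg hg (fun n => by positivity) (fun n => by positivity)) (fun x => ?_)
    rw [hF]
    simp only
    rw [norm_mul, norm_pow, norm_neg, norm_one, one_pow, one_mul, Real.norm_of_nonneg (by positivity), ← pow_add]
    apply pow_le_pow_of_le_one hq.le (by linarith)
    nlinarith [Nat.zero_le (x.1 * x.2), Nat.zero_le (a * (x.2+1)), Nat.zero_le (x.2 ^ 2)]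
  have h1 := s2.hasSum.prod_fiberwise (fun t => (sumf hq hq8 (5*t+a)).hasSum)
  rw [show (∑' t : ℕ, fg (5*t+a) q) = ∑' x, F x from h1.tsum_eq]
  have h2 := (Equiv.prodComm ℕ ℕ).hasSum_iff.2 s2.hasSum
  refine h2.prod_fiberwise (fun k => ?_)
  have := (hasSum_geometric_of_lt_one (r := q ^ (5*(k+1))) (by positivity)
    (pow_lt_one₀ hq.le (by linarith) (by omega))).mul_left ((-1 : ℝ) ^ k * q ^ ((k+1)^2 + a * (k+1)))
  refine HS this (fun t => ?_) rfl
  simp only [hF, Function.comp, Equiv.prodComm_apply, Prod.swap]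
  rw [← pow_mul]
  ring

lemma At_pair (k : ℕ) : At q (k+1:ℕ) + At q (-(k+1:ℕ)) =
    2 * ((-1 : ℝ) ^ k * q ^ ((k+1)^2 + 1 * (k+1)) * (1 - q ^ (5 * (k+1)))⁻¹
     - 3 * ((-1 : ℝ) ^ k * q ^ ((k+1)^2 + 2 * (k+1)) * (1 - q ^ (5 * (k+1)))⁻¹)
     + 3 * ((-1 : ℝ) ^ k * q ^ ((k+1)^2 + 3 * (k+1)) * (1 - q ^ (5 * (k+1)))⁻¹)
     - (-1 : ℝ) ^ k * q ^ ((k+1)^2 + 4 * (k+1)) * (1 - q ^ (5 * (k+1)))⁻¹) := by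
  unfold At phit
  have e1 : ((k+1:ℕ):ℤ) * ((k+1:ℕ):ℤ) = (((k+1)^2 : ℕ) : ℤ) := by push_cast; ring
  have e3 : ((-1:ℝ)^(k+1))⁻¹ = (-1)^(k+1) := by rw [← inv_pow]; norm_num
  rw [neg_mul_neg, e1, mul_neg, mul_neg]
  have f2 : (2:ℤ) * ((k+1:ℕ):ℤ) = ((2*(k+1):ℕ):ℤ) := by push_cast; ring
  have f5 : (5:ℤ) * ((k+1:ℕ):ℤ) = ((5*(k+1):ℕ):ℤ) := by push_cast; ring
  rw [f2, f5]
  simp only [zpow_neg, zpow_natCast]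
  rw [e3]
  have hx1 : q ^ (k+1) < 1 := pow_lt_one₀ hq.le (by linarith) (by omega)
  have hx5 : q ^ (5*(k+1)) < 1 := pow_lt_one₀ hq.le (by linarith) (by omega)
  have hx0 : 0 < q ^ (k+1) := by positivity
  simp only [pow_add _ ((k+1)^2) _]
  simp only [pow_mul' q _ (k+1)] at *
  generalize q ^ (k+1) = x at *
  rw [pow_succ (-1:ℝ) k]
  have : (1 - (x^5)⁻¹)⁻¹ = - x^5 * (1 - x^5)⁻¹ := by
    have : 1 - x^5 ≠ 0 := by linarith
    apply inv_eq_of_mul_eq_one_right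
    field_simp
    ring
  rw [this]
  field_simp
  ring

theorem genD : HasSum (fun n => (dc n : ℝ) * q ^ n) (Df q) := by
  have hd1 := dissection hq (by linarith : q < 1)
  have hp := P_phi hq hq8
  have h3 := hd1.nat_add_neg
  have h4 : HasSum (fun n : ℕ => At q (n+1:ℕ) + At q (-(n+1:ℕ))) (Df q * ∑' n, phit q n) := by
    have := (hasSum_nat_add_iff' 1).2 h3
    simp only [Finset.sum_range_one] at this
    refine HS this (fun i => rfl) ?_
    simp [At]
  have g1 := dbl2 hq hq8 1 (by norm_num)
  have g2 := dbl2 hq hq8 2 (by norm_num)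
  have g3 := dbl2 hq hq8 3 (by norm_num)
  have g4 := dbl2 hq hq8 4 (by norm_num)
  have g := (((g1.sub (g2.mul_left 3)).add (g3.mul_left 3)).sub g4).mul_left 2
  have g' := HS g (fun k => At_pair hq hq8 k) rfl
  have hA := g'.unique h4
  have u1 := (dbl hq hq8 1 (by norm_num)).2
  have u2 := (dbl hq hq8 2 (by norm_num)).2
  have u3 := (dbl hq hq8 3 (by norm_num)).2
  have u4 := (dbl hq hq8 4 (by norm_num)).2
  have u := ((u1.sub (u2.mul_left 3)).add (u3.mul_left 3)).sub u4
  refine HS u (fun n => ?_) ?_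
  · rw [dc_eq]
    simp only [Finset.sum_sub_distrib, Finset.sum_add_distrib, ← Finset.mul_sum]
    push_cast
    ring
  · have e : ∀ a, 1 ≤ a → ∑' t : ℕ, Ug (5*t+a) q = 2 * Pg q * ∑' t : ℕ, fg (5*t+a) q := by
      intro a ha
      rw [← tsum_mul_left]
      apply tsum_congr
      intro t
      have := Ug_eq hq hq8 (5*t+a-1)
      rwa [show 5*t+a-1+1 = 5*t+a by omega] at this
    rw [e 1 (by norm_num), e 2 (by norm_num), e 3 (by norm_num), e 4 (by norm_num)]
    have : Df q = Pg q * (Df q * ∑' n, phit q n) := by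
      rw [mul_left_comm, hp, mul_one]
    rw [this, ← hA]
    ring

end
end OP
end PartG

section PartN1
open Filter Topology

/-- power series representation on (0,1/8) -/
def PRep (f : ℝ → ℝ) (a : ℕ → ℝ) : Prop := ∀ q : ℝ, 0 < q → q < 1/8 → HasSum (fun n => a n * q ^ n) (f q)
def SR (f : ℝ → ℝ) : Prop := ∃ a, PRep f a
def NN (f : ℝ → ℝ) : Prop := ∃ a, (∀ n, 0 ≤ a n) ∧ PRep f a

lemma PRep.congr {f g : ℝ → ℝ} {a} (h : PRep f a) (e : ∀ q, 0 < q → q < 1/8 → g q = f q) : PRep g a := by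
  intro q h0 h1; rw [e q h0 h1]; exact h q h0 h1

lemma NN.congr {f g : ℝ → ℝ} (h : NN f) (e : ∀ q, 0 < q → q < 1/8 → g q = f q) : NN g := by
  obtain ⟨a, h1, h2⟩ := h; exact ⟨a, h1, h2.congr e⟩

lemma SR.congr {f g : ℝ → ℝ} (h : SR f) (e : ∀ q, 0 < q → q < 1/8 → g q = f q) : SR g := by
  obtain ⟨a, h2⟩ := h; exact ⟨a, h2.congr e⟩

lemma NN.sr {f : ℝ → ℝ} (h : NN f) : SR f := by obtain ⟨a, h1, h2⟩ := h; exact ⟨a, h2⟩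

lemma NN.nonneg {f : ℝ → ℝ} (h : NN f) {q : ℝ} (h0 : 0 < q) (h1 : q < 1/8) : 0 ≤ f q := by
  obtain ⟨a, ha, hr⟩ := h
  exact (hr q h0 h1).nonneg (fun n => mul_nonneg (ha n) (by positivity))

lemma PRep.add {f g : ℝ → ℝ} {a b} (h : PRep f a) (h' : PRep g b) : PRep (fun q => f q + g q) (fun n => a n + b n) := by
  intro q h0 h1
  exact HS ((h q h0 h1).add (h' q h0 h1)) (fun n => by ring) rfl

lemma PRep.smul {f : ℝ → ℝ} {a} (c : ℝ) (h : PRep f a) : PRep (fun q => c * f q) (fun n => c * a n) := by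
  intro q h0 h1
  exact HS ((h q h0 h1).mul_left c) (fun n => by ring) rfl

lemma PRep.mul {f g : ℝ → ℝ} {a b} (h : PRep f a) (h' : PRep g b) :
    PRep (fun q => f q * g q) (fun n => ∑ x ∈ Finset.HasAntidiagonal.antidiagonal n, a x.1 * b x.2) := by
  intro q h0 h1
  have s1 := (h q h0 h1).summable.norm
  have s2 := (h' q h0 h1).summable.norm
  have e := tsum_mul_tsum_eq_tsum_sum_antidiagonal_of_summable_norm s1 s2
  rw [(h q h0 h1).tsum_eq, (h' q h0 h1).tsum_eq] at e
  have s3 := (summable_norm_sum_mul_antidiagonal_of_summable_norm s1 s2).of_norm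
  refine HS s3.hasSum (fun n => ?_) e
  rw [Finset.sum_mul]
  apply Finset.sum_congr rfl
  intro x hx
  rw [← Finset.HasAntidiagonal.mem_antidiagonal.1 hx, pow_add]; ring

lemma NN.add {f g : ℝ → ℝ} (h : NN f) (h' : NN g) : NN (fun q => f q + g q) := by
  obtain ⟨a, h1, h2⟩ := h; obtain ⟨b, h3, h4⟩ := h'
  exact ⟨_, fun n => add_nonneg (h1 n) (h3 n), h2.add h4⟩
lemma NN.mul {f g : ℝ → ℝ} (h : NN f) (h' : NN g) : NN (fun q => f q * g q) := by
  obtain ⟨a, h1, h2⟩ := h; obtain ⟨b, h3, h4⟩ := h'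
  exact ⟨_, fun n => Finset.sum_nonneg (fun x _ => mul_nonneg (h1 _) (h3 _)), h2.mul h4⟩
lemma NN.smul {f : ℝ → ℝ} {c : ℝ} (hc : 0 ≤ c) (h : NN f) : NN (fun q => c * f q) := by
  obtain ⟨a, h1, h2⟩ := h
  exact ⟨_, fun n => mul_nonneg hc (h1 n), h2.smul c⟩
lemma SR.add {f g : ℝ → ℝ} (h : SR f) (h' : SR g) : SR (fun q => f q + g q) := by
  obtain ⟨a, h2⟩ := h; obtain ⟨b, h4⟩ := h'
  exact ⟨_, h2.add h4⟩
lemma SR.mul {f g : ℝ → ℝ} (h : SR f) (h' : SR g) : SR (fun q => f q * g q) := by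
  obtain ⟨a, h2⟩ := h; obtain ⟨b, h4⟩ := h'
  exact ⟨_, h2.mul h4⟩
lemma SR.smul {f : ℝ → ℝ} (c : ℝ) (h : SR f) : SR (fun q => c * f q) := by
  obtain ⟨a, h2⟩ := h
  exact ⟨_, h2.smul c⟩

lemma rep_pow (k : ℕ) : PRep (fun q => q ^ k) (fun n => if n = k then 1 else 0) := by
  intro q _ _
  refine HS (hasSum_ite_eq k (q ^ k)) (fun n => ?_) rfl
  beta_reduce
  split_ifs with h
  · rw [h, one_mul]
  · rw [zero_mul]

lemma NN_pow (k : ℕ) : NN (fun q => q ^ k) := ⟨_, fun n => by split_ifs <;> norm_num, rep_pow k⟩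
lemma NN_one : NN (fun _ => 1) := (NN_pow 0).congr (fun q _ _ => by simp)
lemma NN_zero : NN (fun _ => 0) := (NN_one.smul le_rfl).congr (fun q _ _ => by simp)

lemma pl {q : ℝ} (h0 : 0 < q) (h1 : q < 1/8) {a : ℕ} (ha : 1 ≤ a) : 0 < 1 - q ^ a := by
  have := pow_lt_one₀ h0.le (by linarith : q < 1) (by omega : a ≠ 0)
  linarith

/-- sums of signed families with majorant -/
lemma rep_sum {f : ℕ → ℝ → ℝ} {g : ℕ → ℝ → ℝ} {a b : ℕ → ℕ → ℝ} (hf : ∀ i, PRep (f i) (a i)) (hg : ∀ i, PRep (g i) (b i))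
    (hle : ∀ i n, |a i n| ≤ b i n) (hs : ∀ q, 0 < q → q < 1/8 → Summable (fun i => g i q)) :
    PRep (fun q => ∑' i, f i q) (fun n => ∑' i, a i n) := by
  have hb : ∀ i n, 0 ≤ b i n := fun i n => (abs_nonneg _).trans (hle i n)
  intro q h0 h1
  have s2 : Summable (fun x : ℕ × ℕ => b x.1 x.2 * q ^ x.2) := by
    refine (summable_prod_of_nonneg (fun x => mul_nonneg (hb _ _) (by positivity))).2 ⟨fun i => (hg i q h0 h1).summable, ?_⟩
    exact (hs q h0 h1).congr (fun i => (hg i q h0 h1).tsum_eq.symm)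
  have s1 : Summable (fun x : ℕ × ℕ => a x.1 x.2 * q ^ x.2) := by
    refine Summable.of_norm_bounded s2 (fun x => ?_)
    rw [norm_mul, Real.norm_eq_abs, Real.norm_of_nonneg (by positivity : 0 ≤ q ^ x.2)]
    exact mul_le_mul_of_nonneg_right (hle _ _) (by positivity)
  have t1 := s1.hasSum.prod_fiberwise (fun i => hf i q h0 h1)
  beta_reduce
  rw [t1.tsum_eq]
  have s3 := (Equiv.prodComm ℕ ℕ).summable_iff.2 s1
  have t2 := (Equiv.prodComm ℕ ℕ).hasSum_iff.2 s1.hasSum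
  refine t2.prod_fiberwise (fun n => ?_)
  have := (s3.prod_factor n).hasSum
  refine HS this (fun i => rfl) ?_
  exact tsum_mul_right.symm

lemma NN_sum {f : ℕ → ℝ → ℝ} {F : ℝ → ℝ} (hf : ∀ i, NN (f i)) (hs : ∀ q, 0 < q → q < 1/8 → HasSum (fun i => f i q) (F q)) :
    NN F := by
  choose a ha hr using hf
  have := rep_sum hr hr (fun i n => (abs_of_nonneg (ha i n)).le) (fun q h0 h1 => (hs q h0 h1).summable)
  exact ⟨_, fun n => tsum_nonneg (fun i => ha i n), this.congr (fun q h0 h1 => (hs q h0 h1).tsum_eq.symm)⟩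

lemma SR_alt {f : ℕ → ℝ → ℝ} (hf : ∀ i, NN (f i)) (hs : ∀ q, 0 < q → q < 1/8 → Summable (fun i => f i q)) :
    SR (fun q => ∑' i : ℕ, (-1:ℝ) ^ i * f i q) := by
  choose a ha hr using hf
  refine ⟨_, rep_sum (fun i => (hr i).smul ((-1) ^ i)) hr (fun i n => ?_) hs⟩
  rw [abs_mul, abs_pow, abs_neg, abs_one, one_pow, one_mul, abs_of_nonneg (ha i n)]

lemma NN_geo {a : ℕ} (ha : 1 ≤ a) : NN (fun q => (1 - q ^ a)⁻¹) := by
  refine NN_sum (f := fun i q => q ^ (a * i)) (fun i => NN_pow _) (fun q h0 h1 => ?_)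
  have := pl h0 h1 ha
  exact HS (hasSum_geometric_of_lt_one (r := q ^ a) (by positivity) (by linarith)) (fun i => pow_mul _ _ _) rfl

lemma NN.mul_sub {f g F G : ℝ → ℝ} (h1 : NN (fun q => f q - F q)) (h2 : NN (fun q => g q - G q)) (hF : NN F) (hG : NN G) :
    NN (fun q => f q * g q - F q * G q) :=
  (((h1.mul h2).add (h1.mul hG)).add (hF.mul h2)).congr (fun q _ _ => by ring)

lemma NN.of_sub {f F : ℝ → ℝ} (h1 : NN (fun q => f q - F q)) (hF : NN F) : NN f :=
  (h1.add hF).congr (fun q _ _ => by ring)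

lemma NN_fin {a : ℕ} (ha : 1 ≤ a) (m : ℕ) : NN (fun q => (1 - q ^ a)⁻¹ * (1 - q ^ (a * m))) := by
  induction m with
  | zero => exact NN_zero.congr (fun q _ _ => by simp)
  | succ m ih =>
    refine (ih.add (NN_pow (a * m))).congr (fun q h0 h1 => ?_)
    have := pl h0 h1 ha
    field_simp
    ring

lemma NN_fin1 {a : ℕ} (ha : 1 ≤ a) (m : ℕ) : NN (fun q => (1 - q ^ a)⁻¹ * (1 - q ^ (a * (m+1))) - 1) := by
  refine ((NN_fin ha m).mul (NN_pow a)).congr (fun q h0 h1 => ?_)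
  have := pl h0 h1 ha
  field_simp
  ring

lemma NN_prod {g : ℕ → ℝ → ℝ} {F : ℝ → ℝ} (hg : ∀ i, NN (fun q => g i q - 1))
    (hl : ∀ q, 0 < q → q < 1/8 → Tendsto (fun N => ∏ i ∈ Finset.range N, g i q) atTop (𝓝 (F q))) :
    NN (fun q => F q - g 0 q) := by
  have hP : ∀ N, NN (fun q => ∏ i ∈ Finset.range N, g i q) := by
    intro N
    induction N with
    | zero => exact NN_one.congr (fun q _ _ => by simp)
    | succ N ih => exact (ih.mul ((hg N).of_sub NN_one)).congr (fun q _ _ => by rw [Finset.prod_range_succ])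
  have hd : ∀ N, NN (fun q => ∏ i ∈ Finset.range (N+2), g i q - ∏ i ∈ Finset.range (N+1), g i q) := by
    intro N
    refine ((hP (N+1)).mul (hg (N+1))).congr (fun q _ _ => ?_)
    rw [Finset.prod_range_succ _ (N+1)]; ring
  refine NN_sum hd (fun q h0 h1 => ?_)
  rw [hasSum_iff_tendsto_nat_of_nonneg (fun N => (hd N).nonneg h0 h1)]
  have := ((hl q h0 h1).comp (tendsto_add_atTop_nat 1)).sub_const (g 0 q)
  refine this.congr (fun N => ?_)
  have := Finset.sum_range_sub (fun N => ∏ i ∈ Finset.range (N+1), g i q) N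
  simp only [Function.comp]
  rw [this]
  simp

lemma NN_prod1 {g : ℕ → ℝ → ℝ} {F : ℝ → ℝ} (hg : ∀ i, NN (fun q => g i q - 1))
    (hl : ∀ q, 0 < q → q < 1/8 → Tendsto (fun N => ∏ i ∈ Finset.range N, g i q) atTop (𝓝 (F q))) :
    NN (fun q => F q - 1) :=
  ((NN_prod hg hl).add (hg 0)).congr (fun q _ _ => by ring)

lemma NN_geo1 {a : ℕ} (ha : 1 ≤ a) : NN (fun q => (1 - q ^ a)⁻¹ - 1) := by
  refine ((NN_geo ha).mul (NN_pow a)).congr (fun q h0 h1 => ?_)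
  have := pl h0 h1 ha
  field_simp
  ring

lemma NN_pair {u v : ℕ} (hu : 1 ≤ u) (hv : 1 ≤ v) :
    NN (fun q => (1 - q ^ (u+v)) * (1 - q ^ u)⁻¹ * (1 - q ^ v)⁻¹ - (1 - q ^ u)⁻¹) := by
  refine ((NN_geo hv).mul (NN_pow v)).congr (fun q h0 h1 => ?_)
  have := pl h0 h1 hu
  have := pl h0 h1 hv
  field_simp
  ring
end PartN1

section PartN2
open Filter Topology

noncomputable def EE (q : ℝ) (a : ℕ) : ℝ := (1 - q ^ a) * XX (q ^ 10) (q ^ a)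

section
variable {q : ℝ} (h0 : 0 < q) (h1 : q < 1/8)
include h0 h1

lemma EE_t (a : ℕ) : Tendsto (fun N => ∏ i ∈ Finset.range N, (1 - q ^ (10 * i + a))) atTop (𝓝 (EE q a)) := by
  have hq1 : q < 1 := by linarith
  rw [← tendsto_add_atTop_iff_nat 1]
  refine ((XX_tendsto (p0 h0 hq1) (p1 h0 hq1) (q ^ a)).const_mul (1 - q ^ a)).congr (fun N => ?_)
  rw [Finset.prod_range_succ', mul_comm]
  congr 1
  · refine Finset.prod_congr rfl (fun i _ => ?_)
    rw [← pow_mul, ← pow_add]; congr 2; ring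
  · simp

lemma EE_pos {a : ℕ} (ha : 1 ≤ a) : 0 < EE q a := by
  have hq1 : q < 1 := by linarith
  refine mul_pos (pl h0 h1 ha) (XX_pos (p0 h0 hq1) (p1 h0 hq1) ?_ (by positivity))
  rw [← pow_add]
  exact pow_lt_one₀ h0.le hq1 (by omega)

lemma EE_ten (a : ℕ) : EE q a = (1 - q ^ a) * EE q (a + 10) := by
  refine tendsto_nhds_unique ((tendsto_add_atTop_iff_nat 1).2 (EE_t h0 h1 a)) ?_
  refine ((EE_t h0 h1 (a+10)).const_mul (1 - q ^ a)).congr (fun N => ?_)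
  rw [Finset.prod_range_succ', mul_comm]
  congr 1
  · refine Finset.prod_congr rfl (fun i _ => ?_)
    congr 2; ring
  · simp

lemma EE_one : EE q 10 = XX (q ^ 10) 1 := by
  have hq1 : q < 1 := by linarith
  refine tendsto_nhds_unique (EE_t h0 h1 10) ?_
  refine (XX_tendsto (p0 h0 hq1) (p1 h0 hq1) 1).congr (fun N => ?_)
  refine Finset.prod_congr rfl (fun i _ => ?_)
  rw [← pow_mul, one_mul]; congr 2

lemma EE_inv {a b : ℕ} (hab : a + b = 10) : EE q b = XX (q ^ 10) (q ^ a)⁻¹ := by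
  have hq1 : q < 1 := by linarith
  refine tendsto_nhds_unique (EE_t h0 h1 b) ?_
  refine (XX_tendsto (p0 h0 hq1) (p1 h0 hq1) _).congr (fun N => ?_)
  refine Finset.prod_congr rfl (fun i _ => ?_)
  congr 1
  rw [← pow_mul, inv_mul_eq_div, div_eq_iff (by positivity), ← pow_add]; congr 1; omega

lemma jj_EE {a b : ℕ} (hab : a + b = 10) : jj q (a:ℤ) = EE q 10 * EE q a * EE q b := by
  have hq1 : q < 1 := by linarith
  unfold jj
  rw [zpow_natCast, jtp (p0 h0 hq1) (p1 h0 hq1) (by positivity), EE_one h0 h1, EE_inv h0 h1 hab, EE]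
  ring

lemma JJ_EE : JJ q = EE q 10 ^ 3 := by
  rw [EE_one h0 h1]; rfl

end

/-- the quadruple quotient -/
noncomputable def QQ (a a' b b' : ℕ) (q : ℝ) : ℝ := EE q 10 * (EE q a)⁻¹ * (EE q a')⁻¹ * (EE q b)⁻¹ * (EE q b')⁻¹

lemma JJ_quot {q : ℝ} (h0 : 0 < q) (h1 : q < 1/8) {a a' b b' : ℕ} (ha : 1 ≤ a) (ha' : 1 ≤ a') (h : a + a' = 10)
    (hb : 1 ≤ b) (hb' : 1 ≤ b') (h' : b + b' = 10) : JJ q * (jj q (a:ℤ))⁻¹ * (jj q (b:ℤ))⁻¹ = QQ a a' b b' q := by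
  have e1 := EE_pos h0 h1 ha
  have e2 := EE_pos h0 h1 ha'
  have e3 := EE_pos h0 h1 hb
  have e4 := EE_pos h0 h1 hb'
  have e5 := EE_pos h0 h1 (a := 10) (by norm_num)
  rw [JJ_EE h0 h1, jj_EE h0 h1 h, jj_EE h0 h1 h', QQ]
  field_simp

lemma ten_split (q : ℝ) (N : ℕ) : ∏ i ∈ Finset.range N, ((1 - q ^ (20 * i + 10)) * (1 - q ^ (20 * i + 20))) =
    ∏ i ∈ Finset.range (2 * N), (1 - q ^ (10 * i + 10)) := by
  induction N with
  | zero => simp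
  | succ N ih =>
    rw [Finset.prod_range_succ, ih, show 2 * (N + 1) = 2 * N + 1 + 1 by ring, Finset.prod_range_succ, Finset.prod_range_succ,
      show 10 * (2 * N) + 10 = 20 * N + 10 by ring, show 10 * (2 * N + 1) + 10 = 20 * N + 20 by ring]
    ring

lemma NN_pair1 {u v w : ℕ} (hu : 1 ≤ u) (hv : 1 ≤ v) (h : w = u + v) :
    NN (fun q => (1 - q ^ w) * (1 - q ^ u)⁻¹ * (1 - q ^ v)⁻¹ - 1) := by
  subst h
  exact ((NN_pair hu hv).add (NN_geo1 hu)).congr (fun q _ _ => by ring)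

lemma quad {a a' b b' : ℕ} (ha : 1 ≤ a) (ha' : 1 ≤ a') (h : a + a' = 10)
    (hb : 1 ≤ b) (hb' : 1 ≤ b') (h' : b + b' = 10) :
    NN (fun q => QQ a a' b b' q - (1 - q ^ a)⁻¹ * (1 - q ^ b)⁻¹) := by
  set g : ℕ → ℝ → ℝ := fun i q => ((1 - q ^ (20 * i + 10)) * (1 - q ^ (10 * i + a))⁻¹ * (1 - q ^ (10 * i + a'))⁻¹) *
    ((1 - q ^ (20 * i + 20)) * (1 - q ^ (10 * i + b))⁻¹ * (1 - q ^ (10 * i + (b' + 10)))⁻¹) with hg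
  set F : ℝ → ℝ := fun q => EE q 10 * (EE q a)⁻¹ * (EE q a')⁻¹ * (EE q b)⁻¹ * (EE q (b' + 10))⁻¹ with hF
  have k1 : ∀ i, NN (fun q => g i q - 1) := by
    intro i
    have := (NN_pair1 (u := 10 * i + a) (v := 10 * i + a') (w := 20 * i + 10) (by omega) (by omega) (by omega)).mul_sub
      (NN_pair1 (u := 10 * i + b) (v := 10 * i + (b' + 10)) (w := 20 * i + 20) (by omega) (by omega) (by omega)) NN_one NN_one
    exact this.congr (fun q _ _ => by simp only [hg]; ring)
  have k2 : ∀ q, 0 < q → q < 1/8 → Tendsto (fun N => ∏ i ∈ Finset.range N, g i q) atTop (𝓝 (F q)) := by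
    intro q h0 h1
    have t1 := (EE_t h0 h1 10).comp (tendsto_id.const_mul_atTop' (by norm_num : 0 < 2))
    have t2 := (((t1.mul ((EE_t h0 h1 a).inv₀ (EE_pos h0 h1 ha).ne')).mul ((EE_t h0 h1 a').inv₀ (EE_pos h0 h1 ha').ne')).mul
      ((EE_t h0 h1 b).inv₀ (EE_pos h0 h1 hb).ne')).mul ((EE_t h0 h1 (b' + 10)).inv₀ (EE_pos h0 h1 (by omega)).ne')
    refine t2.congr (fun N => ?_)
    simp only [Function.comp, id]
    rw [← ten_split, ← Finset.prod_inv_distrib, ← Finset.prod_inv_distrib, ← Finset.prod_inv_distrib, ← Finset.prod_inv_distrib,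
      ← Finset.prod_mul_distrib, ← Finset.prod_mul_distrib, ← Finset.prod_mul_distrib, ← Finset.prod_mul_distrib]
    refine Finset.prod_congr rfl (fun i _ => ?_)
    simp only [hg]; ring
  have k3 := NN_prod k1 k2
  have k4 : NN (fun q => g 0 q - (1 - q ^ a)⁻¹ * (1 - q ^ b)⁻¹) := by
    have := (NN_pair (u := a) (v := a') (by omega) (by omega)).mul_sub
      (NN_pair (u := b) (v := b' + 10) (by omega) (by omega)) (NN_geo ha) (NN_geo hb)
    refine this.congr (fun q _ _ => ?_)
    simp only [hg]
    rw [h, show b + (b' + 10) = 20 by omega]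
    simp
  have k5 : NN (fun q => F q - (1 - q ^ a)⁻¹ * (1 - q ^ b)⁻¹) := (k3.add k4).congr (fun q _ _ => by ring)
  have k6 := k5.mul_sub (NN_geo1 hb') ((NN_geo ha).mul (NN_geo hb)) NN_one
  refine k6.congr (fun q h0 h1 => ?_)
  simp only [hF, QQ]
  rw [EE_ten h0 h1 b', mul_inv]; ring

lemma NN_D2 : NN (fun q => D2f q - 2 * ((1 - q ^ 1)⁻¹ * (1 - q ^ 4)⁻¹)) := by
  refine ((quad (a := 1) (a' := 9) (b := 4) (b' := 6) (by norm_num) (by norm_num) (by norm_num) (by norm_num) (by norm_num) (by norm_num)).smul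
    (c := 2) (by norm_num)).congr (fun q h0 h1 => ?_)
  rw [← JJ_quot h0 h1 (by norm_num) (by norm_num) (by norm_num) (by norm_num) (by norm_num) (by norm_num), D2f]
  push_cast; ring

lemma NN_D0 : NN (fun q => D0f q - 2 * (q ^ 1 * ((1 - q ^ 3)⁻¹ * (1 - q ^ 4)⁻¹))) := by
  refine (((quad (a := 3) (a' := 7) (b := 4) (b' := 6) (by norm_num) (by norm_num) (by norm_num) (by norm_num) (by norm_num) (by norm_num)).mul (NN_pow 1)).smul
    (c := 2) (by norm_num)).congr (fun q h0 h1 => ?_)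
  rw [← JJ_quot h0 h1 (by norm_num) (by norm_num) (by norm_num) (by norm_num) (by norm_num) (by norm_num), D0f]
  push_cast; ring

lemma SR_D3 : SR D3f := by
  refine ((((quad (a := 2) (a' := 8) (b := 3) (b' := 7) (by norm_num) (by norm_num) (by norm_num) (by norm_num) (by norm_num) (by norm_num)).of_sub
    ((NN_geo (by norm_num)).mul (NN_geo (by norm_num)))).sr).smul (-2)).congr (fun q h0 h1 => ?_)
  rw [← JJ_quot h0 h1 (by norm_num) (by norm_num) (by norm_num) (by norm_num) (by norm_num) (by norm_num), D3f]
  push_cast; ring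

/-- reciprocal triple products -/
lemma NN_K {a b c : ℕ} (ha : 1 ≤ a) (hb : 1 ≤ b) (hc : 1 ≤ c) :
    NN (fun q => (EE q a * EE q b * EE q c)⁻¹ - 1) := by
  refine NN_prod1 (g := fun i q => (1 - q ^ (10 * i + a))⁻¹ * (1 - q ^ (10 * i + b))⁻¹ * (1 - q ^ (10 * i + c))⁻¹) (fun i => ?_) ?_
  · have := ((NN_geo1 (a := 10 * i + a) (by omega)).mul_sub (NN_geo1 (a := 10 * i + b) (by omega)) NN_one NN_one).mul_sub
      (NN_geo1 (a := 10 * i + c) (by omega)) (NN_one.mul NN_one) NN_one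
    exact this.congr (fun q _ _ => by ring)
  · intro q h0 h1
    have := (((EE_t h0 h1 a).mul (EE_t h0 h1 b)).mul (EE_t h0 h1 c)).inv₀
      (mul_pos (mul_pos (EE_pos h0 h1 ha) (EE_pos h0 h1 hb)) (EE_pos h0 h1 hc)).ne'
    refine this.congr (fun N => ?_)
    rw [← Finset.prod_mul_distrib, ← Finset.prod_mul_distrib, ← Finset.prod_inv_distrib]
    refine Finset.prod_congr rfl (fun i _ => ?_)
    rw [mul_inv, mul_inv]

lemma j5_inv {q : ℝ} (h0 : 0 < q) (h1 : q < 1/8) : (jj q 5)⁻¹ = (1 - q ^ 5)⁻¹ * (EE q 10 * EE q 5 * EE q 15)⁻¹ := by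
  have := jj_EE h0 h1 (a := 5) (b := 5) (by norm_num)
  push_cast at this
  rw [this]
  nth_rewrite 2 [EE_ten h0 h1 5]
  rw [← mul_inv]; congr 1; ring

lemma j3_inv {q : ℝ} (h0 : 0 < q) (h1 : q < 1/8) : (jj q 3)⁻¹ =
    ((1 - q ^ 10)⁻¹ * (1 - q ^ 3)⁻¹ * (1 - q ^ 7)⁻¹) * (EE q 20 * EE q 13 * EE q 17)⁻¹ := by
  have := jj_EE h0 h1 (a := 3) (b := 7) (by norm_num)
  push_cast at this
  rw [this, EE_ten h0 h1 10, EE_ten h0 h1 3, EE_ten h0 h1 7, ← mul_inv, ← mul_inv, ← mul_inv]; congr 1; ring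
end PartN2

section PartN2b
open Filter Topology

noncomputable def Lt (e d : ℕ → ℕ) (q : ℝ) (k : ℕ) : ℝ := (-1) ^ k * (q ^ e k * (1 - q ^ d k)⁻¹)
noncomputable def LL (e d : ℕ → ℕ) (q : ℝ) : ℝ := ∑' k, Lt e d q k

lemma bil {q : ℝ} (h0 : 0 < q) (h1 : q < 1/8) {E D : ℤ → ℤ} {e1 d1 e2 d2 : ℕ → ℕ}
    (hs : Summable (fun k : ℤ => (-1:ℝ) ^ k * (q ^ E k * (1 - q ^ D k)⁻¹)))
    (c1 : ∀ n : ℕ, E n = e1 n) (c2 : ∀ n : ℕ, D n = d1 n) (c3 : ∀ n : ℕ, D (-(n + 1)) = - d2 n)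
    (c4 : ∀ n : ℕ, E (-(n + 1)) + d2 n = e2 n) (c5 : ∀ n, 1 ≤ d2 n) :
    Summable (Lt e1 d1 q) ∧ Summable (Lt e2 d2 q) ∧
    ∑' k : ℤ, (-1:ℝ) ^ k * (q ^ E k * (1 - q ^ D k)⁻¹) = LL e1 d1 q + LL e2 d2 q := by
  have a1 : ∀ n : ℕ, (-1:ℝ) ^ (n:ℤ) * (q ^ E n * (1 - q ^ D n)⁻¹) = Lt e1 d1 q n := by
    intro n; rw [c1, c2, Lt]; norm_cast
  have a2 : ∀ n : ℕ, (-1:ℝ) ^ (-((n:ℤ)+1)) * (q ^ E (-(n+1)) * (1 - q ^ D (-(n+1)))⁻¹) = Lt e2 d2 q n := by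
    intro n
    have := pl h0 h1 (c5 n)
    rw [show E (-(n+1)) = e2 n - d2 n by linarith [c4 n], c3, Lt, zpow_sub₀ h0.ne', zpow_neg, zpow_neg]
    simp only [zpow_natCast]
    have hp : 0 < q ^ d2 n := by positivity
    have e : (1 - (q ^ d2 n)⁻¹)⁻¹ = - (q ^ d2 n * (1 - q ^ d2 n)⁻¹) := by
      rw [show 1 - (q ^ d2 n)⁻¹ = - ((1 - q ^ d2 n) * (q ^ d2 n)⁻¹) by field_simp; ring, inv_neg, mul_inv, inv_inv]; ring
    rw [e, show ((-1:ℝ) ^ ((n:ℤ)+1))⁻¹ = - (-1) ^ n by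
      rw [zpow_add₀ (by norm_num), zpow_natCast, mul_inv, ← inv_pow]; norm_num]
    field_simp
  have i1 : Function.Injective (fun n : ℕ => (n:ℤ)) := Nat.cast_injective
  have i2 : Function.Injective (fun n : ℕ => -((n:ℤ)+1)) := fun a b h => by simpa using h
  have s1 := (hs.comp_injective i1).congr (fun n => a1 n)
  have s2 := (hs.comp_injective i2).congr (fun n => a2 n)
  refine ⟨s1, s2, ?_⟩
  exact (HasSum.of_nat_of_neg_add_one (HS s1.hasSum a1 rfl) (HS s2.hasSum a2 rfl)).tsum_eq

lemma BB_term {q : ℝ} (h0 : 0 < q) (a b k : ℤ) : te (q ^ 10) (q ^ a) k * (1 - q ^ b * (q ^ 10) ^ k)⁻¹ =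
    (-1:ℝ) ^ k * (q ^ (5 * k * k - 5 * k + a * k) * (1 - q ^ (b + 10 * k))⁻¹) := by
  rw [te, q10z h0, q10z h0, ← zpow_add₀ h0.ne', ← zpow_mul,
    show 5 * k * k - 5 * k + a * k = 10 * tri k + a * k by linarith [tri_two k], zpow_add₀ h0.ne' (10 * tri k)]
  ring

lemma T_split {q : ℝ} (h0 : 0 < q) (h1 : q < 1/8) :
    Summable (Lt (fun k => 5*k^2+12*k+4) (fun k => 10*k+4) q) ∧ Summable (Lt (fun k => 5*k^2+8*k+3) (fun k => 10*k+6) q) ∧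
    Tf q = LL (fun k => 5*k^2+12*k+4) (fun k => 10*k+4) q + LL (fun k => 5*k^2+8*k+3) (fun k => 10*k+6) q := by
  have hq1 : q < 1 := by linarith
  have s := (summable_Bt (z := q ^ (17:ℤ)) (y := q ^ (4:ℤ)) (p0 h0 hq1) (p1 h0 hq1) (by positivity) (by positivity)).mul_left (q ^ 4)
  have e : ∀ k : ℤ, q ^ 4 * (te (q ^ 10) (q ^ (17:ℤ)) k * (1 - q ^ (4:ℤ) * (q ^ 10) ^ k)⁻¹) =
      (-1:ℝ) ^ k * (q ^ (5 * k * k + 12 * k + 4) * (1 - q ^ (10 * k + 4))⁻¹) := by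
    intro k
    rw [BB_term h0, show 5 * k * k + 12 * k + 4 = 4 + (5 * k * k - 5 * k + 17 * k) by ring, add_comm (4:ℤ) (10 * k), zpow_add₀ h0.ne' 4]
    norm_cast
    ring
  have b := bil h0 h1 (E := fun k => 5 * k * k + 12 * k + 4) (D := fun k => 10 * k + 4) (s.congr (fun k => e k)) (e1 := fun k => 5*k^2+12*k+4) (d1 := fun k => 10*k+4)
    (e2 := fun k => 5*k^2+8*k+3) (d2 := fun k => 10*k+6) (fun n => by push_cast; ring) (fun n => by push_cast; ring)
    (fun n => by push_cast; ring) (fun n => by push_cast; ring) (fun n => by omega)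
  refine ⟨b.1, b.2.1, ?_⟩
  rw [← b.2.2, Tf, BB, Bt, ← tsum_mul_left]
  exact tsum_congr e

lemma S_split {q : ℝ} (h0 : 0 < q) (h1 : q < 1/8) (b c : ℕ) (hb : 1 ≤ b) (hc : 1 ≤ c) (hbc : b + c = 5) :
    Summable (Lt (fun k => 5*k^2+5*k) (fun k => 5*k+b) q) ∧ Summable (Lt (fun k => 5*k^2+10*k+c) (fun k => 5*k+c) q) ∧
    BB q 10 ((2 * b : ℕ):ℤ) + q ^ b * BB q 15 ((2 * b:ℕ):ℤ) =
      LL (fun k => 5*k^2+5*k) (fun k => 5*k+b) q + LL (fun k => 5*k^2+10*k+c) (fun k => 5*k+c) q := by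
  have hq1 : q < 1 := by linarith
  have s1 := (summable_Bt (z := q ^ (10:ℤ)) (y := q ^ ((2 * b : ℕ):ℤ)) (p0 h0 hq1) (p1 h0 hq1) (by positivity) (by positivity))
  have s2 := (summable_Bt (z := q ^ (15:ℤ)) (y := q ^ ((2 * b : ℕ):ℤ)) (p0 h0 hq1) (p1 h0 hq1) (by positivity) (by positivity)).mul_left (q ^ b)
  have e : ∀ k : ℤ, te (q ^ 10) (q ^ (10:ℤ)) k * (1 - q ^ ((2 * b : ℕ):ℤ) * (q ^ 10) ^ k)⁻¹ + 
      q ^ b * (te (q ^ 10) (q ^ (15:ℤ)) k * (1 - q ^ ((2 * b : ℕ):ℤ) * (q ^ 10) ^ k)⁻¹) =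
      (-1:ℝ) ^ k * (q ^ (5 * k * k + 5 * k) * (1 - q ^ (5 * k + b))⁻¹) := by
    intro k
    have hp := zpow_pos h0 (5 * k + b)
    rw [BB_term h0, BB_term h0, inv_sq h0 hp, ← zpow_add₀ h0.ne', 
      show 5 * k * k - 5 * k + 15 * k = (5 * k * k + 5 * k) + 5 * k by ring, show 5 * k * k - 5 * k + 10 * k = 5 * k * k + 5 * k by ring,
      show ((2 * b : ℕ):ℤ) + 10 * k = 5 * k + b + (5 * k + b) by push_cast; ring, zpow_add₀ h0.ne' (5 * k * k + 5 * k),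
      zpow_add₀ h0.ne' (5 * k) b, zpow_natCast]
    ring
  have b' := bil h0 h1 (E := fun k => 5 * k * k + 5 * k) (D := fun k => 5 * k + b) ((s1.add s2).congr (fun k => e k)) (e1 := fun k => 5*k^2+5*k) (d1 := fun k => 5*k+b)
    (e2 := fun k => 5*k^2+10*k+c) (d2 := fun k => 5*k+c) (fun n => by push_cast; ring) (fun n => by push_cast; ring)
    (fun n => by have : (b:ℤ) = 5 - c := by omega
                 rw [this]; push_cast; ring) (fun n => by push_cast; ring) (fun n => by omega)
  refine ⟨b'.1, b'.2.1, ?_⟩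
  rw [← b'.2.2, BB, Bt, BB, Bt, ← tsum_mul_left, ← s1.tsum_add s2]
  exact tsum_congr e

noncomputable def LP (e d : ℕ → ℕ) (i : ℕ) (q : ℝ) : ℝ := q ^ e (2*i) * (1 - q ^ d (2*i))⁻¹ - q ^ e (2*i+1) * (1 - q ^ d (2*i+1))⁻¹

lemma LP_sum {e d : ℕ → ℕ} {q : ℝ} (hs : Summable (Lt e d q)) : HasSum (fun i => LP e d i q) (LL e d q) := by
  have s1 := hs.comp_injective (i := fun n : ℕ => 2 * n) (fun a b h => by simpa using h)
  have s2 := hs.comp_injective (i := fun n : ℕ => 2 * n + 1) (fun a b h => by simpa using h)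
  refine HS (s1.hasSum.add s2.hasSum) (fun i => ?_) (tsum_even_add_odd s1 s2).symm
  simp only [Function.comp, Lt, LP, pow_succ, pow_mul]
  norm_num
  ring

lemma LP_geo {e d : ℕ → ℕ} (hd : ∀ k, 1 ≤ d k) {δ : ℕ → ℕ} {i : ℕ} 
    (hδ : ∀ j, e (2*i+1) + j * d (2*i+1) = e (2*i) + j * d (2*i) + δ j) {q : ℝ} (h0 : 0 < q) (h1 : q < 1/8) :
    HasSum (fun j => q ^ (e (2*i) + j * d (2*i)) * (1 - q ^ δ j)) (LP e d i q) := by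
  have g : ∀ k, HasSum (fun j => q ^ (e k + j * d k)) (q ^ e k * (1 - q ^ d k)⁻¹) := by
    intro k
    have := pl h0 h1 (hd k)
    refine HS ((hasSum_geometric_of_lt_one (r := q ^ d k) (by positivity) (by linarith)).mul_left (q ^ e k)) (fun j => ?_) rfl
    rw [pow_add, mul_comm j, pow_mul]
  refine HS ((g (2*i)).sub (g (2*i+1))) (fun j => ?_) rfl
  rw [hδ, pow_add q _ (δ j)]; ring

lemma LP_NN {e d : ℕ → ℕ} (hd : ∀ k, 1 ≤ d k) {δ : ℕ → ℕ} {i : ℕ} {M : ℝ → ℝ}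
    (hδ : ∀ j, e (2*i+1) + j * d (2*i+1) = e (2*i) + j * d (2*i) + δ j) (hM : ∀ j, NN (fun q => M q * (1 - q ^ δ j))) :
    NN (fun q => M q * LP e d i q) :=
  NN_sum (f := fun j q => q ^ (e (2*i) + j * d (2*i)) * (M q * (1 - q ^ δ j))) (fun j => (NN_pow _).mul (hM j))
    (fun _ h0 h1 => HS ((LP_geo hd hδ h0 h1).mul_left _) (fun j => by ring) rfl)

lemma LL_NN {e d : ℕ → ℕ} (hd : ∀ k, 1 ≤ d k) {δ : ℕ → ℕ → ℕ} {M : ℝ → ℝ} (hs : ∀ q, 0 < q → q < 1/8 → Summable (Lt e d q))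
    (hδ : ∀ i j, e (2*i+1) + j * d (2*i+1) = e (2*i) + j * d (2*i) + δ i j) (hM : ∀ i j, NN (fun q => M q * (1 - q ^ δ i j))) :
    NN (fun q => M q * LL e d q) :=
  NN_sum (f := fun i q => M q * LP e d i q) (fun i => LP_NN hd (hδ i) (hM i))
    (fun q h0 h1 => HS ((LP_sum (hs q h0 h1)).mul_left _) (fun j => rfl) rfl)

lemma LL_SR {e d : ℕ → ℕ} (hd : ∀ k, 1 ≤ d k) (hs : ∀ q, 0 < q → q < 1/8 → Summable (Lt e d q)) : SR (LL e d) := by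
  refine SR_alt (f := fun k q => q ^ e k * (1 - q ^ d k)⁻¹) (fun i => (NN_pow _).mul (NN_geo (hd i))) (fun q h0 h1 => ?_)
  refine (hs q h0 h1).norm.congr (fun k => ?_)
  have := pl h0 h1 (hd k)
  rw [Lt, norm_mul, norm_pow, norm_neg, norm_one, one_pow, one_mul, Real.norm_of_nonneg (by positivity)]

lemma M3_NN (m : ℕ) (r s : ℕ) (hr : 1 ≤ r) (hs : 1 ≤ s) : 
    NN (fun q => ((1 - q ^ 10)⁻¹ * (1 - q ^ r)⁻¹ * (1 - q ^ s)⁻¹) * (1 - q ^ (10 * m + r))) := by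
  refine (((NN_fin (a := 10) (by norm_num) m).mul ((NN_geo hr).mul (NN_geo hs))).add
    ((NN_pow (10 * m)).mul ((NN_geo (a := 10) (by norm_num)).mul (NN_geo hs)))).congr (fun q h0 h1 => ?_)
  have := pl h0 h1 hr
  have := pl h0 h1 hs
  have := pl h0 h1 (a := 10) (by norm_num)
  field_simp
  ring

/-- contribution of T -/
lemma NN_T : NN (fun q => ((1 - q ^ 10)⁻¹ * (1 - q ^ 3)⁻¹ * (1 - q ^ 7)⁻¹) * (Tf q * q⁻¹)) := by
  have k1 : NN (fun q => ((1 - q ^ 10)⁻¹ * (1 - q ^ 3)⁻¹ * (1 - q ^ 7)⁻¹) * LL (fun k => 5*k^2+12*k+3) (fun k => 10*k+4) q) := by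
    refine LL_NN (δ := fun i j => 10 * (2 * i + 1 + j) + 7) (fun k => by omega) (fun q h0 h1 => ?_) (fun i j => by ring) (fun i j => ?_)
    · refine ((T_split h0 h1).1.mul_left q⁻¹).congr (fun k => ?_)
      simp only [Lt, pow_succ q (5*k^2+12*k+3)]
      field_simp
    · exact (M3_NN (2 * i + 1 + j) 7 3 (by norm_num) (by norm_num)).congr (fun q _ _ => by ring)
  have k2 : NN (fun q => ((1 - q ^ 10)⁻¹ * (1 - q ^ 3)⁻¹ * (1 - q ^ 7)⁻¹) * LL (fun k => 5*k^2+8*k+2) (fun k => 10*k+6) q) := by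
    refine LL_NN (δ := fun i j => 10 * (2 * i + 1 + j) + 3) (fun k => by omega) (fun q h0 h1 => ?_) (fun i j => by ring) (fun i j => ?_)
    · refine ((T_split h0 h1).2.1.mul_left q⁻¹).congr (fun k => ?_)
      simp only [Lt, pow_succ q (5*k^2+8*k+2)]
      field_simp
    · exact (M3_NN (2 * i + 1 + j) 3 7 (by norm_num) (by norm_num)).congr (fun q _ _ => by ring)
  refine (k1.add k2).congr (fun q h0 h1 => ?_)
  rw [(T_split h0 h1).2.2, ← mul_add]
  congr 1
  rw [LL, LL, LL, LL, add_mul, ← tsum_mul_right, ← tsum_mul_right]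
  congr 1
  · refine tsum_congr (fun k => ?_)
    simp only [Lt, pow_succ q (5*k^2+12*k+3)]
    field_simp
  · refine tsum_congr (fun k => ?_)
    simp only [Lt, pow_succ q (5*k^2+8*k+2)]
    field_simp

lemma NN_S : NN (fun q => (1 - q ^ 5)⁻¹ * Sf q - (1 - q ^ 1)⁻¹) := by
  have k2 : NN (fun q => (1 - q ^ 5)⁻¹ * LL (fun k => 5*k^2+10*k+4) (fun k => 5*k+4) q) := by
    refine LL_NN (δ := fun i j => 5 * (4 * i + 3 + j)) (fun k => by omega) 
      (fun q h0 h1 => (S_split h0 h1 1 4 (by norm_num) (by norm_num) (by norm_num)).2.1) (fun i j => by ring) 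
      (fun i j => NN_fin (by norm_num) _)
  have k1 : NN (fun q => (1 - q ^ 5)⁻¹ * LL (fun k => 5*k^2+5*k) (fun k => 5*k+1) q - (1 - q ^ 1)⁻¹) := by
    refine NN_sum (f := fun i q => (1 - q ^ 5)⁻¹ * LP (fun k => 5*k^2+5*k) (fun k => 5*k+1) i q - if i = 0 then (1 - q ^ 1)⁻¹ else 0)
      (fun i => ?_) (fun q h0 h1 => ?_)
    · rcases Nat.eq_zero_or_pos i with rfl | hi
      · refine NN_sum (f := fun j q => q ^ j * ((1 - q ^ 5)⁻¹ * (1 - q ^ (5 * (j + 1 + 1))) - 1))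
          (fun j => (NN_pow _).mul (NN_fin1 (by norm_num) _)) (fun q h0 h1 => ?_)
        have a1 := (LP_geo (e := fun k => 5*k^2+5*k) (d := fun k => 5*k+1) (i := 0) (δ := fun j => 5 * (j + 1 + 1))
          (fun k => by omega) (fun j => by ring) h0 h1).mul_left (1 - q ^ 5)⁻¹
        have a2 := hasSum_geometric_of_lt_one h0.le (by linarith : q < 1)
        refine HS (a1.sub a2) (fun j => ?_) (by simp)
        simp
        ring
      · refine (LP_NN (M := fun q => (1 - q ^ 5)⁻¹) (e := fun k => 5*k^2+5*k) (d := fun k => 5*k+1) (i := i) (δ := fun j => 5 * (4 * i + 2 + j))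
          (fun k => by omega) (fun j => by ring) (fun j => NN_fin (by norm_num) _)).congr (fun q _ _ => ?_)
        rw [if_neg hi.ne', sub_zero]
    · exact ((LP_sum (S_split h0 h1 1 4 (by norm_num) (by norm_num) (by norm_num)).1).mul_left _).sub (hasSum_ite_eq 0 _)
  refine (k1.add k2).congr (fun q h0 h1 => ?_)
  have := (S_split h0 h1 1 4 (by norm_num) (by norm_num) (by norm_num)).2.2
  rw [Sf]
  rw [pow_one] at this
  push_cast at this
  rw [this]; ring

lemma NN_D4 : NN (fun q => D4f q - 2 * (1 - q ^ 1)⁻¹) := by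
  have K5 := NN_K (a := 10) (b := 5) (c := 15) (by norm_num) (by norm_num) (by norm_num)
  have K3 := (NN_K (a := 20) (b := 13) (c := 17) (by norm_num) (by norm_num) (by norm_num)).of_sub NN_one
  refine (((NN_S.mul_sub K5 (NN_geo (by norm_num)) NN_one).smul (c := 2) (by norm_num)).add
    ((NN_T.mul K3).smul (c := 4) (by norm_num))).congr (fun q h0 h1 => ?_)
  rw [D4f, j5_inv h0 h1, j3_inv h0 h1]; ring

lemma SR_D1 : SR D1f := by
  have K5 := (NN_K (a := 10) (b := 5) (c := 15) (by norm_num) (by norm_num) (by norm_num)).of_sub NN_one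
  have s1 : SR (LL (fun k => 5*k^2+5*k) (fun k => 5*k+2)) := LL_SR (fun k => by omega)
    (fun q h0 h1 => (S_split h0 h1 2 3 (by norm_num) (by norm_num) (by norm_num)).1)
  have s2 : SR (LL (fun k => 5*k^2+10*k+3) (fun k => 5*k+3)) := LL_SR (fun k => by omega)
    (fun q h0 h1 => (S_split h0 h1 2 3 (by norm_num) (by norm_num) (by norm_num)).2.1)
  refine ((((s1.add s2).mul (NN_pow 1).sr).mul ((NN_geo (a := 5) (by norm_num)).mul K5).sr).smul (-2)).congr (fun q h0 h1 => ?_)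
  have := (S_split h0 h1 2 3 (by norm_num) (by norm_num) (by norm_num)).2.2
  rw [← this, D1f, j5_inv h0 h1, A1f]
  push_cast
  norm_num
  ring
end PartN2b

section PartN3
open Filter Topology

lemma PRep_zero {c : ℕ → ℝ} (h : PRep (fun _ => 0) c) : ∀ n, c n = 0 := by
  intro n
  induction n using Nat.strong_induction_on with
  | _ n ih =>
  have key : ∀ q : ℝ, 0 < q → q < 1/8 → HasSum (fun k => c (k + (n+1)) * q ^ (k + (n+1))) (-(c n * q ^ n)) := by
    intro q h0 h1
    have := (hasSum_nat_add_iff' (n+1)).2 (h q h0 h1)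
    refine HS this (fun k => rfl) ?_
    rw [Finset.sum_range_succ, Finset.sum_eq_zero (fun i hi => by rw [ih i (Finset.mem_range.1 hi), zero_mul])]; ring
  have s := (key (1/16) (by norm_num) (by norm_num)).summable.norm
  set C := ∑' k, ‖c (k + (n+1)) * (1/16) ^ (k + (n+1))‖ * 16 ^ (n+1) with hC
  have hb : ∀ q : ℝ, 0 < q → q < 1/16 → |c n| ≤ q * C := by
    intro q h0 h1
    have hk := key q h0 (by linarith)
    have hb2 := hk.norm_le_of_bounded ((s.mul_right (16 ^ (n+1))).hasSum.mul_left (q ^ (n+1))) (fun k => by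
      rw [norm_mul, norm_mul]
      simp only [norm_pow, Real.norm_of_nonneg h0.le, Real.norm_of_nonneg (by norm_num : (0:ℝ) ≤ 1/16)]
      have e : (1/16:ℝ) ^ (n+1) * 16 ^ (n+1) = 1 := by rw [← mul_pow]; norm_num
      have : q ^ k ≤ (1/16) ^ k := pow_le_pow_left₀ h0.le h1.le k
      calc ‖c (k + (n+1))‖ * q ^ (k + (n+1)) = ‖c (k + (n+1))‖ * (q ^ k * q ^ (n+1)) := by rw [pow_add]
        _ ≤ ‖c (k + (n+1))‖ * ((1/16) ^ k * q ^ (n+1)) := by gcongr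
        _ = q ^ (n+1) * (‖c (k + (n+1))‖ * ((1/16) ^ k * ((1/16:ℝ) ^ (n+1) * 16 ^ (n+1)))) := by rw [e]; ring
        _ = _ := by rw [pow_add (1/16:ℝ) k (n+1)]; ring)
    rw [← hC, norm_neg, norm_mul, norm_pow, Real.norm_of_nonneg h0.le, pow_succ] at hb2
    have hp : 0 < q ^ n := by positivity
    have : |c n| * q ^ n ≤ (q * C) * q ^ n := by
      calc _ = ‖c n‖ * q ^ n := rfl
        _ ≤ _ := hb2
        _ = _ := by ring
    exact le_of_mul_le_mul_right this hp
  have hlim : Tendsto (fun q : ℝ => q * C) (𝓝[>] 0) (𝓝 (0 * C)) :=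
    ((continuous_id.mul continuous_const).tendsto 0).mono_left nhdsWithin_le_nhds
  have : |c n| ≤ 0 * C := by
    refine ge_of_tendsto hlim ?_
    filter_upwards [Ioo_mem_nhdsGT (by norm_num : (0:ℝ) < 1/16)] with q hq
    exact hb q hq.1 hq.2
  rw [zero_mul] at this
  exact abs_nonpos_iff.1 this

lemma PRep_unique {f : ℝ → ℝ} {a b : ℕ → ℝ} (ha : PRep f a) (hb : PRep f b) (n : ℕ) : a n = b n := by
  have := PRep_zero ((ha.add (hb.smul (-1))).congr (fun q _ _ => by ring)) n
  linarith

lemma pos_of {f : ℝ → ℝ} {b : ℕ → ℝ} (hb : PRep f b) {n : ℕ} (h : NN (fun q => f q - 2 * q ^ n)) : 0 < b n := by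
  obtain ⟨a, ha, hr⟩ := h
  have := PRep_unique hb ((hr.add ((rep_pow n).smul 2)).congr (fun q _ _ => by ring)) n
  rw [this, if_pos rfl]
  linarith [ha n]

lemma geo_sub {a : ℕ} (ha : 1 ≤ a) (i : ℕ) : NN (fun q => (1 - q ^ a)⁻¹ - q ^ (a * i)) :=
  ((NN_fin ha i).add ((NN_pow (a * i)).mul (NN_geo1 ha))).congr (fun q _ _ => by ring)

lemma geo2_sub {a b : ℕ} (ha : 1 ≤ a) (hb : 1 ≤ b) (i j : ℕ) :
    NN (fun q => (1 - q ^ a)⁻¹ * (1 - q ^ b)⁻¹ - q ^ (a * i) * q ^ (b * j)) :=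
  (geo_sub ha i).mul_sub (geo_sub hb j) (NN_pow _) (NN_pow _)

lemma class_rep {f : ℝ → ℝ} {b : ℕ → ℝ} (hb : PRep f b) {d : ℕ} (hd : d < 5) :
    PRep (fun q => q ^ d * f (q ^ 5)) (fun n => if n % 5 = d then b (n / 5) else 0) := by
  intro q h0 h1
  have h5 : q ^ 5 < 1/8 := (pow_le_of_le_one h0.le (by linarith) (by norm_num)).trans_lt h1
  have := (hb (q ^ 5) (by positivity) h5).mul_left (q ^ d)
  have inj : Function.Injective (fun m : ℕ => 5 * m + d) := fun a b h => by simpa using h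
  rw [← inj.hasSum_iff]
  · refine HS this (fun m => ?_) rfl
    simp only [Function.comp]
    rw [if_pos (by omega), show (5 * m + d) / 5 = m by omega, pow_add, pow_mul]; ring
  · intro n hn
    beta_reduce
    rw [if_neg, zero_mul]
    intro h
    exact hn ⟨n / 5, by simp only; omega⟩

theorem dc_pos (n : ℕ) (hn : 0 < n) (h5 : n % 5 = 0 ∨ n % 5 = 2 ∨ n % 5 = 4) (hex : n ∉ ({10, 15, 30} : Set ℕ)) :
    0 < OP.dc n := by
  obtain ⟨b0, r0⟩ := (NN_D0.of_sub (((NN_pow 1).mul ((NN_geo (by norm_num)).mul (NN_geo (by norm_num)))).smul (by norm_num))).sr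
  obtain ⟨b1, r1⟩ := SR_D1
  obtain ⟨b2, r2⟩ := (NN_D2.of_sub (((NN_geo (by norm_num)).mul (NN_geo (by norm_num))).smul (by norm_num))).sr
  obtain ⟨b3, r3⟩ := SR_D3
  obtain ⟨b4, r4⟩ := (NN_D4.of_sub ((NN_geo (by norm_num)).smul (by norm_num))).sr
  have R := ((((class_rep r0 (d := 0) (by norm_num)).add (class_rep r1 (d := 1) (by norm_num))).add (class_rep r2 (d := 2) (by norm_num))).add
    (class_rep r3 (d := 3) (by norm_num))).add (class_rep r4 (d := 4) (by norm_num))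
  have R' : PRep Df (fun n => (OP.dc n : ℝ)) := fun q h0 h1 => OP.genD h0 h1
  have U := PRep_unique R' (R.congr (fun q _ _ => by rw [Df]; ring)) n
  have goal : (0:ℝ) < (OP.dc n : ℝ) := by
    beta_reduce at U
    rw [U]
    rcases h5 with h | h | h
    · rw [h]
      norm_num
      obtain ⟨i, j, hij⟩ : ∃ i j, n / 5 = 1 + 3 * i + 4 * j := by
        simp only [Set.mem_insert_iff, Set.mem_singleton_iff, not_or] at hex
        obtain ⟨m, rfl⟩ : ∃ m, n = 5 * m := ⟨n / 5, by omega⟩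
        rw [show 5 * m / 5 = m by omega]
        have : m % 3 = 1 ∨ m % 3 = 2 ∨ m % 3 = 0 := by omega
        rcases this with h | h | h
        · exact ⟨(m - 1) / 3, 0, by omega⟩
        · exact ⟨(m - 5) / 3, 1, by omega⟩
        · exact ⟨(m - 9) / 3, 2, by omega⟩
      refine pos_of r0 ((NN_D0.add (((NN_pow 1).mul (geo2_sub (a := 3) (b := 4) (by norm_num) (by norm_num) i j)).smul (c := 2) (by norm_num))).congr
        (fun q _ _ => ?_))
      rw [hij, pow_add, pow_add]; ring
    · rw [h]
      norm_num
      refine pos_of r2 ((NN_D2.add ((geo2_sub (a := 1) (b := 4) (by norm_num) (by norm_num) (n / 5) 0).smul (c := 2) (by norm_num))).congr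
        (fun q _ _ => ?_))
      rw [mul_zero, pow_zero, one_mul (n / 5)]; ring
    · rw [h]
      norm_num
      refine pos_of r4 ((NN_D4.add ((geo_sub (a := 1) (by norm_num) (n / 5)).smul (c := 2) (by norm_num))).congr
        (fun q _ _ => ?_))
      rw [one_mul (n / 5)]; ring
  exact_mod_cast goal
end PartN3

theorem stmt3 (n : ℕ) (hn : 0 < n) (h5 : n % 5 = 0 ∨ n % 5 = 2 ∨ n % 5 = 4)
    (hex : n ∉ ({10, 15, 30} : Set ℕ)) :
    nbar 2 5 n < nbar 1 5 n := by
  have h1 := dc_pos n hn h5 hex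
  have h2 := OP.dc_nbar n
  omega
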